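/- Let n ≥ 2 and k ≥ 1. Every element x of the singular homology group H_k(C_n(ℂ)/(ℂ⋊ℂ*); ℤ) satisfies n! · x = 0; equivalently, the order of every homology class of M_{0,n+1}/Σ_n in positive degree divides n!. -/

import Mathlib

open Complex Topology CategoryTheory

/-- Ordered configuration space of `n` points in the subset `X ⊆ ℂ`. -/
abbrev OrdConfig (n : ℕ) (X : Set ℂ) : Type :=
  {f : Fin n → ℂ // Function.Injective f ∧ ∀ i, f i ∈ X}

/-- Two ordered configurations are related if they differ by a permutation of labels. -/
def permRel (n : ℕ) (X : Set ℂ) (f g : OrdConfig n X) : Prop :=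
  ∃ σ : Equiv.Perm (Fin n), g.1 = f.1 ∘ σ

/-- The unordered configuration space `C_n(X)` with the quotient topology. -/
abbrev UConfig (n : ℕ) (X : Set ℂ) : Type := Quot (permRel n X)

/-- The affine group relation on unordered configurations: `d` is obtained from `c` by
applying `z ↦ b z + a` with `b ≠ 0` to every point. -/
def affRel (n : ℕ) (c d : UConfig n Set.univ) : Prop :=
  ∃ a b : ℂ, b ≠ 0 ∧ ∃ f g : OrdConfig n Set.univ,
    Quot.mk _ f = c ∧ Quot.mk _ g = d ∧ ∀ i, g.1 i = b * f.1 i + a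

/-- `C_n(ℂ)/(ℂ⋊ℂ*)`, the orbit space with the quotient topology. -/
abbrev ConfigModAff (n : ℕ) : Type := Quot (affRel n)

/-- Singular homology of a topological space `Y` with coefficients in the ring `R`:
the `k`-th homology of the alternating face map complex of the free simplicial `R`-module
on the singular simplicial set of `Y`. -/
noncomputable def SingularHomology (R : Type) [CommRing R] (k : ℕ)
    (Y : Type) [TopologicalSpace Y] : ModuleCat R :=
  (((AlgebraicTopology.alternatingFaceMapComplex (ModuleCat R)).obj
      (((CategoryTheory.SimplicialObject.whiskering _ _).obj (ModuleCat.free R)).obj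
        (TopCat.toSSet.obj (TopCat.of Y)))).homology k)

/-!
Normalizing a configuration to start with `0, 1` exhibits the quotient as the orbit space of the
symmetric group acting on ordered normalized configurations. The action is not free, but every
orbit has arbitrarily small invariant neighbourhoods contracting equivariantly to it, and this is
enough to construct a transfer, degree by degree and on small chains only. Thus `n! • z` is, up to
a boundary, the image of an invariant cycle, and it suffices to bound invariant cycles of positive
degree upstairs.

Forgetting the last point is a bundle of punctured planes, whose Wang sequences show that a cycle of
degree `k` bounds as soon as it pairs to zero with the products of `k` classes
`dlog ((z_b - z_a) / (z_d - z_c))`. Such products are combinations of products of `k + 1` classes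
`dlog (z_b - z_a)`, made meaningful by taking ratios, and Arnold's relation reduces these to the
products over the edges of a disjoint union of paths. On an invariant cycle those vanish: if all
paths have at most one edge, interchanging two edges changes the sign but preserves the value; on a
path with at least two edges the value does not depend on the order of the vertices, and Arnold's
relation turns moving an end vertex along the path into a multiple of that value equal to zero.
-/

open scoped Filter

namespace ConfigurationHomology

noncomputable section

section FreeModule

variable {A B A' B' : Type*} {M : Type*} [AddCommGroup M]

theorem apply_eq_of_single_eq {f g : (A →₀ ℤ) →ₗ[ℤ] M}
    (h : ∀ a, f (Finsupp.single a 1) = g (Finsupp.single a 1)) (x : A →₀ ℤ) : f x = g x :=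
  DFunLike.congr_fun (Finsupp.lhom_ext' fun a ↦ LinearMap.ext_ring (h a)) x

/-- The alternating sum of a finite family of face maps, extended linearly to the free abelian
groups; it is the boundary operator both of formal tuples and of singular simplices. -/
def alternatingFaceSum {k : ℕ} (face : Fin (k + 1) → A → B) : (A →₀ ℤ) →ₗ[ℤ] (B →₀ ℤ) :=
  Finsupp.linearCombination ℤ fun a ↦
    ∑ i : Fin (k + 1), (-1 : ℤ) ^ (i : ℕ) • Finsupp.single (face i a) 1

theorem alternatingFaceSum_single {k : ℕ} (face : Fin (k + 1) → A → B) (a : A) :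
    alternatingFaceSum face (Finsupp.single a 1) =
      ∑ i : Fin (k + 1), (-1 : ℤ) ^ (i : ℕ) • Finsupp.single (face i a) 1 := by
  simp [alternatingFaceSum]

theorem lmapDomain_alternatingFaceSum {k : ℕ} {face : Fin (k + 1) → A → B}
    {face' : Fin (k + 1) → A' → B'} {f : A → A'} {g : B → B'}
    (h : ∀ i a, g (face i a) = face' i (f a)) (x : A →₀ ℤ) :
    Finsupp.lmapDomain ℤ ℤ g (alternatingFaceSum face x) =
      alternatingFaceSum face' (Finsupp.lmapDomain ℤ ℤ f x) :=
  apply_eq_of_single_eq (f := Finsupp.lmapDomain ℤ ℤ g ∘ₗ alternatingFaceSum face)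
    (g := alternatingFaceSum face' ∘ₗ Finsupp.lmapDomain ℤ ℤ f)
    (fun a ↦ by simp [alternatingFaceSum_single, h]) x

end FreeModule

/-! ### Formal tuples -/

section Tuple

variable {s s' s'' t t' : Type*} {k : ℕ}

/-- Formal integral combinations of `k`-tuples of points: the augmented complex of the full simplex
on the vertex set `s`, indexed by the number of vertices. -/
abbrev TupleChain (k : ℕ) (s : Type*) : Type _ := (Fin k → s) →₀ ℤ

/-- The simplicial boundary operator on formal tuples. -/
def tupleBoundary : TupleChain (k + 1) s →ₗ[ℤ] TupleChain k s :=
  alternatingFaceSum fun i v ↦ v ∘ i.succAbove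

/-- The cone operator with apex `b`, which prepends `b` to every tuple. -/
def cone (b : s) : TupleChain k s →ₗ[ℤ] TupleChain (k + 1) s :=
  Finsupp.lmapDomain ℤ ℤ fun v ↦ (Fin.cons b v : Fin (k + 1) → s)

/-- The map induced on formal tuples by a map of vertices. -/
def tupleMap (f : s → s') : TupleChain k s →ₗ[ℤ] TupleChain k s' :=
  Finsupp.lmapDomain ℤ ℤ (f ∘ ·)

@[simp] theorem cone_single (b : s) (v : Fin k → s) (c : ℤ) :
    cone b (Finsupp.single v c) = Finsupp.single (Fin.cons b v : Fin (k + 1) → s) c := by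
  simp [cone]

@[simp] theorem tupleMap_single (f : s → s') (v : Fin k → s) (c : ℤ) :
    tupleMap f (Finsupp.single v c) = Finsupp.single (f ∘ v) c := by
  simp [tupleMap]

theorem tupleMap_tupleMap (f : s → s') (g : s' → s'') (x : TupleChain k s) :
    tupleMap g (tupleMap f x) = tupleMap (g ∘ f) x :=
  apply_eq_of_single_eq (f := tupleMap g ∘ₗ tupleMap f) (g := tupleMap (g ∘ f))
    (fun v ↦ by simp [Function.comp_assoc]) x

theorem tupleMap_tupleBoundary (f : s → s') (x : TupleChain (k + 1) s) :
    tupleMap f (tupleBoundary x) = tupleBoundary (tupleMap f x) :=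
  lmapDomain_alternatingFaceSum (face := fun i v ↦ v ∘ i.succAbove)
    (face' := fun i v ↦ v ∘ i.succAbove) (f := (f ∘ ·)) (g := (f ∘ ·)) (fun _ _ ↦ rfl) x

theorem tupleMap_cone (f : s → s') (b : s) (x : TupleChain k s) :
    tupleMap f (cone b x) = cone (f b) (tupleMap f x) :=
  apply_eq_of_single_eq (f := tupleMap f ∘ₗ cone b) (g := cone (f b) ∘ₗ tupleMap f)
    (fun v ↦ by simp [Fin.comp_cons]) x

theorem tupleBoundary_cone (b : s) (x : TupleChain (k + 1) s) :
    tupleBoundary (cone b x) = x - cone b (tupleBoundary x) := by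
  refine apply_eq_of_single_eq (f := tupleBoundary ∘ₗ cone b)
    (g := LinearMap.id - cone b ∘ₗ tupleBoundary) (fun v ↦ ?_) x
  have succ_face (i : Fin (k + 1)) : (Fin.cons b v : Fin (k + 2) → s) ∘ i.succ.succAbove =
      Fin.cons b (v ∘ i.succAbove) := by
    funext j
    refine Fin.cases ?_ (fun j ↦ ?_) j <;> simp
  simp only [LinearMap.comp_apply, LinearMap.sub_apply, LinearMap.id_apply, cone_single,
    tupleBoundary, alternatingFaceSum_single]
  rw [Fin.sum_univ_succ, map_sum, sub_eq_add_neg, ← Finset.sum_neg_distrib]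
  congr 1
  · simp [Function.comp_def]
  · simp [succ_face, pow_succ]

theorem tupleBoundary_cone_zero (b : s) (x : TupleChain 0 s) : tupleBoundary (cone b x) = x := by
  refine apply_eq_of_single_eq (f := tupleBoundary ∘ₗ cone b) (g := LinearMap.id) (fun v ↦ ?_) x
  simp [tupleBoundary, alternatingFaceSum_single, Subsingleton.elim _ v]

theorem tupleBoundary_tupleBoundary (x : TupleChain (k + 2) s) :
    tupleBoundary (tupleBoundary x) = 0 := by
  have single_eq_cone {k : ℕ} (v : Fin (k + 1) → s) :
      Finsupp.single v 1 = cone (v 0) (Finsupp.single (Fin.tail v) (1 : ℤ)) := by simp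
  induction k with
  | zero =>
    refine apply_eq_of_single_eq (f := tupleBoundary ∘ₗ tupleBoundary) (g := 0) (fun v ↦ ?_) x
    rw [LinearMap.comp_apply, single_eq_cone, tupleBoundary_cone, map_sub, tupleBoundary_cone_zero,
      sub_self, LinearMap.zero_apply]
  | succ k ih =>
    refine apply_eq_of_single_eq (f := tupleBoundary ∘ₗ tupleBoundary) (g := 0) (fun v ↦ ?_) x
    rw [LinearMap.comp_apply, single_eq_cone, tupleBoundary_cone, map_sub, tupleBoundary_cone, ih,
      map_zero, sub_zero, sub_self, LinearMap.zero_apply]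

/-- The chain homotopy between two augmented chain maps `F` and `G` of formal tuples which is
built by coning off recursively with apex `b v`. Both the prism operator and the homotopy from
barycentric subdivision to the identity are of this form. -/
def coneHomotopy (F G : ∀ k, TupleChain k s →ₗ[ℤ] TupleChain k t)
    (b : ∀ k, (Fin (k + 1) → s) → t) : ∀ k, TupleChain k s →ₗ[ℤ] TupleChain (k + 1) t
  | 0 => 0
  | k + 1 => Finsupp.linearCombination ℤ fun v ↦ cone (b k v)
      (F (k + 1) (Finsupp.single v 1) - G (k + 1) (Finsupp.single v 1) -
        coneHomotopy F G b k (tupleBoundary (Finsupp.single v 1)))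

section ConeHomotopy

variable {F G : ∀ k, TupleChain k s →ₗ[ℤ] TupleChain k t} {b : ∀ k, (Fin (k + 1) → s) → t}

theorem coneHomotopy_single (v : Fin (k + 1) → s) :
    coneHomotopy F G b (k + 1) (Finsupp.single v 1) = cone (b k v)
      (F (k + 1) (Finsupp.single v 1) - G (k + 1) (Finsupp.single v 1) -
        coneHomotopy F G b k (tupleBoundary (Finsupp.single v 1))) := by
  rw [coneHomotopy, Finsupp.linearCombination_single, one_smul]

theorem tupleBoundary_coneHomotopy
    (hF : ∀ k x, tupleBoundary (F (k + 1) x) = F k (tupleBoundary x))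
    (hG : ∀ k x, tupleBoundary (G (k + 1) x) = G k (tupleBoundary x)) (h0 : F 0 = G 0)
    (x : TupleChain (k + 1) s) :
    tupleBoundary (coneHomotopy F G b (k + 1) x) =
      F (k + 1) x - G (k + 1) x - coneHomotopy F G b k (tupleBoundary x) := by
  induction k with
  | zero =>
    refine apply_eq_of_single_eq (f := tupleBoundary ∘ₗ coneHomotopy F G b (0 + 1))
      (g := F (0 + 1) - G (0 + 1) - coneHomotopy F G b 0 ∘ₗ tupleBoundary) (fun v ↦ ?_) x
    simp only [LinearMap.comp_apply, LinearMap.sub_apply]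
    rw [coneHomotopy_single, tupleBoundary_cone, map_sub tupleBoundary,
      map_sub tupleBoundary, hF 0, hG 0, h0]
    simp [coneHomotopy]
  | succ k ih =>
    refine apply_eq_of_single_eq (f := tupleBoundary ∘ₗ coneHomotopy F G b (k + 1 + 1))
      (g := F (k + 1 + 1) - G (k + 1 + 1) - coneHomotopy F G b (k + 1) ∘ₗ tupleBoundary)
      (fun v ↦ ?_) x
    simp only [LinearMap.comp_apply, LinearMap.sub_apply]
    rw [coneHomotopy_single, tupleBoundary_cone, map_sub tupleBoundary,
      map_sub tupleBoundary, hF (k + 1), hG (k + 1), ih,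
      tupleBoundary_tupleBoundary, map_zero, sub_zero, sub_self, map_zero, sub_zero]

theorem tupleMap_coneHomotopy {F' G' : ∀ k, TupleChain k s' →ₗ[ℤ] TupleChain k t'}
    {b' : ∀ k, (Fin (k + 1) → s') → t'} {f : s → s'} {g : t → t'}
    (hF : ∀ k x, tupleMap g (F k x) = F' k (tupleMap f x))
    (hG : ∀ k x, tupleMap g (G k x) = G' k (tupleMap f x))
    (hb : ∀ k v, g (b k v) = b' k (f ∘ v)) (x : TupleChain k s) :
    tupleMap g (coneHomotopy F G b k x) = coneHomotopy F' G' b' k (tupleMap f x) := by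
  induction k with
  | zero => simp [coneHomotopy]
  | succ k ih =>
    refine apply_eq_of_single_eq (f := tupleMap g ∘ₗ coneHomotopy F G b (k + 1))
      (g := coneHomotopy F' G' b' (k + 1) ∘ₗ tupleMap f) (fun v ↦ ?_) x
    simp only [LinearMap.comp_apply, tupleMap_single, coneHomotopy_single, tupleMap_cone, map_sub,
      hF, hG, hb, ih, tupleMap_tupleBoundary]

end ConeHomotopy

/-- The prism operator on formal tuples, from the bottom to the top of the cylinder. -/
def tuplePrism (k : ℕ) : TupleChain k s →ₗ[ℤ] TupleChain (k + 1) (s × unitInterval) :=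
  coneHomotopy (fun _ ↦ tupleMap fun x ↦ (x, 1)) (fun _ ↦ tupleMap fun x ↦ (x, 0))
    (fun _ v ↦ (v 0, 0)) k

theorem tupleBoundary_tuplePrism (x : TupleChain (k + 1) s) :
    tupleBoundary (tuplePrism (k + 1) x) =
      tupleMap (fun x ↦ (x, 1)) x - tupleMap (fun x ↦ (x, 0)) x - tuplePrism k (tupleBoundary x) :=
  tupleBoundary_coneHomotopy (F := fun _ ↦ tupleMap fun x ↦ (x, 1))
    (G := fun _ ↦ tupleMap fun x ↦ (x, 0)) (fun _ _ ↦ (tupleMap_tupleBoundary _ _).symm)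
    (fun _ _ ↦ (tupleMap_tupleBoundary _ _).symm)
    (LinearMap.ext (apply_eq_of_single_eq fun _ ↦ by
      simp only [tupleMap_single]; congr 1; exact Subsingleton.elim _ _)) x

theorem tupleMap_tuplePrism (f : s → s') (x : TupleChain k s) :
    tupleMap (Prod.map f id) (tuplePrism k x) = tuplePrism k (tupleMap f x) :=
  tupleMap_coneHomotopy (F := fun _ ↦ tupleMap fun x ↦ (x, 1))
    (G := fun _ ↦ tupleMap fun x ↦ (x, 0)) (F' := fun _ ↦ tupleMap fun x ↦ (x, 1))
    (G' := fun _ ↦ tupleMap fun x ↦ (x, 0)) (g := Prod.map f id)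
    (fun _ _ ↦ by simp [tupleMap_tupleMap, Function.comp_def])
    (fun _ _ ↦ by simp [tupleMap_tupleMap, Function.comp_def]) (fun _ _ ↦ rfl) x

end Tuple

/-! ### Convex combinations -/

/-- The standard simplex with `k` vertices, so of dimension `k - 1`. Indexing simplices and chains
by the number of vertices makes the augmentation the boundary operator out of `k = 1`. -/
abbrev Simplex (k : ℕ) : Type := stdSimplex ℝ (Fin k)

/-- The affine map of standard simplices induced by a map of vertices. -/
def simplexMap {i j : ℕ} (f : Fin i → Fin j) : C(Simplex i, Simplex j) :=
  ⟨stdSimplex.map f, stdSimplex.continuous_map f⟩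

theorem simplexMap_comp {i j k : ℕ} (f : Fin i → Fin j) (g : Fin j → Fin k) :
    (simplexMap g).comp (simplexMap f) = simplexMap (g ∘ f) := by
  ext1 x
  exact stdSimplex.map_comp_apply f g x

/-- The vertices of the standard simplex, as a tuple. -/
def vertex {k : ℕ} (i : Fin k) : Simplex k := stdSimplex.vertex i

theorem simplexMap_vertex {i j : ℕ} (f : Fin i → Fin j) (l : Fin i) :
    simplexMap f (vertex l) = vertex (f l) :=
  stdSimplex.map_vertex f l

/-- A space in which finite convex combinations of points are defined, compatibly with
reindexing. -/
class ConvexCombSpace (s : Type*) [TopologicalSpace s] where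
  convexComb : ∀ {j : ℕ}, (Fin j → s) → C(Simplex j, s)
  convexComb_comp_simplexMap : ∀ {i j : ℕ} (f : Fin i → Fin j) (v : Fin j → s),
    (convexComb v).comp (simplexMap f) = convexComb (v ∘ f)

open ConvexCombSpace

theorem sum_stdSimplex_map_smul {E : Type*} [AddCommGroup E] [Module ℝ E] {i j : ℕ}
    (f : Fin i → Fin j) (t : Simplex i) (v : Fin j → E) :
    ∑ l, (stdSimplex.map f t) l • v l = ∑ l, t l • v (f l) := by
  classical
  simp only [stdSimplex.map_coe, FunOnFinite.linearMap_apply_apply, Finset.sum_smul]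
  rw [← Finset.sum_fiberwise Finset.univ f]
  refine Finset.sum_congr rfl fun l _ ↦ Finset.sum_congr rfl fun m hm ↦ ?_
  rw [(Finset.mem_filter.1 hm).2]

/-- Convex subsets of topological vector spaces have convex combinations. -/
@[reducible] def ConvexCombSpace.ofConvex {E : Type*} [AddCommGroup E] [Module ℝ E]
    [TopologicalSpace E] [ContinuousAdd E] [ContinuousSMul ℝ E] {s : Set E} (hs : Convex ℝ s) :
    ConvexCombSpace s where
  convexComb v :=
    { toFun t := ⟨∑ l, t l • (v l : E), hs.sum_mem (fun l _ ↦ t.2.1 l) t.2.2 fun l _ ↦ (v l).2⟩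
      continuous_toFun := .subtype_mk (continuous_finsetSum _ fun l _ ↦
        ((continuous_apply l).comp continuous_subtype_val).smul continuous_const) _ }
  convexComb_comp_simplexMap f v := by
    ext1 t
    exact Subtype.ext (sum_stdSimplex_map_smul f t fun l ↦ (v l : E))

instance (k : ℕ) : ConvexCombSpace (Simplex k) := .ofConvex (convex_stdSimplex ℝ (Fin k))

instance : ConvexCombSpace unitInterval := .ofConvex (convex_Icc 0 1)

instance {s t : Type*} [TopologicalSpace s] [TopologicalSpace t] [ConvexCombSpace s]
    [ConvexCombSpace t] : ConvexCombSpace (s × t) where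
  convexComb v := (convexComb (Prod.fst ∘ v)).prodMk (convexComb (Prod.snd ∘ v))
  convexComb_comp_simplexMap f v := by
    have fst_comp := convexComb_comp_simplexMap f (Prod.fst ∘ v)
    have snd_comp := convexComb_comp_simplexMap f (Prod.snd ∘ v)
    rw [Function.comp_assoc] at fst_comp snd_comp
    rw [← fst_comp, ← snd_comp]
    rfl

theorem convexComb_unitInterval_const {k : ℕ} (e : unitInterval) (t : Simplex k) :
    convexComb (fun _ ↦ e) t = e := by
  refine Subtype.ext ?_
  change ∑ l, t l • (e : ℝ) = e
  rw [← Finset.sum_smul, stdSimplex.sum_eq_one, one_smul]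

theorem convexComb_vertex {k : ℕ} : convexComb (vertex (k := k)) = ContinuousMap.id _ := by
  ext t l
  change (∑ l, t l • (vertex l : Fin k → ℝ)) l = t l
  simp [vertex, Finset.sum_apply, Pi.single_apply]

theorem convexComb_comp_vertex {m k : ℕ} (v : Fin k → Simplex m) : convexComb v ∘ vertex = v := by
  funext i
  refine Subtype.ext ?_
  change ∑ l, (vertex i : Simplex k) l • (v l : Fin m → ℝ) = v i
  simp [vertex, Pi.single_apply]

section PreservesConvexComb

variable {s t : Type*} [TopologicalSpace s] [TopologicalSpace t] [ConvexCombSpace s]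
  [ConvexCombSpace t]

/-- The affine maps between spaces with convex combinations. -/
def PreservesConvexComb (f : C(s, t)) : Prop :=
  ∀ (j : ℕ) (v : Fin j → s), f.comp (convexComb v) = convexComb (f ∘ v)

theorem preservesConvexComb_convexComb {m k : ℕ} (v : Fin k → Simplex m) :
    PreservesConvexComb (convexComb v : C(Simplex k, Simplex m)) := by
  intro j w
  ext t i
  change (∑ l, (∑ a, t a • (w a : Fin k → ℝ)) l • (v l : Fin m → ℝ)) i =
    (∑ a, t a • (∑ l, w a l • (v l : Fin m → ℝ))) i
  simp only [Finset.sum_apply, Finset.sum_mul, Finset.mul_sum, Pi.smul_apply, smul_eq_mul,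
    mul_assoc]
  exact Finset.sum_comm

theorem PreservesConvexComb.prodMap_id {f : C(s, t)} (hf : PreservesConvexComb f) :
    PreservesConvexComb (f.prodMap (ContinuousMap.id unitInterval)) := by
  intro j v
  change (f.comp (convexComb (Prod.fst ∘ v))).prodMk (convexComb (Prod.snd ∘ v)) = _
  rw [hf]
  rfl

end PreservesConvexComb

/-! ### Barycentric subdivision of formal tuples -/

section TupleSubdivision

variable {s t : Type*} [TopologicalSpace s] [TopologicalSpace t] [ConvexCombSpace s]
  [ConvexCombSpace t] {k : ℕ}

/-- The barycenter of a tuple of points. -/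
def tupleBarycenter (v : Fin (k + 1) → s) : s := convexComb v stdSimplex.barycenter

theorem PreservesConvexComb.map_tupleBarycenter {f : C(s, t)} (hf : PreservesConvexComb f)
    (v : Fin (k + 1) → s) : f (tupleBarycenter v) = tupleBarycenter (f ∘ v) :=
  DFunLike.congr_fun (hf _ v) _

/-- Barycentric subdivision of formal tuples: subdivide the boundary and cone off from the
barycenter. -/
def tupleSubdivision : ∀ k : ℕ, TupleChain k s →ₗ[ℤ] TupleChain k s
  | 0 => LinearMap.id
  | k + 1 => Finsupp.linearCombination ℤ fun v ↦
      cone (tupleBarycenter v) (tupleSubdivision k (tupleBoundary (Finsupp.single v 1)))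

theorem tupleSubdivision_single (v : Fin (k + 1) → s) :
    tupleSubdivision (k + 1) (Finsupp.single v 1) =
      cone (tupleBarycenter v) (tupleSubdivision k (tupleBoundary (Finsupp.single v 1))) := by
  rw [tupleSubdivision, Finsupp.linearCombination_single, one_smul]

theorem tupleBoundary_tupleSubdivision (x : TupleChain (k + 1) s) :
    tupleBoundary (tupleSubdivision (k + 1) x) = tupleSubdivision k (tupleBoundary x) := by
  induction k with
  | zero =>
    refine apply_eq_of_single_eq (f := tupleBoundary ∘ₗ tupleSubdivision (s := s) (0 + 1))
      (g := tupleSubdivision 0 ∘ₗ tupleBoundary) (fun v ↦ ?_) x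
    rw [LinearMap.comp_apply, tupleSubdivision_single, tupleBoundary_cone_zero,
      LinearMap.comp_apply]
  | succ k ih =>
    refine apply_eq_of_single_eq (f := tupleBoundary ∘ₗ tupleSubdivision (s := s) (k + 1 + 1))
      (g := tupleSubdivision (k + 1) ∘ₗ tupleBoundary) (fun v ↦ ?_) x
    rw [LinearMap.comp_apply, tupleSubdivision_single, tupleBoundary_cone, ih,
      tupleBoundary_tupleBoundary, map_zero, map_zero, sub_zero, LinearMap.comp_apply]

theorem tupleMap_tupleSubdivision {f : C(s, t)} (hf : PreservesConvexComb f)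
    (x : TupleChain k s) :
    tupleMap f (tupleSubdivision k x) = tupleSubdivision k (tupleMap f x) := by
  induction k with
  | zero => simp [tupleSubdivision]
  | succ k ih =>
    refine apply_eq_of_single_eq (f := tupleMap f ∘ₗ tupleSubdivision (k + 1))
      (g := tupleSubdivision (k + 1) ∘ₗ tupleMap f) (fun v ↦ ?_) x
    simp only [LinearMap.comp_apply, tupleMap_single, tupleSubdivision_single, tupleMap_cone, ih,
      tupleMap_tupleBoundary, hf.map_tupleBarycenter]

/-- The chain homotopy from barycentric subdivision of formal tuples to the identity. -/
def tupleSubdivisionHomotopy (k : ℕ) : TupleChain k s →ₗ[ℤ] TupleChain (k + 1) s :=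
  coneHomotopy (fun _ ↦ LinearMap.id) tupleSubdivision (fun _ ↦ tupleBarycenter) k

theorem tupleBoundary_tupleSubdivisionHomotopy (x : TupleChain (k + 1) s) :
    tupleBoundary (tupleSubdivisionHomotopy (k + 1) x) =
      x - tupleSubdivision (k + 1) x - tupleSubdivisionHomotopy k (tupleBoundary x) :=
  tupleBoundary_coneHomotopy (F := fun _ ↦ LinearMap.id) (fun _ _ ↦ rfl)
    (fun _ ↦ tupleBoundary_tupleSubdivision) rfl x

theorem tupleMap_tupleSubdivisionHomotopy {f : C(s, t)} (hf : PreservesConvexComb f)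
    (x : TupleChain k s) :
    tupleMap f (tupleSubdivisionHomotopy k x) = tupleSubdivisionHomotopy k (tupleMap f x) :=
  tupleMap_coneHomotopy (F := fun _ ↦ LinearMap.id) (G := tupleSubdivision)
    (F' := fun _ ↦ LinearMap.id) (G' := tupleSubdivision) (f := f) (g := f)
    (fun _ _ ↦ rfl) (fun _ ↦ tupleMap_tupleSubdivision hf) (fun _ ↦ hf.map_tupleBarycenter) x

end TupleSubdivision

/-! ### Singular chains -/

section SingularChain

variable {X Y Z s t : Type*} [TopologicalSpace X] [TopologicalSpace Y] [TopologicalSpace Z]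
  [TopologicalSpace s] [TopologicalSpace t] [ConvexCombSpace s] [ConvexCombSpace t] {k m : ℕ}

/-- Singular simplices with `k` vertices. -/
abbrev SingularSimplex (k : ℕ) (X : Type*) [TopologicalSpace X] : Type _ := C(Simplex k, X)

/-- Integral singular chains on simplices with `k` vertices. They form the augmented singular
complex of `X` shifted by one, since `Chain 0 X` is freely generated by the empty simplex. -/
abbrev Chain (k : ℕ) (X : Type*) [TopologicalSpace X] : Type _ := SingularSimplex k X →₀ ℤ

/-- The singular simplex obtained by pulling back along a map of vertices. -/
def reindex {i j : ℕ} (f : Fin i → Fin j) (σ : SingularSimplex j X) : SingularSimplex i X :=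
  σ.comp (simplexMap f)

theorem reindex_reindex {i j k : ℕ} (f : Fin i → Fin j) (g : Fin j → Fin k)
    (σ : SingularSimplex k X) : reindex f (reindex g σ) = reindex (g ∘ f) σ := by
  simp only [reindex, ContinuousMap.comp_assoc, simplexMap_comp]

/-- The boundary operator of the augmented singular complex. -/
def boundary : Chain (k + 1) X →ₗ[ℤ] Chain k X :=
  alternatingFaceSum fun i σ ↦ reindex i.succAbove σ

theorem boundary_single (σ : SingularSimplex (k + 1) X) :
    boundary (Finsupp.single σ 1) =
      ∑ i : Fin (k + 1), (-1 : ℤ) ^ (i : ℕ) • Finsupp.single (reindex i.succAbove σ) 1 :=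
  alternatingFaceSum_single _ σ

/-- The map induced on singular chains by a continuous map. -/
def pushforward (f : C(X, Y)) : Chain k X →ₗ[ℤ] Chain k Y := Finsupp.lmapDomain ℤ ℤ (f.comp ·)

@[simp] theorem pushforward_single (f : C(X, Y)) (σ : SingularSimplex k X) (c : ℤ) :
    pushforward f (Finsupp.single σ c) = Finsupp.single (f.comp σ) c := by
  simp [pushforward]

theorem pushforward_boundary (f : C(X, Y)) (x : Chain (k + 1) X) :
    pushforward f (boundary x) = boundary (pushforward f x) :=
  lmapDomain_alternatingFaceSum (face := fun i σ ↦ reindex i.succAbove σ)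
    (face' := fun i σ ↦ reindex i.succAbove σ) (f := (f.comp ·)) (g := (f.comp ·))
    (fun _ _ ↦ rfl) x

theorem pushforward_pushforward (f : C(X, Y)) (g : C(Y, Z)) (x : Chain k X) :
    pushforward g (pushforward f x) = pushforward (g.comp f) x :=
  apply_eq_of_single_eq (f := pushforward g ∘ₗ pushforward f) (g := pushforward (g.comp f))
    (fun σ ↦ by simp [ContinuousMap.comp_assoc]) x

theorem pushforward_id (x : Chain k X) : pushforward (ContinuousMap.id X) x = x :=
  Finsupp.mapDomain_id

theorem pushforward_injective {f : C(X, Y)} (hf : Function.Injective f) :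
    Function.Injective (pushforward f : Chain k X →ₗ[ℤ] Chain k Y) :=
  Finsupp.mapDomain_injective fun _ _ h ↦ ContinuousMap.ext fun t ↦ hf (DFunLike.congr_fun h t)

/-- Singular chains in `X` from formal tuples of points of a space with convex combinations which
maps to `X`. -/
def realize (φ : C(s, X)) : TupleChain k s →ₗ[ℤ] Chain k X :=
  Finsupp.lmapDomain ℤ ℤ fun v ↦ φ.comp (convexComb v)

@[simp] theorem realize_single (φ : C(s, X)) (v : Fin k → s) (c : ℤ) :
    realize φ (Finsupp.single v c) = Finsupp.single (φ.comp (convexComb v)) c := by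
  simp [realize]

theorem realize_tupleBoundary (φ : C(s, X)) (x : TupleChain (k + 1) s) :
    realize φ (tupleBoundary x) = boundary (realize φ x) :=
  lmapDomain_alternatingFaceSum (face := fun i v ↦ v ∘ i.succAbove)
    (face' := fun i σ ↦ reindex i.succAbove σ) (f := fun v ↦ φ.comp (convexComb v))
    (g := fun v ↦ φ.comp (convexComb v))
    (fun i v ↦ by rw [← convexComb_comp_simplexMap, reindex, ContinuousMap.comp_assoc]) x

theorem pushforward_realize (φ : C(s, X)) (f : C(X, Y)) (x : TupleChain k s) :
    pushforward f (realize φ x) = realize (f.comp φ) x :=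
  apply_eq_of_single_eq (f := pushforward f ∘ₗ realize φ) (g := realize (f.comp φ))
    (fun v ↦ by simp [ContinuousMap.comp_assoc]) x

theorem realize_tupleMap (φ : C(t, X)) {f : C(s, t)} (hf : PreservesConvexComb f)
    (x : TupleChain k s) : realize φ (tupleMap f x) = realize (φ.comp f) x :=
  apply_eq_of_single_eq (f := realize φ ∘ₗ tupleMap f) (g := realize (φ.comp f))
    (fun v ↦ by simp [ContinuousMap.comp_assoc, hf _ v]) x

/-- The tuple of vertices of the standard simplex, whose realizations are all singular simplices. -/
def vertexTuple (k : ℕ) : TupleChain k (Simplex k) := Finsupp.single vertex 1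

theorem realize_vertexTuple (σ : SingularSimplex k X) :
    realize σ (vertexTuple k) = Finsupp.single σ 1 := by
  rw [vertexTuple, realize_single, convexComb_vertex, ContinuousMap.comp_id]

theorem tupleMap_convexComb_vertexTuple (v : Fin k → Simplex m) :
    tupleMap (convexComb v) (vertexTuple k) = Finsupp.single v 1 := by
  rw [vertexTuple, tupleMap_single, convexComb_comp_vertex]

theorem boundary_boundary (x : Chain (k + 2) X) : boundary (boundary x) = 0 := by
  refine apply_eq_of_single_eq (f := boundary ∘ₗ boundary) (g := 0) (fun σ ↦ ?_) x
  rw [LinearMap.comp_apply, ← realize_vertexTuple, ← realize_tupleBoundary,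
    ← realize_tupleBoundary, tupleBoundary_tupleBoundary, map_zero, LinearMap.zero_apply]

/-- Barycentric subdivision of singular chains. -/
def subdivision (k : ℕ) : Chain k X →ₗ[ℤ] Chain k X :=
  Finsupp.linearCombination ℤ fun σ ↦ realize σ (tupleSubdivision k (vertexTuple k))

/-- The chain homotopy from barycentric subdivision to the identity. -/
def subdivisionHomotopy (k : ℕ) : Chain k X →ₗ[ℤ] Chain (k + 1) X :=
  Finsupp.linearCombination ℤ fun σ ↦ realize σ (tupleSubdivisionHomotopy k (vertexTuple k))

/-- The prism operator of a homotopy. -/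
def prism (H : C(X × unitInterval, Y)) (k : ℕ) : Chain k X →ₗ[ℤ] Chain (k + 1) Y :=
  Finsupp.linearCombination ℤ fun σ ↦
    realize (H.comp (σ.prodMap (ContinuousMap.id _))) (tuplePrism k (vertexTuple k))

theorem subdivision_realize (σ : SingularSimplex m X) (x : TupleChain k (Simplex m)) :
    subdivision k (realize σ x) = realize σ (tupleSubdivision k x) := by
  refine apply_eq_of_single_eq (f := subdivision k ∘ₗ realize σ)
    (g := realize σ ∘ₗ tupleSubdivision k) (fun v ↦ ?_) x
  have affine := preservesConvexComb_convexComb v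
  rw [LinearMap.comp_apply, realize_single, subdivision, Finsupp.linearCombination_single,
    one_smul, ← realize_tupleMap σ affine, tupleMap_tupleSubdivision affine,
    tupleMap_convexComb_vertexTuple, LinearMap.comp_apply]

theorem subdivisionHomotopy_realize (σ : SingularSimplex m X) (x : TupleChain k (Simplex m)) :
    subdivisionHomotopy k (realize σ x) = realize σ (tupleSubdivisionHomotopy k x) := by
  refine apply_eq_of_single_eq (f := subdivisionHomotopy k ∘ₗ realize σ)
    (g := realize σ ∘ₗ tupleSubdivisionHomotopy k) (fun v ↦ ?_) x
  have affine := preservesConvexComb_convexComb v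
  rw [LinearMap.comp_apply, realize_single, subdivisionHomotopy,
    Finsupp.linearCombination_single, one_smul, ← realize_tupleMap σ affine,
    tupleMap_tupleSubdivisionHomotopy affine, tupleMap_convexComb_vertexTuple,
    LinearMap.comp_apply]

theorem prism_realize (H : C(X × unitInterval, Y)) (σ : SingularSimplex m X)
    (x : TupleChain k (Simplex m)) : prism H k (realize σ x) =
      realize (H.comp (σ.prodMap (ContinuousMap.id _))) (tuplePrism k x) := by
  refine apply_eq_of_single_eq (f := prism H k ∘ₗ realize σ)
    (g := realize (H.comp (σ.prodMap (ContinuousMap.id _))) ∘ₗ tuplePrism k) (fun v ↦ ?_) x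
  have prodMap_comp : H.comp ((σ.comp (convexComb v)).prodMap (ContinuousMap.id _)) =
      (H.comp (σ.prodMap (ContinuousMap.id _))).comp
        ((convexComb v).prodMap (ContinuousMap.id unitInterval)) := rfl
  have prism_naturality := tupleMap_tuplePrism (convexComb v) (vertexTuple k)
  rw [tupleMap_convexComb_vertexTuple] at prism_naturality
  rw [LinearMap.comp_apply, realize_single, prism, Finsupp.linearCombination_single, one_smul,
    prodMap_comp, ← realize_tupleMap _ (preservesConvexComb_convexComb v).prodMap_id]
  exact congrArg _ prism_naturality

theorem boundary_subdivision (x : Chain (k + 1) X) :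
    boundary (subdivision (k + 1) x) = subdivision k (boundary x) := by
  refine apply_eq_of_single_eq (f := boundary ∘ₗ subdivision (k + 1))
    (g := subdivision k ∘ₗ boundary) (fun σ ↦ ?_) x
  rw [LinearMap.comp_apply, LinearMap.comp_apply, ← realize_vertexTuple, subdivision_realize,
    ← realize_tupleBoundary, tupleBoundary_tupleSubdivision, ← subdivision_realize,
    realize_tupleBoundary]

theorem boundary_subdivisionHomotopy (x : Chain (k + 1) X) :
    boundary (subdivisionHomotopy (k + 1) x) =
      x - subdivision (k + 1) x - subdivisionHomotopy k (boundary x) := by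
  refine apply_eq_of_single_eq (f := boundary ∘ₗ subdivisionHomotopy (k + 1))
    (g := LinearMap.id - subdivision (k + 1) - subdivisionHomotopy k ∘ₗ boundary) (fun σ ↦ ?_) x
  simp only [LinearMap.comp_apply, LinearMap.sub_apply, LinearMap.id_apply]
  rw [← realize_vertexTuple, subdivisionHomotopy_realize, ← realize_tupleBoundary,
    tupleBoundary_tupleSubdivisionHomotopy, subdivision_realize, ← realize_tupleBoundary,
    subdivisionHomotopy_realize, map_sub, map_sub]

theorem realize_tupleMap_prodMk (H : C(X × unitInterval, Y)) {f : C(X, Y)} {e : unitInterval}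
    (hf : ∀ x, H (x, e) = f x) (σ : SingularSimplex k X) :
    realize (H.comp (σ.prodMap (ContinuousMap.id _)))
      (tupleMap (fun t ↦ (t, e)) (vertexTuple k)) = pushforward f (Finsupp.single σ 1) := by
  rw [vertexTuple, tupleMap_single, realize_single, pushforward_single]
  congr 1
  ext t
  change H (σ (convexComb vertex t), convexComb (fun _ ↦ e) t) = f (σ t)
  rw [convexComb_vertex, convexComb_unitInterval_const, hf, ContinuousMap.id_apply]

theorem boundary_prism {H : C(X × unitInterval, Y)} {f g : C(X, Y)} (hf : ∀ x, H (x, 0) = f x)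
    (hg : ∀ x, H (x, 1) = g x) (x : Chain (k + 1) X) :
    boundary (prism H (k + 1) x) =
      pushforward g x - pushforward f x - prism H k (boundary x) := by
  refine apply_eq_of_single_eq (f := boundary ∘ₗ prism H (k + 1))
    (g := pushforward g - pushforward f - prism H k ∘ₗ boundary) (fun σ ↦ ?_) x
  simp only [LinearMap.comp_apply, LinearMap.sub_apply]
  rw [← realize_tupleMap_prodMk H hg, ← realize_tupleMap_prodMk H hf, ← realize_vertexTuple,
    prism_realize, ← realize_tupleBoundary, tupleBoundary_tuplePrism, ← realize_tupleBoundary,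
    prism_realize, map_sub, map_sub]

theorem prism_pushforward (H : C(Y × unitInterval, Z)) (f : C(X, Y)) (x : Chain k X) :
    prism H k (pushforward f x) = prism (H.comp (f.prodMap (ContinuousMap.id _))) k x :=
  apply_eq_of_single_eq (f := prism H k ∘ₗ pushforward f)
    (g := prism (H.comp (f.prodMap (ContinuousMap.id _))) k)
    (fun σ ↦ by
      rw [LinearMap.comp_apply, pushforward_single, ← realize_vertexTuple, prism_realize,
        ← realize_vertexTuple, prism_realize]
      rfl) x

theorem pushforward_prism (H : C(X × unitInterval, Y)) (f : C(Y, Z)) (x : Chain k X) :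
    pushforward f (prism H k x) = prism (f.comp H) k x :=
  apply_eq_of_single_eq (f := pushforward f ∘ₗ prism H k) (g := prism (f.comp H) k)
    (fun σ ↦ by
      rw [LinearMap.comp_apply, ← realize_vertexTuple, prism_realize, prism_realize,
        pushforward_realize, ContinuousMap.comp_assoc]) x

end SingularChain

/-! ### Chains of small simplices -/

section SmallChain

variable {X Y Z s : Type*} [TopologicalSpace X] [TopologicalSpace Y] [TopologicalSpace Z]
  [TopologicalSpace s] [ConvexCombSpace s] {k : ℕ} {P : LowerSet (Set X)} {S T : Set X}

theorem map_mem_of_mem_supported {A M : Type*} [AddCommGroup M] {S : Set A} {x : A →₀ ℤ}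
    (hx : x ∈ Finsupp.supported ℤ ℤ S) (f : (A →₀ ℤ) →ₗ[ℤ] M) {N : Submodule ℤ M}
    (h : ∀ a ∈ S, f (Finsupp.single a 1) ∈ N) : f x ∈ N := by
  rw [Finsupp.supported_eq_span_single] at hx
  exact (Submodule.span_le.2 (Set.image_subset_iff.2 h) : _ ≤ N.comap f) hx

theorem lmapDomain_mem_supported {A B : Type*} {S : Set A} {T : Set B} {x : A →₀ ℤ}
    (hx : x ∈ Finsupp.supported ℤ ℤ S) {f : A → B} (h : Set.MapsTo f S T) :
    Finsupp.lmapDomain ℤ ℤ f x ∈ Finsupp.supported ℤ ℤ T :=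
  map_mem_of_mem_supported hx _ fun a ha ↦ by
    simpa using Finsupp.single_mem_supported ℤ 1 (h ha)

/-- The chains all of whose simplices have image in the family `P`. -/
def smallChains (P : LowerSet (Set X)) (k : ℕ) : Submodule ℤ (Chain k X) :=
  Finsupp.supported ℤ ℤ {σ | Set.range σ ∈ P}

/-- The chains supported in a subset. -/
def chainsIn (S : Set X) (k : ℕ) : Submodule ℤ (Chain k X) := smallChains (LowerSet.Iic S) k

theorem smallChains_mono {P Q : LowerSet (Set X)} (h : P ≤ Q) :
    smallChains P k ≤ smallChains Q k :=
  Finsupp.supported_mono fun _ hσ ↦ h hσ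

theorem chainsIn_mono (h : S ⊆ T) : chainsIn S k ≤ chainsIn T k :=
  smallChains_mono (LowerSet.Iic_le.2 h)

theorem mem_chainsIn_inter {x : Chain k X} (hS : x ∈ chainsIn S k) (hT : x ∈ chainsIn T k) :
    x ∈ chainsIn (S ∩ T) k := fun _ hσ ↦ Set.subset_inter (hS hσ) (hT hσ)

theorem mem_chainsIn_univ (x : Chain k X) : x ∈ chainsIn Set.univ k := fun _ _ ↦ Set.subset_univ _

theorem realize_mem_smallChains {φ : C(s, X)} (h : Set.range φ ∈ P) (x : TupleChain k s) :
    realize φ x ∈ smallChains P k :=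
  lmapDomain_mem_supported (S := Set.univ) (by simp) fun v _ ↦
    P.lower (Set.range_comp_subset_range (convexComb v) φ) h

theorem boundary_mem_smallChains {x : Chain (k + 1) X} (hx : x ∈ smallChains P (k + 1)) :
    boundary x ∈ smallChains P k :=
  map_mem_of_mem_supported hx _ fun σ hσ ↦ by
    rw [← realize_vertexTuple, ← realize_tupleBoundary]
    exact realize_mem_smallChains hσ _

theorem subdivision_mem_smallChains {x : Chain k X} (hx : x ∈ smallChains P k) :
    subdivision k x ∈ smallChains P k :=
  map_mem_of_mem_supported hx _ fun σ hσ ↦ by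
    rw [← realize_vertexTuple, subdivision_realize]
    exact realize_mem_smallChains hσ _

theorem subdivisionHomotopy_mem_smallChains {x : Chain k X} (hx : x ∈ smallChains P k) :
    subdivisionHomotopy k x ∈ smallChains P (k + 1) :=
  map_mem_of_mem_supported hx _ fun σ hσ ↦ by
    rw [← realize_vertexTuple, subdivisionHomotopy_realize]
    exact realize_mem_smallChains hσ _

theorem boundary_mem_chainsIn {x : Chain (k + 1) X} (hx : x ∈ chainsIn S (k + 1)) :
    boundary x ∈ chainsIn S k := boundary_mem_smallChains hx

theorem pushforward_mem_chainsIn {T : Set Y} {f : C(X, Y)} (h : Set.MapsTo f S T)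
    {x : Chain k X} (hx : x ∈ chainsIn S k) : pushforward f x ∈ chainsIn T k :=
  lmapDomain_mem_supported hx fun _ hσ ↦ Set.range_subset_iff.2 fun t ↦ h (hσ ⟨t, rfl⟩)

/-- The inclusion of a subspace. -/
def inclusion (S : Set X) : C(S, X) := ⟨Subtype.val, continuous_subtype_val⟩

theorem pushforward_inclusion_injective (S : Set X) :
    Function.Injective (pushforward (inclusion S) : Chain k S →ₗ[ℤ] Chain k X) :=
  pushforward_injective Subtype.val_injective

theorem pushforward_inclusion_mem (y : Chain k S) : pushforward (inclusion S) y ∈ chainsIn S k :=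
  pushforward_mem_chainsIn (fun x _ ↦ x.2) (mem_chainsIn_univ y)

theorem exists_pushforward_inclusion_eq {x : Chain k X} (hx : x ∈ chainsIn S k) :
    ∃ y : Chain k S, pushforward (inclusion S) y = x :=
  map_mem_of_mem_supported hx LinearMap.id (N := LinearMap.range (pushforward (inclusion S)))
    fun σ hσ ↦ ⟨Finsupp.single ⟨fun t ↦ ⟨σ t, hσ ⟨t, rfl⟩⟩, by fun_prop⟩ 1, by
      rw [pushforward_single]; rfl⟩

end SmallChain

/-! ### Mesh of barycentric subdivisions -/

section Mesh

variable {m k : ℕ} {D : ℝ}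

theorem norm_inv_smul_sum_sub_le {E : Type*} [SeminormedAddCommGroup E] [NormedSpace ℝ E]
    {v : Fin (k + 1) → E} {l : Fin (k + 1)} (h : ∀ i, ‖v i - v l‖ ≤ D) :
    ‖((k : ℝ) + 1)⁻¹ • ∑ i, v i - v l‖ ≤ k / (k + 1) * D := by
  have average_sub : ((k : ℝ) + 1)⁻¹ • ∑ i, v i - v l = ((k : ℝ) + 1)⁻¹ • ∑ i, (v i - v l) := by
    rw [Finset.sum_sub_distrib, smul_sub, Finset.sum_const, Finset.card_fin,
      ← Nat.cast_smul_eq_nsmul ℝ, smul_smul]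
    push_cast
    rw [inv_mul_cancel₀ (by positivity), one_smul]
  have sum_le : ‖∑ i, (v i - v l)‖ ≤ k * D := by
    rw [← Finset.sum_erase_add _ _ (Finset.mem_univ l), sub_self, add_zero]
    refine (norm_sum_le_of_le _ fun i _ ↦ h i).trans ?_
    simp [Finset.card_erase_of_mem]
  rw [average_sub, norm_smul, Real.norm_of_nonneg (by positivity)]
  calc ((k : ℝ) + 1)⁻¹ * ‖∑ i, (v i - v l)‖ ≤ ((k : ℝ) + 1)⁻¹ * (k * D) := by gcongr
    _ = k / (k + 1) * D := by ring

theorem coe_tupleBarycenter (v : Fin (k + 1) → Simplex m) :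
    ((tupleBarycenter v : Simplex m) : Fin m → ℝ) = ((k : ℝ) + 1)⁻¹ • ∑ i, (v i : Fin m → ℝ) := by
  rw [Finset.smul_sum]
  change ∑ i, (stdSimplex.barycenter : Simplex (k + 1)) i • (v i : Fin m → ℝ) = _
  refine Finset.sum_congr rfl fun i _ ↦ congrArg (fun r : ℝ ↦ r • (v i : Fin m → ℝ)) ?_
  exact (stdSimplex.barycenter_apply (𝕜 := ℝ) i).trans (by simp)

theorem convexComb_mem_of_convex {C : Set (Fin m → ℝ)} (hC : Convex ℝ C)
    {v : Fin k → Simplex m} (hv : ∀ l, (v l : Fin m → ℝ) ∈ C) (t : Simplex k) :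
    (convexComb v t : Fin m → ℝ) ∈ C :=
  hC.sum_mem (fun l _ ↦ t.2.1 l) t.2.2 fun l _ ↦ hv l

theorem dist_convexComb_tupleBarycenter_le {v : Fin (k + 1) → Simplex m}
    (hv : ∀ i j, dist (v i) (v j) ≤ D) (t : Simplex (k + 1)) :
    dist (convexComb v t) (tupleBarycenter v) ≤ k / (k + 1) * D := by
  refine convexComb_mem_of_convex (convex_closedBall _ _) (fun l ↦ ?_) t
  have bound := norm_inv_smul_sum_sub_le (v := fun i ↦ (v i : Fin m → ℝ)) (l := l)
    fun i ↦ (dist_eq_norm _ _).symm.trans_le (hv i l)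
  rw [← coe_tupleBarycenter] at bound
  exact mem_closedBall_iff_norm'.2 bound

theorem range_convexComb_subset_ball {v : Fin (k + 1) → Simplex m}
    (hv : ∀ i j, dist (v i) (v j) < D) : Set.range (convexComb v) ⊆ Metric.ball (v 0) D :=
  Set.range_subset_iff.2 (convexComb_mem_of_convex (convex_ball _ _) fun l ↦ hv l 0)

/-- The tuples of diameter at most `D` in the image of the affine simplex spanned by `v`. -/
def tuplesOfDiamLE (v : Fin k → Simplex m) (D : ℝ) : Set (Fin k → Simplex m) :=
  {w | (∀ i j, dist (w i) (w j) ≤ D) ∧ ∀ i, w i ∈ Set.range (convexComb v)}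

theorem cons_tupleBarycenter_mem {v : Fin (k + 1) → Simplex m} {w : Fin k → Simplex m}
    (hD : 0 ≤ D) (h : ∀ t, dist (convexComb v t) (tupleBarycenter v) ≤ D)
    (hdiam : ∀ i j, dist (w i) (w j) ≤ D) (hrange : ∀ i, w i ∈ Set.range (convexComb v)) :
    Fin.cons (tupleBarycenter v) w ∈ tuplesOfDiamLE v D := by
  have dist_le (i) : dist (w i) (tupleBarycenter v) ≤ D := by
    obtain ⟨t, ht⟩ := hrange i
    rw [← ht]
    exact h t
  refine ⟨Fin.cases (Fin.cases (by simpa using hD) fun j ↦ ?_) fun i ↦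
    Fin.cases (dist_le i) (hdiam i), Fin.cases ⟨_, rfl⟩ hrange⟩
  rw [dist_comm]
  exact dist_le j

theorem tupleSubdivision_single_mem {K : ℕ} (hk : k ≤ K + 1) (v : Fin k → Simplex m) (hD : 0 ≤ D)
    (hv : ∀ i j, dist (v i) (v j) ≤ D) : tupleSubdivision k (Finsupp.single v 1) ∈
      Finsupp.supported ℤ ℤ (tuplesOfDiamLE v (K / (K + 1) * D)) := by
  induction k with
  | zero => exact Finsupp.single_mem_supported ℤ 1 ⟨fun i ↦ i.elim0, fun i ↦ i.elim0⟩
  | succ k ih =>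
    have ratio_le : (k : ℝ) / (k + 1) * D ≤ K / (K + 1) * D := by
      have : (k : ℝ) ≤ K := mod_cast Nat.succ_le_succ_iff.1 hk
      gcongr ?_ * D
      rw [div_le_div_iff₀ (by positivity) (by positivity)]
      linarith
    rw [tupleSubdivision_single, tupleBoundary, alternatingFaceSum_single, map_sum, map_sum]
    refine Submodule.sum_mem _ fun i _ ↦ ?_
    rw [map_smul, map_smul]
    refine Submodule.smul_mem _ _ (lmapDomain_mem_supported
      (ih (by lia) (v ∘ i.succAbove) fun _ _ ↦ hv _ _) fun w hw ↦ ?_)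
    refine cons_tupleBarycenter_mem (by positivity)
      (fun t ↦ (dist_convexComb_tupleBarycenter_le hv t).trans ratio_le) hw.1 fun j ↦ ?_
    obtain ⟨t, ht⟩ := hw.2 j
    rw [← ht, ← convexComb_comp_simplexMap]
    exact ⟨_, rfl⟩

theorem tupleSubdivision_pow_vertexTuple_mem (k r : ℕ) :
    (tupleSubdivision k ^ r : Module.End ℤ (TupleChain k (Simplex k))) (vertexTuple k) ∈
      Finsupp.supported ℤ ℤ {w | ∀ i j, dist (w i) (w j) ≤ ((k : ℝ) / (k + 1)) ^ r} := by
  induction r with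
  | zero =>
    refine Finsupp.single_mem_supported ℤ 1 fun i j ↦ ?_
    rw [pow_zero]
    exact (Metric.dist_le_diam_of_mem (bounded_stdSimplex _) (vertex i).2 (vertex j).2).trans
      diam_stdSimplex_le
  | succ r ih =>
    rw [pow_succ' (tupleSubdivision k), Module.End.mul_apply]
    refine map_mem_of_mem_supported ih _ fun w hw ↦ Finsupp.supported_mono (fun w' hw' ↦ ?_)
      (tupleSubdivision_single_mem (K := k) k.le_succ w (by positivity) hw)
    rw [pow_succ']
    exact hw'.1

end Mesh

/-! ### The theorem on small simplices -/

section SmallSimplices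

variable {X Y : Type*} [TopologicalSpace X] [TopologicalSpace Y] {k : ℕ} {P : LowerSet (Set X)}

theorem subdivision_pow_realize (σ : SingularSimplex k X) (r : ℕ) (x : TupleChain k (Simplex k)) :
    (subdivision k ^ r : Module.End ℤ (Chain k X)) (realize σ x) =
      realize σ ((tupleSubdivision k ^ r : Module.End ℤ (TupleChain k (Simplex k))) x) := by
  rw [Module.End.pow_apply, Module.End.pow_apply]
  exact (Function.Semiconj.iterate_right (fun x ↦ (subdivision_realize σ x).symm) r x).symm

theorem eventually_subdivision_pow_single_mem (hP : ∀ x, ∃ U ∈ P, U ∈ 𝓝 x)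
    (σ : SingularSimplex (k + 1) X) : ∀ᶠ r in Filter.atTop,
      (subdivision (k + 1) ^ r : Module.End ℤ (Chain (k + 1) X)) (Finsupp.single σ 1) ∈
        smallChains P (k + 1) := by
  choose U hUP hU using hP
  obtain ⟨δ, hδ, ball_subset⟩ := lebesgue_number_lemma_of_metric isCompact_univ
    (c := fun x ↦ σ ⁻¹' interior (U x)) (fun x ↦ isOpen_interior.preimage σ.continuous)
    fun t _ ↦ Set.mem_iUnion.2 ⟨σ t, mem_interior_iff_mem_nhds.2 (hU _)⟩
  have ratio_lt : ((k + 1 : ℕ) : ℝ) / ((k + 1 : ℕ) + 1) < 1 := by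
    rw [div_lt_one (by positivity)]
    exact lt_add_one _
  have ratio_pow := tendsto_pow_atTop_nhds_zero_of_lt_one (by positivity) ratio_lt
  filter_upwards [ratio_pow.eventually_lt_const hδ] with r hr
  rw [← realize_vertexTuple, subdivision_pow_realize]
  refine lmapDomain_mem_supported (tupleSubdivision_pow_vertexTuple_mem (k + 1) r) fun w hw ↦ ?_
  obtain ⟨x, hx⟩ := ball_subset (w 0) (Set.mem_univ _)
  refine P.lower (Set.range_subset_iff.2 fun t ↦ ?_) (hUP x)
  exact interior_subset
    (hx (range_convexComb_subset_ball (fun i j ↦ (hw i j).trans_lt hr) ⟨t, rfl⟩))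

theorem eventually_subdivision_pow_mem (hP : ∀ x, ∃ U ∈ P, U ∈ 𝓝 x) (c : Chain (k + 1) X) :
    ∀ᶠ r in Filter.atTop,
      (subdivision (k + 1) ^ r : Module.End ℤ (Chain (k + 1) X)) c ∈ smallChains P (k + 1) := by
  induction c using Finsupp.induction_linear with
  | zero => simp
  | add c d hc hd =>
    filter_upwards [hc, hd] with r hc hd
    rw [map_add]
    exact add_mem hc hd
  | single σ n =>
    filter_upwards [eventually_subdivision_pow_single_mem hP σ] with r hr
    rw [← mul_one n, ← smul_eq_mul, ← Finsupp.smul_single, map_smul]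
    exact Submodule.smul_mem _ _ hr

theorem exists_sub_boundary_mem_of_subdivision_pow_mem (r : ℕ) {c : Chain (k + 1) X}
    (hc : boundary c ∈ smallChains P k)
    (hr : (subdivision (k + 1) ^ r : Module.End ℤ (Chain (k + 1) X)) c ∈ smallChains P (k + 1)) :
    ∃ e, c - boundary e ∈ smallChains P (k + 1) := by
  induction r generalizing c with
  | zero => exact ⟨0, by simpa using hr⟩
  | succ r ih =>
    rw [pow_succ, Module.End.mul_apply] at hr
    obtain ⟨e, he⟩ := ih (by
      rw [boundary_subdivision]; exact subdivision_mem_smallChains hc) hr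
    refine ⟨e + subdivisionHomotopy (k + 1) c, ?_⟩
    convert add_mem he (subdivisionHomotopy_mem_smallChains hc) using 1
    rw [map_add, boundary_subdivisionHomotopy]
    abel

theorem exists_sub_boundary_mem_smallChains (hP : ∀ x, ∃ U ∈ P, U ∈ 𝓝 x) {c : Chain (k + 1) X}
    (hc : boundary c ∈ smallChains P k) : ∃ e, c - boundary e ∈ smallChains P (k + 1) :=
  have ⟨r, hr⟩ := (eventually_subdivision_pow_mem hP c).exists
  exists_sub_boundary_mem_of_subdivision_pow_mem r hc hr

theorem exists_add_of_mem_smallChains_sup {S T : Set X} {x : Chain k X}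
    (hx : x ∈ smallChains (LowerSet.Iic S ⊔ LowerSet.Iic T) k) :
    ∃ a ∈ chainsIn S k, ∃ b ∈ chainsIn T k, a + b = x :=
  Submodule.mem_sup.1 <| map_mem_of_mem_supported hx LinearMap.id fun _ hσ ↦
    (LowerSet.mem_sup_iff.1 hσ).elim
      (fun h ↦ Submodule.mem_sup_left (Finsupp.single_mem_supported ℤ 1 h))
      fun h ↦ Submodule.mem_sup_right (Finsupp.single_mem_supported ℤ 1 h)

/- This is exactness of the Mayer–Vietoris sequence at `H (S ∩ T)`: `hcycle` says that
`H T → H X` is onto, so the connecting homomorphism to `H (S ∩ T)` vanishes. -/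
theorem exists_boundary_eq_of_inter {S T : Set X} (hS : IsOpen S) (hT : IsOpen T)
    (hST : S ∪ T = Set.univ)
    (hcycle : ∀ x : Chain (k + 2) X, boundary x = 0 →
      ∃ e ∈ chainsIn T (k + 2), ∃ f, boundary f = x - e)
    {c : Chain (k + 1) X} (hcS : ∃ a ∈ chainsIn S (k + 2), boundary a = c)
    (hcT : ∃ b ∈ chainsIn T (k + 2), boundary b = c) :
    ∃ h ∈ chainsIn (S ∩ T) (k + 2), boundary h = c := by
  obtain ⟨a, haS, ha⟩ := hcS
  obtain ⟨b, hbT, hb⟩ := hcT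
  obtain ⟨e, he, f, hf⟩ := hcycle (a - b) (by rw [map_sub, ha, hb, sub_self])
  have small : boundary f ∈ smallChains (LowerSet.Iic S ⊔ LowerSet.Iic T) (k + 2) := by
    rw [hf]
    exact sub_mem (sub_mem (smallChains_mono le_sup_left haS) (smallChains_mono le_sup_right hbT))
      (smallChains_mono le_sup_right he)
  obtain ⟨e', he'⟩ := exists_sub_boundary_mem_smallChains (fun x ↦
    (hST.ge (Set.mem_univ x)).elim
      (fun h ↦ ⟨S, LowerSet.mem_sup_iff.2 (.inl (Set.Subset.refl S)), hS.mem_nhds h⟩)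
      fun h ↦ ⟨T, LowerSet.mem_sup_iff.2 (.inr (Set.Subset.refl T)), hT.mem_nhds h⟩) small
  obtain ⟨f₁, hf₁, f₂, hf₂, split⟩ := exists_add_of_mem_smallChains_sup he'
  have boundary_split : boundary f₁ + boundary f₂ = a - b - e := by
    rw [← map_add, split, map_sub, boundary_boundary, sub_zero, hf]
  refine ⟨a - boundary f₁, mem_chainsIn_inter (sub_mem haS (boundary_mem_chainsIn hf₁)) ?_, ?_⟩
  · convert add_mem (add_mem hbT he) (boundary_mem_chainsIn hf₂) using 1
    linear_combination (norm := abel) -boundary_split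
  · rw [map_sub, boundary_boundary, ha, sub_zero]

theorem boundary_prism_of_boundary_eq_zero {H : C(X × unitInterval, Y)} {f g : C(X, Y)}
    (hf : ∀ x, H (x, 0) = f x) (hg : ∀ x, H (x, 1) = g x) {x : Chain (k + 1) X}
    (hx : boundary x = 0) :
    boundary (prism H (k + 1) x) = pushforward g x - pushforward f x := by
  rw [boundary_prism hf hg, hx, map_zero, sub_zero]

end SmallSimplices

/-! ### Complements of disjoint sections of a trivial line bundle -/

section SectionComplement

variable {B : Type*} [TopologicalSpace B] {k : ℕ}

theorem exists_chainsIn_snd_ne_homologous (s : C(B, ℂ)) {x : Chain (k + 1) (B × ℂ)}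
    (hx : boundary x = 0) :
    ∃ e ∈ chainsIn {p : B × ℂ | p.2 ≠ s p.1} (k + 1), ∃ f, boundary f = x - e := by
  let shifted : C(B × ℂ, B × ℂ) := ⟨fun p ↦ (p.1, s p.1 + 1), by fun_prop⟩
  let H : C((B × ℂ) × unitInterval, B × ℂ) :=
    ⟨fun q ↦ (q.1.1, (1 - ((q.2 : ℝ) : ℂ)) * (s q.1.1 + 1) + ((q.2 : ℝ) : ℂ) * q.1.2), by fun_prop⟩
  refine ⟨pushforward shifted x,
    pushforward_mem_chainsIn (fun p _ ↦ by simp [shifted]) (mem_chainsIn_univ x), prism H _ x, ?_⟩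
  rw [boundary_prism_of_boundary_eq_zero (f := shifted) (g := ContinuousMap.id _)
    (fun p ↦ by simp [H, shifted]) (fun p ↦ by simp [H]) hx, pushforward_id]

theorem exists_boundary_eq_of_forall_snd_ne {ι : Type*} (s : ι → C(B, ℂ)) {I : Finset ι}
    (hI : I.Nonempty) (hs : (I : Set ι).Pairwise fun i j ↦ ∀ b, s i b ≠ s j b)
    {c : Chain (k + 1) (B × ℂ)}
    (h : ∀ i ∈ I, ∃ a ∈ chainsIn {p : B × ℂ | p.2 ≠ s i p.1} (k + 2), boundary a = c) :
    ∃ a ∈ chainsIn {p : B × ℂ | ∀ i ∈ I, p.2 ≠ s i p.1} (k + 2), boundary a = c := by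
  induction hI using Finset.Nonempty.cons_induction with
  | singleton i => simpa using h
  | cons i J hi _ ih =>
    have isOpen_complement (i) : IsOpen {p : B × ℂ | p.2 ≠ s i p.1} :=
      isOpen_ne_fun continuous_snd ((s i).continuous.comp continuous_fst)
    have isOpen_complements : IsOpen {p : B × ℂ | ∀ i ∈ J, p.2 ≠ s i p.1} := by
      simp only [Set.ofPred_forall]
      exact isOpen_biInter_finset fun i _ ↦ isOpen_complement i
    have covers : {p : B × ℂ | ∀ i ∈ J, p.2 ≠ s i p.1} ∪ {p | p.2 ≠ s i p.1} = Set.univ := by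
      refine Set.eq_univ_of_forall fun p ↦ or_iff_not_imp_right.2 fun hp j hj ↦ ?_
      rw [not_not.1 hp]
      exact hs (by simp) (by simp [hj]) (by rintro rfl; exact hi hj) p.1
    obtain ⟨a, ha, hac⟩ := exists_boundary_eq_of_inter isOpen_complements (isOpen_complement i)
      covers (fun x hx ↦ exists_chainsIn_snd_ne_homologous (s i) hx)
      (ih (hs.mono (by simp)) fun j hj ↦ h j (by simp [hj])) (h i (by simp))
    refine ⟨a, chainsIn_mono ?_ ha, hac⟩
    rintro p ⟨hpJ, hpi⟩
    exact Finset.forall_mem_cons hi _ |>.2 ⟨hpi, hpJ⟩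

end SectionComplement

/-! ### Cap products of singular chains with low-dimensional cochains -/

section CapProduct

variable {X Y : Type*} [TopologicalSpace X] [TopologicalSpace Y] {i j k l : ℕ}

/-- The chain map on simplices given by `σ ↦ w σ • reindex f σ`. -/
def weightedReindex (f : Fin i → Fin j) (w : SingularSimplex j X → ℤ) :
    Chain j X →ₗ[ℤ] Chain i X :=
  Finsupp.linearCombination ℤ fun σ ↦ w σ • Finsupp.single (reindex f σ) 1

@[simp] theorem weightedReindex_single (f : Fin i → Fin j) (w : SingularSimplex j X → ℤ)
    (σ : SingularSimplex j X) : weightedReindex f w (Finsupp.single σ 1) =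
      w σ • Finsupp.single (reindex f σ) 1 := by
  rw [weightedReindex, Finsupp.linearCombination_single, one_smul]

theorem weightedReindex_weightedReindex (f : Fin i → Fin j) (g : Fin j → Fin k)
    (v : SingularSimplex j X → ℤ) (w : SingularSimplex k X → ℤ) (x : Chain k X) :
    weightedReindex f v (weightedReindex g w x) =
      weightedReindex (g ∘ f) (fun σ ↦ w σ * v (reindex g σ)) x :=
  apply_eq_of_single_eq (f := weightedReindex f v ∘ₗ weightedReindex g w)
    (g := weightedReindex (g ∘ f) fun σ ↦ w σ * v (reindex g σ))
    (fun σ ↦ by simp only [LinearMap.comp_apply, weightedReindex_single, map_smul, smul_smul,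
      reindex_reindex]) x

theorem weightedReindex_add (f : Fin i → Fin j) (v w : SingularSimplex j X → ℤ) (x : Chain j X) :
    weightedReindex f (v + w) x = weightedReindex f v x + weightedReindex f w x :=
  apply_eq_of_single_eq (g := weightedReindex f v + weightedReindex f w)
    (fun σ ↦ by simp [add_smul]) x

theorem weightedReindex_neg (f : Fin i → Fin j) (w : SingularSimplex j X → ℤ) (x : Chain j X) :
    weightedReindex f (-w) x = -weightedReindex f w x :=
  apply_eq_of_single_eq (g := -weightedReindex f w) (fun σ ↦ by simp) x

theorem weightedReindex_zero (f : Fin i → Fin j) (x : Chain j X) : weightedReindex f 0 x = 0 :=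
  apply_eq_of_single_eq (f := weightedReindex f 0) (g := 0) (fun σ ↦ by simp) x

theorem pushforward_weightedReindex (φ : C(X, Y)) (f : Fin i → Fin j)
    (w : SingularSimplex j Y → ℤ) (x : Chain j X) :
    pushforward φ (weightedReindex f (fun σ ↦ w (φ.comp σ)) x) =
      weightedReindex f w (pushforward φ x) :=
  apply_eq_of_single_eq (f := pushforward φ ∘ₗ weightedReindex f fun σ ↦ w (φ.comp σ))
    (g := weightedReindex f w ∘ₗ pushforward φ) (fun σ ↦ by simp; rfl) x

/-- The cap product with a cochain of degree one: evaluate on the first edge and keep the face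
opposite to the initial vertex. -/
def cap (η : SingularSimplex 2 X → ℤ) : Chain (k + 2) X →ₗ[ℤ] Chain (k + 1) X :=
  weightedReindex Fin.succ fun σ ↦ η (reindex ![0, 1] σ)

/-- The cap product with a cochain of degree two. -/
def capTwo (f : SingularSimplex 3 X → ℤ) : Chain (k + 3) X →ₗ[ℤ] Chain (k + 1) X :=
  weightedReindex (Fin.succ ∘ Fin.succ) fun σ ↦ f (reindex ![0, 1, 2] σ)

/-- The coboundary of a cochain of degree zero. -/
def coboundaryZero (g : X → ℤ) (τ : SingularSimplex 2 X) : ℤ := g (τ (vertex 1)) - g (τ (vertex 0))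

/-- The coboundary of a cochain of degree one. -/
def coboundaryOne (η : SingularSimplex 2 X → ℤ) (σ : SingularSimplex 3 X) : ℤ :=
  η (reindex (Fin.succAbove 0) σ) - η (reindex (Fin.succAbove 1) σ) +
    η (reindex (Fin.succAbove 2) σ)

/-- The cap product with a cochain of degree zero. -/
def capZero (g : X → ℤ) : Chain (k + 1) X →ₗ[ℤ] Chain (k + 1) X :=
  Finsupp.linearCombination ℤ fun σ ↦ g (σ (vertex 0)) • Finsupp.single σ 1

@[simp] theorem capZero_single (g : X → ℤ) (σ : SingularSimplex (k + 1) X) :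
    capZero g (Finsupp.single σ 1) = g (σ (vertex 0)) • Finsupp.single σ 1 := by
  rw [capZero, Finsupp.linearCombination_single, one_smul]

theorem reindex_apply_vertex (f : Fin i → Fin j) (σ : SingularSimplex j X) (a : Fin i) :
    reindex f σ (vertex a) = σ (vertex (f a)) := by
  rw [reindex, ContinuousMap.comp_apply, simplexMap_vertex]

theorem boundary_single_eq_sub (σ : SingularSimplex (k + 2) X) : boundary (Finsupp.single σ 1) =
    Finsupp.single (reindex Fin.succ σ) 1 -
      ∑ a : Fin (k + 1), (-1 : ℤ) ^ (a : ℕ) • Finsupp.single (reindex a.succ.succAbove σ) 1 := by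
  rw [boundary_single, Fin.sum_univ_succ, sub_eq_add_neg, ← Finset.sum_neg_distrib]
  simp [pow_succ]

theorem reindex_succ_reindex_succAbove (a : Fin (k + 1)) (σ : SingularSimplex (k + 2) X) :
    reindex Fin.succ (reindex a.succ.succAbove σ) = reindex a.succAbove (reindex Fin.succ σ) := by
  rw [reindex_reindex, reindex_reindex]
  congr 1
  funext b
  simp

theorem pushforward_cap (f : C(X, Y)) (η : SingularSimplex 2 Y → ℤ) (x : Chain (k + 2) X) :
    pushforward f (cap (fun τ ↦ η (f.comp τ)) x) = cap η (pushforward f x) :=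
  pushforward_weightedReindex f _ (fun σ ↦ η (reindex ![0, 1] σ)) x

theorem cap_single (η : SingularSimplex 2 X → ℤ) (σ : SingularSimplex (k + 2) X) :
    cap η (Finsupp.single σ 1) =
      η (reindex ![0, 1] σ) • Finsupp.single (reindex Fin.succ σ) 1 :=
  weightedReindex_single ..

theorem cap_single_reindex_succAbove (η : SingularSimplex 2 X → ℤ) (a : Fin (k + 1))
    (σ : SingularSimplex (k + 3) X) :
    cap η (Finsupp.single (reindex a.succ.succ.succAbove σ) 1) = η (reindex ![0, 1] σ) •
      Finsupp.single (reindex a.succ.succAbove (reindex Fin.succ σ)) 1 := by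
  have same_edge : (a.succ.succ.succAbove ∘ ![0, 1] : Fin 2 → Fin (k + 3)) = ![0, 1] := by
    funext b
    fin_cases b <;> simp
  rw [cap_single, reindex_succ_reindex_succAbove, reindex_reindex, same_edge]

theorem cap_boundary_single (η : SingularSimplex 2 X → ℤ) (σ : SingularSimplex (k + 3) X) :
    cap η (boundary (Finsupp.single σ 1)) =
      (η (reindex ![1, 2] σ) - η (reindex ![0, 2] σ)) •
          Finsupp.single (reindex (Fin.succ ∘ Fin.succ) σ) 1 -
        ∑ a : Fin (k + 1), (-1 : ℤ) ^ (a.succ : ℕ) • η (reindex ![0, 1] σ) •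
          Finsupp.single (reindex a.succ.succAbove (reindex Fin.succ σ)) 1 := by
  have second_edge : (Fin.succAbove (Fin.succ 0) ∘ ![0, 1] : Fin 2 → Fin (k + 3)) = ![0, 2] := by
    funext b
    fin_cases b <;> simp
  have first_edge : (Fin.succ ∘ ![0, 1] : Fin 2 → Fin (k + 3)) = ![1, 2] := by
    funext b
    fin_cases b <;> rfl
  have zeroth_face : cap η (Finsupp.single (reindex Fin.succ σ) 1) = η (reindex ![1, 2] σ) •
      Finsupp.single (reindex (Fin.succ ∘ Fin.succ) σ) 1 := by
    rw [cap_single, reindex_reindex, reindex_reindex, first_edge]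
  have first_face : cap η (Finsupp.single (reindex (Fin.succ 0).succAbove σ) 1) =
      η (reindex ![0, 2] σ) • Finsupp.single (reindex (Fin.succ ∘ Fin.succ) σ) 1 := by
    rw [cap_single, reindex_succ_reindex_succAbove, reindex_reindex, reindex_reindex, second_edge,
      Fin.succAbove_zero]
  rw [boundary_single_eq_sub, Fin.sum_univ_succ, map_sub, map_add, map_sum, map_smul, zeroth_face,
    first_face, Fin.val_zero, pow_zero, one_smul, sub_smul, sub_sub]
  simp only [map_smul, cap_single_reindex_succAbove]

theorem boundary_cap_single (η : SingularSimplex 2 X → ℤ) (σ : SingularSimplex (k + 3) X) :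
    boundary (cap η (Finsupp.single σ 1)) =
      η (reindex ![0, 1] σ) • Finsupp.single (reindex (Fin.succ ∘ Fin.succ) σ) 1 +
        ∑ a : Fin (k + 1), (-1 : ℤ) ^ (a.succ : ℕ) • η (reindex ![0, 1] σ) •
          Finsupp.single (reindex a.succ.succAbove (reindex Fin.succ σ)) 1 := by
  rw [cap_single, map_smul, boundary_single, Fin.sum_univ_succ, smul_add, Finset.smul_sum,
    Fin.val_zero, pow_zero, one_smul, Fin.succAbove_zero, reindex_reindex]
  exact congrArg _ (Finset.sum_congr rfl fun a _ ↦ smul_comm ..)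

theorem boundary_cap_add_cap_boundary (η : SingularSimplex 2 X → ℤ) (x : Chain (k + 3) X) :
    boundary (cap η x) + cap η (boundary x) = capTwo (coboundaryOne η) x := by
  refine apply_eq_of_single_eq (f := boundary ∘ₗ cap η + cap η ∘ₗ boundary)
    (g := capTwo (coboundaryOne η)) (fun σ ↦ ?_) x
  have faces : coboundaryOne η (reindex ![0, 1, 2] σ) = η (reindex ![1, 2] σ) -
      η (reindex ![0, 2] σ) + η (reindex ![0, 1] σ) := by
    simp only [coboundaryOne, reindex_reindex]
    congr! 4 <;> (funext b; fin_cases b <;> rfl)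
  rw [LinearMap.add_apply, LinearMap.comp_apply, LinearMap.comp_apply, boundary_cap_single,
    cap_boundary_single, capTwo, weightedReindex_single, faces, add_smul]
  abel

theorem cap_cap (α β : SingularSimplex 2 X → ℤ) (x : Chain (k + 3) X) :
    cap β (cap α x) = capTwo
      (fun σ ↦ α (reindex (Fin.succAbove 2) σ) * β (reindex (Fin.succAbove 0) σ)) x := by
  rw [cap, cap, weightedReindex_weightedReindex, capTwo]
  have first_edge : (![0, 1] : Fin 2 → Fin (k + 3)) = ![0, 1, 2] ∘ Fin.succAbove 2 := by
    funext b
    fin_cases b <;> rfl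
  have second_edge : (Fin.succ ∘ ![0, 1] : Fin 2 → Fin (k + 3)) =
      ![0, 1, 2] ∘ Fin.succAbove 0 := by
    funext b
    fin_cases b <;> rfl
  simp only [reindex_reindex, first_edge, second_edge]

theorem cap_coboundaryZero (g : X → ℤ) (x : Chain (k + 2) X) :
    cap (coboundaryZero g) x = capZero g (boundary x) - boundary (capZero g x) := by
  refine apply_eq_of_single_eq (g := capZero g ∘ₗ boundary - boundary ∘ₗ capZero g)
    (fun σ ↦ ?_) x
  rw [LinearMap.sub_apply, LinearMap.comp_apply, LinearMap.comp_apply, capZero_single, map_smul,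
    boundary_single_eq_sub, cap, weightedReindex_single, map_sub, map_sum]
  simp only [map_smul, capZero_single, reindex_apply_vertex, coboundaryZero, smul_sub, sub_smul,
    Finset.smul_sum, smul_comm (g _) ((-1 : ℤ) ^ _), Fin.succ_succAbove_zero, Matrix.cons_val_zero,
    Matrix.cons_val_one, Fin.succ_zero_eq_one]
  abel

end CapProduct

/-! ### Homology of differential modules -/

section DifferentialModule

variable {M N : Type*} [AddCommGroup M] [AddCommGroup N] {d : M →ₗ[ℤ] M} {d' : N →ₗ[ℤ] N}

/-- The homology of a differential module, which is graded only implicitly. -/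
abbrev DifferentialHomology (d : M →ₗ[ℤ] M) : Type _ :=
  LinearMap.ker d ⧸ (LinearMap.range d).submoduleOf (LinearMap.ker d)

/-- The homology class of a cycle. -/
def homologyClass (c : M) (hc : d c = 0) : DifferentialHomology d := Submodule.Quotient.mk ⟨c, hc⟩

theorem homologyClass_eq_iff {c c' : M} {hc : d c = 0} {hc' : d c' = 0} :
    homologyClass c hc = homologyClass c' hc' ↔ ∃ y, d y = c - c' :=
  Submodule.Quotient.eq _

theorem homologyClass_eq_zero_iff {c : M} {hc : d c = 0} :
    homologyClass c hc = 0 ↔ ∃ y, d y = c :=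
  Submodule.Quotient.mk_eq_zero _

theorem exists_homologyClass_eq (x : DifferentialHomology d) :
    ∃ c, ∃ hc : d c = 0, homologyClass c hc = x := by
  obtain ⟨⟨c, hc⟩, rfl⟩ := Submodule.Quotient.mk_surjective _ x
  exact ⟨c, hc, rfl⟩

/-- The map on homology induced by a linear map commuting with the differentials up to the
sign `ε`. -/
def homologyMap (f : M →ₗ[ℤ] N) (ε : ℤˣ) (hf : ∀ c, d' (f c) = ε • f (d c)) :
    DifferentialHomology d →ₗ[ℤ] DifferentialHomology d' :=
  Submodule.mapQ _ _ (f.restrict fun c (hc : d c = 0) ↦ show d' (f c) = 0 by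
    rw [hf, hc, map_zero, smul_zero]) <| by
      rintro ⟨c, hc⟩ ⟨y, hy⟩
      refine ⟨ε • f y, ?_⟩
      rw [Units.smul_def, map_smul, ← Units.smul_def, hf, smul_smul, Int.units_mul_self, one_smul,
        hy]
      rfl

theorem homologyMap_homologyClass (f : M →ₗ[ℤ] N) (ε : ℤˣ) (hf : ∀ c, d' (f c) = ε • f (d c))
    (c : M) (hc : d c = 0) : homologyMap f ε hf (homologyClass c hc) =
      homologyClass (f c) (by rw [hf, hc, map_zero, smul_zero]) := rfl

end DifferentialModule

/-! ### Total homology and its cap products -/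

section TotalHomology

variable {X Y Z : Type*} [TopologicalSpace X] [TopologicalSpace Y] [TopologicalSpace Z]

/-- Unaugmented singular chains of mixed degree. -/
abbrev TotalChain (X : Type*) [TopologicalSpace X] : Type _ := ∀ k, Chain (k + 1) X

/-- The boundary operator of the unaugmented singular complex. -/
def totalBoundary : TotalChain X →ₗ[ℤ] TotalChain X :=
  LinearMap.pi fun k ↦ boundary ∘ₗ LinearMap.proj (k + 1)

/-- The product of the singular homology groups of all degrees. -/
abbrev TotalHomology (X : Type*) [TopologicalSpace X] : Type _ :=
  DifferentialHomology (totalBoundary (X := X))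

/-- The degreewise cap product with a cochain of degree one. -/
def totalCap (η : SingularSimplex 2 X → ℤ) : TotalChain X →ₗ[ℤ] TotalChain X :=
  LinearMap.pi fun k ↦ cap η ∘ₗ LinearMap.proj (k + 1)

/-- The degreewise map induced by a continuous map. -/
def totalPushforward (f : C(X, Y)) : TotalChain X →ₗ[ℤ] TotalChain Y :=
  LinearMap.pi fun k ↦ pushforward f ∘ₗ LinearMap.proj k

/-- The cocycles of degree one. -/
def IsCocycle (η : SingularSimplex 2 X → ℤ) : Prop := ∀ σ, coboundaryOne η σ = 0

theorem totalBoundary_totalCap {η : SingularSimplex 2 X → ℤ} (h : IsCocycle η) (c : TotalChain X) :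
    totalBoundary (totalCap η c) = (-1 : ℤˣ) • totalCap η (totalBoundary c) := by
  funext k
  have product_rule := boundary_cap_add_cap_boundary η (c (k + 2))
  rw [show coboundaryOne η = 0 from funext h] at product_rule
  rw [Units.neg_smul, one_smul]
  exact eq_neg_of_add_eq_zero_left (product_rule.trans (weightedReindex_zero ..))

theorem totalBoundary_totalPushforward (f : C(X, Y)) (c : TotalChain X) :
    totalBoundary (totalPushforward f c) = (1 : ℤˣ) • totalPushforward f (totalBoundary c) := by
  rw [one_smul]
  funext k
  exact (pushforward_boundary f _).symm

/-- The cap product on homology with a cocycle of degree one. -/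
def homologyCap (η : SingularSimplex 2 X → ℤ) (h : IsCocycle η) :
    TotalHomology X →ₗ[ℤ] TotalHomology X :=
  homologyMap (totalCap η) (-1) (totalBoundary_totalCap h)

/-- The map on homology induced by a continuous map. -/
def homologyPushforward (f : C(X, Y)) : TotalHomology X →ₗ[ℤ] TotalHomology Y :=
  homologyMap (totalPushforward f) 1 (totalBoundary_totalPushforward f)

theorem homologyPushforward_homologyCap (f : C(X, Y)) {η : SingularSimplex 2 Y → ℤ}
    (h : IsCocycle η) (h' : IsCocycle fun τ ↦ η (f.comp τ)) (x : TotalHomology X) :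
    homologyPushforward f (homologyCap _ h' x) = homologyCap η h (homologyPushforward f x) := by
  obtain ⟨c, hc, rfl⟩ := exists_homologyClass_eq x
  simp only [homologyPushforward, homologyCap, homologyMap_homologyClass]
  congr 1
  exact funext fun k ↦ pushforward_cap f η (c (k + 1))

/- The chain homotopy is the cap product with the pointwise product `α * β`, a cup-one product. -/
theorem homologyCap_homologyCap_eq_neg {α β : SingularSimplex 2 X → ℤ} (hα : IsCocycle α)
    (hβ : IsCocycle β) (x : TotalHomology X) :
    homologyCap β hβ (homologyCap α hα x) = -homologyCap α hα (homologyCap β hβ x) := by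
  obtain ⟨c, hc, rfl⟩ := exists_homologyClass_eq x
  rw [eq_neg_iff_add_eq_zero]
  refine (homologyClass_eq_zero_iff (c := totalCap β (totalCap α c) + totalCap α (totalCap β c))).2
    ⟨-totalCap (α * β) c, funext fun k ↦ ?_⟩
  have product_rule := boundary_cap_add_cap_boundary (α * β) (c (k + 2))
  rw [show boundary (c (k + 2)) = 0 from congrFun hc (k + 1), map_zero, add_zero] at product_rule
  rw [map_neg]
  change -boundary (cap (α * β) (c (k + 2))) =
    cap β (cap α (c (k + 2))) + cap α (cap β (c (k + 2)))
  rw [product_rule, cap_cap, cap_cap, capTwo, ← weightedReindex_neg, capTwo, capTwo,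
    ← weightedReindex_add]
  congr 2
  funext σ
  have hα' := hα (reindex ![0, 1, 2] σ)
  have hβ' := hβ (reindex ![0, 1, 2] σ)
  rw [coboundaryOne, sub_add_eq_add_sub, sub_eq_zero] at hα' hβ'
  simp only [coboundaryOne, Pi.neg_apply, Pi.add_apply, Pi.mul_apply, ← hα', ← hβ']
  ring

theorem homologyCap_eq_add {α β γ : SingularSimplex 2 X → ℤ} (hα : IsCocycle α) (hβ : IsCocycle β)
    (hγ : IsCocycle γ) (g : X → ℤ) (h : γ = α + β + coboundaryZero g) (x : TotalHomology X) :
    homologyCap γ hγ x = homologyCap α hα x + homologyCap β hβ x := by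
  obtain ⟨c, hc, rfl⟩ := exists_homologyClass_eq x
  refine homologyClass_eq_iff (c := totalCap γ c) (c' := totalCap α c + totalCap β c) |>.2
    ⟨fun k ↦ -capZero g (c k), funext fun k ↦ ?_⟩
  have cap_split : cap γ (c (k + 1)) =
      cap α (c (k + 1)) + cap β (c (k + 1)) + cap (coboundaryZero g) (c (k + 1)) := by
    rw [h]
    exact (weightedReindex_add ..).trans (congrArg (· + _) (weightedReindex_add ..))
  rw [cap_coboundaryZero, show boundary (c (k + 1)) = 0 from congrFun hc k, map_zero] at cap_split
  change boundary (-capZero g (c (k + 1))) =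
    cap γ (c (k + 1)) - (cap α (c (k + 1)) + cap β (c (k + 1)))
  rw [cap_split, map_neg]
  abel

/-- The augmentation of the empty simplices. -/
def emptyAugmentation : Chain 0 X →ₗ[ℤ] ℤ := Finsupp.linearCombination ℤ 1

theorem emptyAugmentation_injective : Function.Injective (emptyAugmentation (X := X)) := by
  have : Subsingleton (SingularSimplex 0 X) :=
    ⟨fun _ _ ↦ ContinuousMap.ext fun t ↦ by simpa using t.2.2⟩
  intro x y h
  have eval (z : Chain 0 X) (σ) : emptyAugmentation z = z σ :=
    apply_eq_of_single_eq (f := emptyAugmentation) (g := Finsupp.lapply σ) (fun τ ↦ by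
      rw [Subsingleton.elim τ σ]
      simp [emptyAugmentation]) z
  ext σ
  rw [← eval, ← eval, h]

theorem emptyAugmentation_pushforward (f : C(X, Y)) (x : Chain 0 X) :
    emptyAugmentation (pushforward f x) = emptyAugmentation x :=
  apply_eq_of_single_eq (f := emptyAugmentation ∘ₗ pushforward f) (g := emptyAugmentation)
    (fun σ ↦ by simp [emptyAugmentation]) x

/-- The augmentation of homology, which is the degree of the component in degree zero. -/
def augmentation : TotalHomology X →ₗ[ℤ] ℤ :=
  Submodule.liftQ _ (emptyAugmentation ∘ₗ boundary ∘ₗ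
    (LinearMap.proj 0 : TotalChain X →ₗ[ℤ] Chain 1 X) ∘ₗ
    (LinearMap.ker (totalBoundary (X := X))).subtype) <| by
      rintro ⟨c, hc⟩ ⟨y, rfl⟩
      exact congrArg emptyAugmentation (boundary_boundary (y 1))

theorem augmentation_homologyPushforward (f : C(X, Y)) (x : TotalHomology X) :
    augmentation (homologyPushforward f x) = augmentation x := by
  obtain ⟨c, hc, rfl⟩ := exists_homologyClass_eq x
  change emptyAugmentation (boundary (pushforward f (c 0))) = emptyAugmentation (boundary (c 0))
  rw [← pushforward_boundary, emptyAugmentation_pushforward]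

end TotalHomology

/-! ### Winding classes of nowhere vanishing functions -/

section Winding

open scoped Real

variable {X Y S : Type*} [TopologicalSpace X] [TopologicalSpace Y] [TopologicalSpace S] {k : ℕ}

instance : PreconnectedSpace (Simplex k) :=
  Subtype.preconnectedSpace (convex_stdSimplex ℝ (Fin k)).isPreconnected

instance : ContractibleSpace (Simplex (k + 1)) :=
  (convex_stdSimplex ℝ (Fin (k + 1))).contractibleSpace ⟨_, (vertex 0 : Simplex (k + 1)).2⟩

theorem eq_of_exp_comp_eq [PreconnectedSpace S] {F G : C(S, ℂ)} (h : ∀ t, exp (F t) = exp (G t))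
    (a : S) (ha : F a = G a) : F = G :=
  DFunLike.coe_injective <| isCoveringMap_exp.eq_of_comp_eq F.continuous G.continuous
    (funext fun t ↦ Subtype.ext (h t)) a ha

theorem exists_exp_comp_eq [ContractibleSpace S] (f : C(S, ℂˣ)) :
    ∃ F : C(S, ℂ), ∀ t, exp (F t) = f t := by
  obtain ⟨y, ⟨contraction⟩⟩ := id_nullhomotopic S
  let H := contraction.symm
  let f' : C(S, {z : ℂ // z ≠ 0}) :=
    ⟨fun t ↦ ⟨f t, (f t).ne_zero⟩, (Units.continuous_val.comp f.continuous).subtype_mk _⟩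
  have initial (a : S) : (f'.comp H.toContinuousMap) (0, a) =
      (fun z : ℂ ↦ (⟨_, z.exp_ne_zero⟩ : {z : ℂ // z ≠ 0}))
        (ContinuousMap.const S (log (f y)) a) := by
    have : H.toContinuousMap (0, a) = y := H.apply_zero a
    simp [f', this, exp_log (f y).ne_zero]
  have lifts := isCoveringMap_exp.liftHomotopy_lifts (f'.comp H.toContinuousMap) _ initial
  refine ⟨(isCoveringMap_exp.liftHomotopy _ _ initial).comp ⟨fun t ↦ (1, t), by fun_prop⟩,
    fun t ↦ (congrArg Subtype.val (congrFun lifts (1, t))).trans ?_⟩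
  have : H.toContinuousMap (1, t) = t := H.apply_one t
  simp [f', this]

theorem exists_exp_comp_eq_and_eq_log (f : C(Simplex (k + 1), ℂˣ)) :
    ∃ F : C(Simplex (k + 1), ℂ), (∀ t, exp (F t) = f t) ∧ F (vertex 0) = log (f (vertex 0)) := by
  obtain ⟨F, hF⟩ := exists_exp_comp_eq f
  obtain ⟨n, hn⟩ := exp_eq_exp_iff_exists_int.1
    ((exp_log (f (vertex 0)).ne_zero).trans (hF (vertex 0)).symm)
  refine ⟨F + ContinuousMap.const _ (n * (2 * π * I)), fun t ↦ ?_, hn.symm⟩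
  rw [ContinuousMap.add_apply, exp_add, hF, ContinuousMap.const_apply, exp_int_mul_two_pi_mul_I,
    mul_one]

/-- The logarithm of a simplex of nonzero numbers which is principal at the initial vertex. -/
def logLift (f : C(Simplex (k + 1), ℂˣ)) : C(Simplex (k + 1), ℂ) :=
  (exists_exp_comp_eq_and_eq_log f).choose

theorem exp_logLift (f : C(Simplex (k + 1), ℂˣ)) (t : Simplex (k + 1)) :
    exp (logLift f t) = f t :=
  (exists_exp_comp_eq_and_eq_log f).choose_spec.1 t

theorem logLift_vertex_zero (f : C(Simplex (k + 1), ℂˣ)) :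
    logLift f (vertex 0) = log (f (vertex 0)) :=
  (exists_exp_comp_eq_and_eq_log f).choose_spec.2

theorem exists_logLift_vertex_one_eq (u : C(X, ℂˣ)) (τ : SingularSimplex 2 X) :
    ∃ n : ℤ, logLift (u.comp τ) (vertex 1) = log (u (τ (vertex 1))) + n * (2 * π * I) :=
  exp_eq_exp_iff_exists_int.1 <|
    (exp_logLift _ _).trans (exp_log (u (τ (vertex 1))).ne_zero).symm

/-- The winding cocycle of a nowhere vanishing function: on a path, the number of turns by which
its continuous logarithm differs from the principal one. -/
def winding (u : C(X, ℂˣ)) (τ : SingularSimplex 2 X) : ℤ :=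
  (exists_logLift_vertex_one_eq u τ).choose

theorem winding_mul_two_pi_I (u : C(X, ℂˣ)) (τ : SingularSimplex 2 X) (F : C(Simplex 2, ℂ))
    (hF : ∀ t, exp (F t) = u (τ t)) : winding u τ * (2 * π * I) =
      F (vertex 1) - F (vertex 0) - (log (u (τ (vertex 1))) - log (u (τ (vertex 0)))) := by
  let G := logLift (u.comp τ)
  have shift : F = G + ContinuousMap.const _ (F (vertex 0) - G (vertex 0)) := by
    refine eq_of_exp_comp_eq (fun t ↦ ?_) (vertex 0) (by simp)
    rw [ContinuousMap.add_apply, exp_add, hF, exp_logLift, ContinuousMap.const_apply, exp_sub, hF,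
      exp_logLift]
    simp
  have at_end := DFunLike.congr_fun shift (vertex 1)
  rw [ContinuousMap.add_apply, ContinuousMap.const_apply, logLift_vertex_zero,
    (exists_logLift_vertex_one_eq u τ).choose_spec] at at_end
  rw [at_end, winding, ContinuousMap.comp_apply]
  ring

theorem winding_reindex_mul_two_pi_I (u : C(X, ℂˣ)) (σ : SingularSimplex k X) (F : C(Simplex k, ℂ))
    (hF : ∀ t, exp (F t) = u (σ t)) (f : Fin 2 → Fin k) :
    winding u (reindex f σ) * (2 * π * I) = F (vertex (f 1)) - F (vertex (f 0)) -
      (log (u (σ (vertex (f 1)))) - log (u (σ (vertex (f 0))))) := by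
  rw [winding_mul_two_pi_I u _ (F.comp (simplexMap f)) fun t ↦ hF _]
  simp only [reindex_apply_vertex, ContinuousMap.comp_apply, simplexMap_vertex]

theorem int_eq_of_mul_two_pi_I_eq {m n : ℤ} (h : (m : ℂ) * (2 * π * I) = n * (2 * π * I)) :
    m = n := by
  exact_mod_cast mul_right_cancel₀ two_pi_I_ne_zero h

theorem isCocycle_winding (u : C(X, ℂˣ)) : IsCocycle (winding u) := by
  intro σ
  apply int_eq_of_mul_two_pi_I_eq
  have lifts : ∀ t, exp (logLift (u.comp σ) t) = u (σ t) := exp_logLift _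
  rw [coboundaryOne]
  push_cast
  rw [add_mul, sub_mul]
  simp only [winding_reindex_mul_two_pi_I u σ _ lifts]
  simp only [show (Fin.succAbove 0 0 : Fin 3) = 1 from rfl,
    show (Fin.succAbove 0 1 : Fin 3) = 2 from rfl, show (Fin.succAbove 1 0 : Fin 3) = 0 from rfl,
    show (Fin.succAbove 1 1 : Fin 3) = 2 from rfl, show (Fin.succAbove 2 0 : Fin 3) = 0 from rfl,
    show (Fin.succAbove 2 1 : Fin 3) = 1 from rfl]
  ring

theorem exists_log_add_log_eq (a b : ℂˣ) :
    ∃ n : ℤ, log a + log b = log ((a * b : ℂˣ) : ℂ) + n * (2 * π * I) :=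
  exp_eq_exp_iff_exists_int.1 <| by
    rw [exp_add, exp_log a.ne_zero, exp_log b.ne_zero, exp_log (a * b).ne_zero, Units.val_mul]

/-- The number of turns by which the principal logarithm fails to be additive. -/
def logDefect (a b : ℂˣ) : ℤ := (exists_log_add_log_eq a b).choose

theorem logDefect_mul_two_pi_I (a b : ℂˣ) :
    (logDefect a b : ℂ) * (2 * π * I) = log a + log b - log ((a * b : ℂˣ) : ℂ) := by
  rw [(exists_log_add_log_eq a b).choose_spec, logDefect]
  ring

theorem winding_mul (u v : C(X, ℂˣ)) :
    winding (u * v) = winding u + winding v + coboundaryZero fun x ↦ logDefect (u x) (v x) := by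
  funext τ
  apply int_eq_of_mul_two_pi_I_eq
  let F := logLift (u.comp τ)
  let G := logLift (v.comp τ)
  have lifts_u : ∀ t, exp (F t) = u (τ t) := exp_logLift _
  have lifts_v : ∀ t, exp (G t) = v (τ t) := exp_logLift _
  have lifts_mul (t) : exp ((F + G) t) = (u * v) (τ t) := by
    rw [ContinuousMap.add_apply, exp_add, lifts_u, lifts_v, ContinuousMap.mul_apply, Units.val_mul]
  rw [winding_mul_two_pi_I _ _ _ lifts_mul, Pi.add_apply, Pi.add_apply, coboundaryZero]
  push_cast
  rw [add_mul, add_mul, sub_mul, winding_mul_two_pi_I _ _ _ lifts_u,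
    winding_mul_two_pi_I _ _ _ lifts_v, logDefect_mul_two_pi_I, logDefect_mul_two_pi_I]
  simp only [Pi.add_apply, Pi.mul_apply, Units.val_mul]
  ring

theorem winding_const (a : ℂˣ) : winding (ContinuousMap.const X a) = 0 := by
  funext τ
  apply int_eq_of_mul_two_pi_I_eq
  rw [winding_mul_two_pi_I (ContinuousMap.const X a) τ (ContinuousMap.const _ (log a)) fun _ ↦
    exp_log a.ne_zero]
  simp

/-- The cap product on homology with the winding class of a nowhere vanishing function. -/
def windingCap (u : C(X, ℂˣ)) : TotalHomology X →ₗ[ℤ] TotalHomology X :=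
  homologyCap (winding u) (isCocycle_winding u)

theorem windingCap_mul (u v : C(X, ℂˣ)) (x : TotalHomology X) :
    windingCap (u * v) x = windingCap u x + windingCap v x :=
  homologyCap_eq_add _ _ _ _ (winding_mul u v) x

theorem windingCap_one (x : TotalHomology X) : windingCap 1 x = 0 := by
  simpa using windingCap_mul 1 1 x

theorem windingCap_const (a : ℂˣ) (x : TotalHomology X) :
    windingCap (ContinuousMap.const X a) x = 0 := by
  obtain ⟨c, hc, rfl⟩ := exists_homologyClass_eq x
  refine homologyClass_eq_zero_iff.2 ⟨0, (map_zero _).trans (funext fun k ↦ Eq.symm ?_)⟩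
  change cap (winding (ContinuousMap.const X a)) (c (k + 1)) = 0
  rw [winding_const]
  exact weightedReindex_zero ..

theorem windingCap_inv (u : C(X, ℂˣ)) (x : TotalHomology X) :
    windingCap u⁻¹ x = -windingCap u x := by
  rw [eq_neg_iff_add_eq_zero, ← windingCap_mul, inv_mul_cancel, windingCap_one]

theorem windingCap_div (u v : C(X, ℂˣ)) (x : TotalHomology X) :
    windingCap (u / v) x = windingCap u x - windingCap v x := by
  rw [div_eq_mul_inv, windingCap_mul, windingCap_inv, sub_eq_add_neg]

theorem windingCap_windingCap_eq_neg (u v : C(X, ℂˣ)) (x : TotalHomology X) :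
    windingCap u (windingCap v x) = -windingCap v (windingCap u x) :=
  homologyCap_homologyCap_eq_neg _ _ x

theorem homologyPushforward_windingCap (f : C(X, Y)) (u : C(Y, ℂˣ)) (x : TotalHomology X) :
    homologyPushforward f (windingCap (u.comp f) x) = windingCap u (homologyPushforward f x) :=
  homologyPushforward_homologyCap f (isCocycle_winding u) (isCocycle_winding (u.comp f)) x

end Winding

/-! ### Deformation retracts -/

section Retract

variable {X Y : Type*} [TopologicalSpace X] [TopologicalSpace Y] {k : ℕ}

/-- The contraction of the singular complex of a point. -/
def pointContraction (k : ℕ) : Chain k Unit →ₗ[ℤ] Chain (k + 1) Unit :=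
  Finsupp.lmapDomain ℤ ℤ fun _ ↦ ContinuousMap.const _ ()

theorem pointContraction_single (σ : SingularSimplex k Unit) (τ : SingularSimplex (k + 1) Unit) :
    pointContraction k (Finsupp.single σ 1) = Finsupp.single τ 1 := by
  rw [pointContraction, Finsupp.lmapDomain_apply, Finsupp.mapDomain_single]
  exact congrArg (Finsupp.single · 1) (Subsingleton.elim _ _)

theorem boundary_pointContraction (x : Chain (k + 1) Unit) :
    boundary (pointContraction (k + 1) x) = x - pointContraction k (boundary x) := by
  refine apply_eq_of_single_eq (f := boundary ∘ₗ pointContraction (k + 1))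
    (g := LinearMap.id - pointContraction k ∘ₗ boundary) (fun σ ↦ ?_) x
  rw [LinearMap.comp_apply, pointContraction_single σ (ContinuousMap.const _ ()),
    boundary_single_eq_sub, LinearMap.sub_apply, LinearMap.comp_apply, boundary_single, map_sum]
  refine congrArg₂ (· - ·) (congrArg (Finsupp.single · 1) (Subsingleton.elim _ _))
    (Finset.sum_congr rfl fun i _ ↦ ?_)
  rw [map_smul, pointContraction_single _ (reindex i.succ.succAbove (ContinuousMap.const _ ()))]

theorem exists_boundary_eq_of_unit {c : Chain (k + 1) Unit} (hc : boundary c = 0) :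
    ∃ b, boundary b = c :=
  ⟨pointContraction (k + 1) c, by rw [boundary_pointContraction, hc, map_zero, sub_zero]⟩

theorem exists_boundary_eq_of_retract (f : C(X, Y)) (g : C(Y, X)) (H : C(X × unitInterval, X))
    (hzero : ∀ x, H (x, 0) = g (f x)) (hone : ∀ x, H (x, 1) = x) {c : Chain (k + 1) X}
    (hc : boundary c = 0) (hf : ∃ b, boundary b = pushforward f c) : ∃ b, boundary b = c := by
  obtain ⟨b, hb⟩ := hf
  refine ⟨prism H (k + 1) c + pushforward g b, ?_⟩
  rw [map_add, boundary_prism (f := g.comp f) (g := ContinuousMap.id X) hzero hone, hc, map_zero,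
    ← pushforward_boundary, hb, pushforward_pushforward, pushforward_id]
  abel

theorem exists_boundary_eq_of_contraction (x₀ : X) (H : C(X × unitInterval, X))
    (hzero : ∀ x, H (x, 0) = x₀) (hone : ∀ x, H (x, 1) = x) {c : Chain (k + 1) X}
    (hc : boundary c = 0) : ∃ b, boundary b = c :=
  exists_boundary_eq_of_retract (ContinuousMap.const X ()) (ContinuousMap.const Unit x₀) H hzero
    hone hc (exists_boundary_eq_of_unit (by rw [← pushforward_boundary, hc, map_zero]))

end Retract

/-! ### The Wang sequence of a bundle of punctured planes -/

section Wang

open scoped Real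

variable {E B : Type*} [TopologicalSpace E] [TopologicalSpace B] {k : ℕ}

/-- The translation of the second factor by `2πin`. -/
def deck (B : Type*) [TopologicalSpace B] (n : ℤ) : C(B × ℂ, B × ℂ) :=
  ⟨fun p ↦ (p.1, p.2 + n * (2 * π * I)), by fun_prop⟩

theorem fst_comp_deck (n : ℤ) : ContinuousMap.fst.comp (deck B n) = ContinuousMap.fst := rfl

theorem deck_comp_deck (m n : ℤ) : (deck B m).comp (deck B n) = deck B (n + m) := by
  ext p
  · rfl
  · simp [deck]
    ring

theorem deck_zero : deck B 0 = ContinuousMap.id _ := by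
  ext p
  · rfl
  · simp [deck]

theorem exists_pushforward_deck_sub_eq (x : Chain k (B × ℂ)) (n : ℤ) :
    ∃ e, pushforward (deck B 1) e - e = pushforward (deck B n) x - x ∧
      pushforward ContinuousMap.fst e = n • pushforward ContinuousMap.fst x := by
  induction n using Int.induction_on with
  | zero => exact ⟨0, by simp [deck_zero, pushforward_id], by simp⟩
  | succ n ih =>
    obtain ⟨e, he, he'⟩ := ih
    refine ⟨e + pushforward (deck B n) x, ?_, ?_⟩
    · rw [map_add, pushforward_pushforward, deck_comp_deck, add_sub_add_comm, he]
      abel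
    · rw [map_add, he', pushforward_pushforward, fst_comp_deck, add_smul, one_smul]
  | pred n ih =>
    obtain ⟨e, he, he'⟩ := ih
    refine ⟨e - pushforward (deck B (-n - 1)) x, ?_, ?_⟩
    · rw [map_sub, pushforward_pushforward, deck_comp_deck, sub_add_cancel, sub_sub_sub_comm, he]
      abel
    · rw [map_sub, he', pushforward_pushforward, fst_comp_deck, sub_smul, one_smul]

/- A simplex of the support whose initial vertex has maximal imaginary part would be translated to
one whose initial vertex has larger imaginary part. -/
theorem eq_zero_of_pushforward_deck_eq {x : Chain (k + 1) (B × ℂ)}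
    (h : pushforward (deck B 1) x = x) : x = 0 := by
  by_contra hx
  obtain ⟨σ, hσ, hmax⟩ := x.support.exists_max_image (fun σ ↦ (σ (vertex 0)).2.im)
    (Finsupp.support_nonempty_iff.2 hx)
  have injective : Function.Injective
      fun τ : SingularSimplex (k + 1) (B × ℂ) ↦ (deck B 1).comp τ := by
    intro τ τ' hτ
    ext t
    · simpa [deck] using congrArg Prod.fst (DFunLike.congr_fun hτ t)
    · simpa [deck] using congrArg Prod.snd (DFunLike.congr_fun hτ t)
  have translate_mem : (deck B 1).comp σ ∈ x.support := by
    rw [Finsupp.mem_support_iff, ← h]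
    exact (Finsupp.mapDomain_apply injective x σ).trans_ne (Finsupp.mem_support_iff.1 hσ)
  have := hmax _ translate_mem
  simp [deck] at this
  linarith [Real.pi_pos]

theorem exists_boundary_eq_of_fst {x : Chain (k + 1) (B × ℂ)} (hx : boundary x = 0)
    (h : ∃ b, boundary b = pushforward ContinuousMap.fst x) : ∃ b, boundary b = x :=
  exists_boundary_eq_of_retract ContinuousMap.fst ⟨fun b ↦ (b, 0), by fun_prop⟩
    ⟨fun q ↦ (q.1.1, ((q.2 : ℝ) : ℂ) * q.1.2), by fun_prop⟩ (by simp) (by simp) hx h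

theorem eq_zero_of_pushforward_eq_zero {X Y : Type*} [TopologicalSpace X] [TopologicalSpace Y]
    {f : C(X, Y)} {x : Chain 0 X} (h : pushforward f x = 0) : x = 0 :=
  emptyAugmentation_injective <| by rw [← emptyAugmentation_pushforward f, h, map_zero, map_zero]

variable (p : C(E, B)) (u : C(E, ℂˣ))

/-- The pair of the projection of a simplex and of its logarithm. -/
def logSimplex (σ : SingularSimplex (k + 1) E) : SingularSimplex (k + 1) (B × ℂ) :=
  (p.comp σ).prodMk (logLift (u.comp σ))

theorem logSimplex_reindex_succAbove (i : Fin (k + 1)) (σ : SingularSimplex (k + 2) E) :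
    logSimplex p u (reindex i.succ.succAbove σ) = reindex i.succ.succAbove (logSimplex p u σ) := by
  have : logLift (u.comp (reindex i.succ.succAbove σ)) =
      (logLift (u.comp σ)).comp (simplexMap i.succ.succAbove) := by
    refine eq_of_exp_comp_eq (fun t ↦ ?_) (vertex 0) ?_
    · rw [exp_logLift, ContinuousMap.comp_apply, ContinuousMap.comp_apply, exp_logLift]
      rfl
    · simp [logLift_vertex_zero, simplexMap_vertex, reindex_apply_vertex]
  rw [logSimplex, this]
  rfl

theorem reindex_succ_logSimplex (σ : SingularSimplex (k + 2) E) :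
    reindex Fin.succ (logSimplex p u σ) =
      (deck B (winding u (reindex ![0, 1] σ))).comp (logSimplex p u (reindex Fin.succ σ)) := by
  have lifts : ∀ t, exp (logLift (u.comp σ) t) = u (σ t) := exp_logLift _
  have : (logLift (u.comp σ)).comp (simplexMap Fin.succ) = logLift (u.comp (reindex Fin.succ σ)) +
      ContinuousMap.const _ (winding u (reindex ![0, 1] σ) * (2 * π * I)) := by
    refine eq_of_exp_comp_eq (fun t ↦ ?_) (vertex 0) ?_
    · rw [ContinuousMap.add_apply, exp_add, exp_logLift, ContinuousMap.const_apply,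
        exp_int_mul_two_pi_mul_I, ContinuousMap.comp_apply, lifts, mul_one]
      rfl
    · rw [winding_reindex_mul_two_pi_I u σ _ lifts, ContinuousMap.add_apply,
        ContinuousMap.const_apply, ContinuousMap.comp_apply, simplexMap_vertex,
        logLift_vertex_zero, Matrix.cons_val_zero, Matrix.cons_val_one, logLift_vertex_zero,
        ContinuousMap.comp_apply, ContinuousMap.comp_apply, reindex_apply_vertex]
      simp
  ext t
  · rfl
  · exact DFunLike.congr_fun this t

/-- The push-forward of singular simplices to the product with the universal covering of the
punctured plane, which commutes with all faces except the one opposite to the initial vertex. -/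
def logChain : Chain (k + 1) E →ₗ[ℤ] Chain (k + 1) (B × ℂ) :=
  Finsupp.lmapDomain ℤ ℤ (logSimplex p u)

@[simp] theorem logChain_single (σ : SingularSimplex (k + 1) E) :
    logChain p u (Finsupp.single σ 1) = Finsupp.single (logSimplex p u σ) 1 :=
  Finsupp.mapDomain_single

/-- A lift along `deck B 1 - 1` of the defect of `logChain` to commute with the boundary. -/
def logDefectChain : Chain (k + 2) E →ₗ[ℤ] Chain (k + 1) (B × ℂ) :=
  Finsupp.linearCombination ℤ fun σ ↦ (exists_pushforward_deck_sub_eq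
    (Finsupp.single (logSimplex p u (reindex Fin.succ σ)) 1) (winding u (reindex ![0, 1] σ))).choose

theorem logDefectChain_single_spec (σ : SingularSimplex (k + 2) E) :
    let e := logDefectChain p u (Finsupp.single σ 1)
    let x := Finsupp.single (logSimplex p u (reindex Fin.succ σ)) 1
    let n := winding u (reindex ![0, 1] σ)
    pushforward (deck B 1) e - e = pushforward (deck B n) x - x ∧
      pushforward ContinuousMap.fst e = n • pushforward ContinuousMap.fst x := by
  simp only [logDefectChain, Finsupp.linearCombination_single, one_smul]
  exact (exists_pushforward_deck_sub_eq _ _).choose_spec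

theorem boundary_logChain (x : Chain (k + 2) E) : boundary (logChain p u x) =
    logChain p u (boundary x) +
      (pushforward (deck B 1) (logDefectChain p u x) - logDefectChain p u x) := by
  refine apply_eq_of_single_eq (f := boundary ∘ₗ logChain p u) (g := logChain p u ∘ₗ boundary +
    (pushforward (deck B 1) ∘ₗ logDefectChain p u - logDefectChain p u)) (fun σ ↦ ?_) x
  simp only [LinearMap.comp_apply, LinearMap.add_apply, LinearMap.sub_apply, logChain_single]
  rw [(logDefectChain_single_spec p u σ).1, boundary_single_eq_sub, boundary_single_eq_sub, map_sub,
    map_sum, logChain_single, reindex_succ_logSimplex, pushforward_single]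
  simp only [map_smul, logChain_single, logSimplex_reindex_succAbove]
  abel

theorem pushforward_fst_logChain (x : Chain (k + 1) E) :
    pushforward ContinuousMap.fst (logChain p u x) = pushforward p x :=
  apply_eq_of_single_eq (f := pushforward ContinuousMap.fst ∘ₗ logChain p u) (g := pushforward p)
    (fun σ ↦ by
      rw [LinearMap.comp_apply, logChain_single, pushforward_single, pushforward_single]
      rfl) x

theorem pushforward_fst_logDefectChain (x : Chain (k + 2) E) :
    pushforward ContinuousMap.fst (logDefectChain p u x) = pushforward p (cap (winding u) x) := by
  refine apply_eq_of_single_eq (f := pushforward ContinuousMap.fst ∘ₗ logDefectChain p u)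
    (g := pushforward p ∘ₗ cap (winding u)) (fun σ ↦ ?_) x
  rw [LinearMap.comp_apply, (logDefectChain_single_spec p u σ).2, LinearMap.comp_apply, cap_single,
    map_smul, pushforward_single, pushforward_single]
  rfl

variable {p u} {q : C(B × ℂ, E)}

theorem pushforward_logChain (hq : ∀ x y, exp y = u x → q (p x, y) = x)
    (x : Chain (k + 1) E) : pushforward q (logChain p u x) = x := by
  refine apply_eq_of_single_eq (f := pushforward q ∘ₗ logChain p u) (g := LinearMap.id)
    (fun σ ↦ ?_) x
  rw [LinearMap.comp_apply, logChain_single, pushforward_single, LinearMap.id_apply]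
  congr 1
  ext t
  exact hq _ _ (exp_logLift (u.comp σ) t)

theorem exists_boundary_eq_of_pushforward_of_degree_zero (hq : ∀ x y, exp y = u x → q (p x, y) = x)
    {c : Chain 1 E} (hc : boundary c = 0)
    (hp : ∃ b, boundary b = pushforward p c) : ∃ b, boundary b = c := by
  have cycle : boundary (logChain p u c) = 0 :=
    eq_zero_of_pushforward_eq_zero (f := ContinuousMap.fst) <| by
      rw [pushforward_boundary, pushforward_fst_logChain, ← pushforward_boundary, hc, map_zero]
  obtain ⟨b, hb⟩ := exists_boundary_eq_of_fst cycle (by rwa [pushforward_fst_logChain])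
  exact ⟨pushforward q b, by rw [← pushforward_boundary, hb, pushforward_logChain hq]⟩

theorem exists_boundary_eq_of_pushforward_of_pushforward_cap
    (hq : ∀ x y, exp y = u x → q (p x, y) = x)
    (hq' : ∀ b y, q (b, y + 2 * π * I) = q (b, y)) {c : Chain (k + 2) E} (hc : boundary c = 0)
    (hp : ∃ b, boundary b = pushforward p c)
    (hcap : ∃ b, boundary b = pushforward p (cap (winding u) c)) : ∃ b, boundary b = c := by
  have defect := boundary_logChain p u c
  rw [hc, map_zero, zero_add] at defect
  have defect_cycle : boundary (logDefectChain p u c) = 0 := by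
    cases k with
    | zero =>
      obtain ⟨b, hb⟩ := hcap
      apply eq_zero_of_pushforward_eq_zero (f := ContinuousMap.fst)
      rw [pushforward_boundary, pushforward_fst_logDefectChain, ← hb, boundary_boundary]
    | succ k =>
      apply eq_zero_of_pushforward_deck_eq
      rw [pushforward_boundary, ← sub_eq_zero, ← map_sub, ← defect, boundary_boundary]
  obtain ⟨f, hf⟩ := exists_boundary_eq_of_fst defect_cycle
    (by rwa [pushforward_fst_logDefectChain])
  have invariant : q.comp (deck B 1) = q := by
    ext x
    simpa [deck] using hq' x.1 x.2
  obtain ⟨b, hb⟩ := exists_boundary_eq_of_fst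
    (x := logChain p u c - (pushforward (deck B 1) f - f))
    (by rw [map_sub, map_sub, ← pushforward_boundary, hf, defect, sub_self])
    (by rwa [map_sub, map_sub, pushforward_pushforward, fst_comp_deck, sub_self, sub_zero,
      pushforward_fst_logChain])
  refine ⟨pushforward q b, ?_⟩
  rw [← pushforward_boundary, hb, map_sub, map_sub, pushforward_pushforward, invariant, sub_self,
    sub_zero, pushforward_logChain hq]

end Wang

/-! ### Functionals on Arnold's algebra -/

section Forests

variable {α β : Type*}

/-- The list of edges of the path through a list of vertices. -/
def pathEdges (l : List α) : List (α × α) := l.zip l.tail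

theorem pathEdges_cons_cons (a b : α) (l : List α) :
    pathEdges (a :: b :: l) = (a, b) :: pathEdges (b :: l) := rfl

theorem pathEdges_append_cons (l : List α) (a : α) (m : List α) :
    pathEdges (l ++ a :: m) = pathEdges (l ++ [a]) ++ pathEdges (a :: m) := by
  induction l with
  | nil => rfl
  | cons x l ih => cases l <;> simp_all [pathEdges]

theorem length_pathEdges (l : List α) : (pathEdges l).length = l.length - 1 := by
  simp [pathEdges]

theorem map_pathEdges (f : α → β) (l : List α) :
    (pathEdges l).map (Prod.map f f) = pathEdges (l.map f) := by
  rw [pathEdges, pathEdges, ← List.map_tail, List.zip_map]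

/-- The edges of the disjoint union of the paths through the members of a list of lists. -/
def forestEdges (P : List (List α)) : List (α × α) := P.flatMap pathEdges

theorem forestEdges_cons (p : List α) (P : List (List α)) :
    forestEdges (p :: P) = pathEdges p ++ forestEdges P := List.flatMap_cons

theorem forestEdges_perm {P Q : List (List α)} (h : P.Perm Q) :
    (forestEdges P).Perm (forestEdges Q) := h.flatMap_right pathEdges

theorem map_forestEdges (f : α → β) (P : List (List α)) :
    (forestEdges P).map (Prod.map f f) = forestEdges (P.map (List.map f)) := by
  simp only [forestEdges, List.map_flatMap, List.flatMap_map, map_pathEdges]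

theorem map_forestEdges_eq_self {f : α → α} {P : List (List α)} (h : ∀ x ∈ P.flatten, f x = x) :
    (forestEdges P).map (Prod.map f f) = forestEdges P := by
  rw [map_forestEdges]
  conv_rhs => rw [← List.map_id P]
  refine congrArg forestEdges (List.map_congr_left fun p hp ↦ ?_)
  rw [List.map_congr_left (g := id) fun x hx ↦ h x (List.mem_flatten.2 ⟨p, hp, hx⟩), List.map_id,
    id]

theorem fst_ne_snd_of_mem_pathEdges {l : List α} (hl : l.Nodup) :
    ∀ e ∈ pathEdges l, e.1 ≠ e.2 := by
  intro e he
  obtain ⟨i, hi, rfl⟩ := List.mem_iff_getElem.1 he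
  simp only [pathEdges, List.length_zip, List.length_tail] at hi
  simp [pathEdges, hl.getElem_inj_iff]

theorem fst_ne_snd_of_mem_forestEdges {P : List (List α)} (hP : P.flatten.Nodup) :
    ∀ e ∈ forestEdges P, e.1 ≠ e.2 := by
  intro e he
  obtain ⟨p, hp, he⟩ := List.mem_flatMap.1 he
  exact fst_ne_snd_of_mem_pathEdges ((List.nodup_flatten.1 hP).1 p hp) e he

theorem exists_perm_map_eq_and_fixes {l l' m : List α} (hl : (l ++ m).Nodup)
    (hl' : (l' ++ m).Nodup) (h : l.length = l'.length) :
    ∃ σ : Equiv.Perm α, l.map σ = l' ∧ ∀ x ∈ m, σ x = x := by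
  have length_eq : (l ++ m).length = (l' ++ m).length := by simp [h]
  obtain ⟨σ, hσ⟩ := Equiv.Perm.exists_extending_pair (l ++ m).get
    ((l' ++ m).get ∘ Fin.cast length_eq) hl.injective_get
    (hl'.injective_get.comp (Fin.cast_injective _))
  have map_eq : (l ++ m).map σ = l' ++ m := by
    refine List.ext_getElem (by simpa using h) fun i hi _ ↦ ?_
    rw [List.getElem_map]
    exact hσ ⟨i, by simpa using hi⟩
  rw [List.map_append] at map_eq
  obtain ⟨hl, hm⟩ := List.append_inj map_eq (by simpa using h)
  exact ⟨σ, hl, List.map_inj_left.1 (hm.trans (List.map_id m).symm)⟩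

theorem exists_perm_edge_cons {P : List (List α)} (h_length : ∀ p ∈ P, p.length < 3)
    (hP : forestEdges P ≠ []) : ∃ a b P', P.Perm ([a, b] :: P') := by
  obtain ⟨p, hp, hne⟩ : ∃ p ∈ P, pathEdges p ≠ [] := by
    simpa [forestEdges, List.flatMap_eq_nil_iff] using hP
  obtain ⟨P₁, P₂, rfl⟩ := List.append_of_mem hp
  match p, hne, h_length p hp with
  | [a, b], _, _ => exact ⟨a, b, P₁ ++ P₂, List.perm_middle⟩
  | [], hne, _ => exact absurd rfl hne
  | [_], hne, _ => exact absurd rfl hne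

/-- The relations of Arnold's presentation of the cohomology of ordered configuration spaces, for
the values of a functional on the products of the degree one classes attached to pairs of points. -/
structure ArnoldRelations (V : List (α × α) → ℤ) : Prop where
  swap : ∀ l a b l', V (l ++ a :: b :: l') = -V (l ++ b :: a :: l')
  symm : ∀ l a b l', V (l ++ (a, b) :: l') = V (l ++ (b, a) :: l')
  arnold : ∀ a b c l, a ≠ b → b ≠ c → a ≠ c →
    V ((a, b) :: (b, c) :: l) + V ((b, c) :: (c, a) :: l) + V ((c, a) :: (a, b) :: l) = 0

namespace ArnoldRelations

variable {V : List (α × α) → ℤ}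

theorem map_append_cons (h : ArnoldRelations V) (l₀ l : List (α × α)) (a : α × α)
    (l' : List (α × α)) :
    V (l₀ ++ (l ++ a :: l')) = (-1) ^ l.length * V (l₀ ++ a :: (l ++ l')) := by
  induction l generalizing l₀ with
  | nil => simp
  | cons x l ih =>
    have := ih (l₀ ++ [x])
    simp only [List.append_assoc, List.cons_append, List.nil_append] at this ⊢
    rw [this, h.swap l₀ x a]
    simp [pow_succ]

theorem eq_zero_of_perm (h : ArnoldRelations V) {l l' : List (α × α)} (hl : l.Perm l')
    (h' : V l' = 0) : V l = 0 := by
  suffices ∀ l₀, V (l₀ ++ l) = V (l₀ ++ l') ∨ V (l₀ ++ l) = -V (l₀ ++ l') by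
    rcases this [] with this | this <;> simpa [h'] using this
  clear h'
  induction hl with
  | nil => exact fun _ ↦ .inl rfl
  | cons x _ ih => exact fun l₀ ↦ by simpa using ih (l₀ ++ [x])
  | swap x y l => exact fun l₀ ↦ .inr (h.swap l₀ y x l)
  | trans _ _ ih ih' =>
    intro l₀
    rcases ih l₀ with e | e <;> rcases ih' l₀ with e' | e' <;> rw [e, e'] <;> simp

theorem arnold_sub (h : ArnoldRelations V) {a b x : α} (hab : a ≠ b) (hbx : b ≠ x) (hax : a ≠ x)
    (l : List (α × α)) :
    V ((a, x) :: (a, b) :: l) - V ((b, x) :: (a, b) :: l) = V ((a, x) :: (x, b) :: l) := by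
  have relation := h.arnold a b x l hab hbx hax
  have e₁ := h.swap [] (b, x) (a, b) l
  have e₂ := h.symm [] x a ((a, b) :: l)
  have e₃ := h.swap [] (b, x) (x, a) l
  have e₄ := h.symm [] x a ((b, x) :: l)
  have e₅ := h.symm [(a, x)] b x l
  simp only [List.cons_append, List.nil_append] at e₁ e₂ e₃ e₄ e₅
  linarith

/- Moving an edge along a path, from one vertex to the next, inserts its other end in the path. -/
theorem map_edge_cons_path (h : ArnoldRelations V) {a b x : α} {l l' : List α}
    (hn : (x :: (l ++ b :: a :: l')).Nodup) (l₀ l₁ : List (α × α)) :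
    V ((a, x) :: (l₀ ++ (pathEdges (l ++ b :: a :: l') ++ l₁))) =
      V ((b, x) :: (l₀ ++ (pathEdges (l ++ b :: a :: l') ++ l₁))) -
        (-1) ^ (l₀.length + l.length) * V (l₀ ++ (pathEdges (l ++ b :: x :: a :: l') ++ l₁)) := by
  obtain ⟨hab, hbx, hax⟩ : a ≠ b ∧ b ≠ x ∧ a ≠ x := by grind
  set u := l₀ ++ pathEdges (l ++ [b]) with hu
  set w := pathEdges (a :: l') ++ l₁ with hw
  have split : l₀ ++ (pathEdges (l ++ b :: a :: l') ++ l₁) = u ++ (b, a) :: w := by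
    rw [pathEdges_append_cons, pathEdges_cons_cons, hu, hw]
    simp only [List.append_assoc, List.cons_append]
  have split' : l₀ ++ (pathEdges (l ++ b :: x :: a :: l') ++ l₁) = u ++ (b, x) :: (x, a) :: w := by
    rw [pathEdges_append_cons, pathEdges_cons_cons, pathEdges_cons_cons, hu, hw]
    simp only [List.append_assoc, List.cons_append]
  have length_u : u.length = l₀.length + l.length := by simp [hu, length_pathEdges]
  have move (y : α) (e : α × α) : V ((y, x) :: (u ++ e :: w)) =
      (-1) ^ u.length * V ((y, x) :: e :: (u ++ w)) := h.map_append_cons [(y, x)] u e w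
  have move' := h.map_append_cons [] u (b, x) ((x, a) :: w)
  have sign : ((-1 : ℤ) ^ u.length) * (-1) ^ u.length = 1 := by rw [← mul_pow]; simp
  simp only [List.nil_append] at move'
  rw [split, split', ← length_u, move, move, move', move, ← h.arnold_sub hab.symm hax hbx]
  linear_combination ((-1) ^ u.length * (V ((b, x) :: (b, a) :: (u ++ w)) -
    V ((a, x) :: (b, a) :: (u ++ w)))) * sign

/- The value does not change when an edge moves twice along the path, by the alternation of the
signs. -/
theorem map_leaf_cons_path (h : ArnoldRelations V) {v : ℤ} {x : α} {l₁ : List (α × α)}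
    {l : List α} :
    ∀ {a l'}, (x :: (l ++ a :: l')).Nodup →
      (∀ p : List α, p.Perm (x :: (l ++ a :: l')) → V (pathEdges p ++ l₁) = v) →
      V ((a, x) :: (pathEdges (l ++ a :: l') ++ l₁)) = if Even l.length then v else 0 := by
  induction l using List.reverseRecOn with
  | nil =>
    intro a l' _ hv
    rw [← List.nil_append ((a, x) :: _), h.symm]
    simpa [pathEdges_cons_cons] using hv _ (.refl _)
  | append_singleton l b ih =>
    intro a l' hn hv
    simp only [List.append_assoc, List.singleton_append] at hn hv ⊢
    have step := h.map_edge_cons_path hn [] l₁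
    simp only [List.nil_append] at step
    rw [step, ih hn hv, hv (l ++ b :: x :: a :: l') (by
      simpa using List.perm_middle (l₁ := l ++ [b]) (l₂ := a :: l'))]
    rcases Nat.even_or_odd l.length with even | odd
    · simp [even, Nat.even_add_one]
    · simp [odd, odd.neg_one_pow]

theorem map_arm_cons_path (h : ArnoldRelations V) {v : ℤ} {x y : α} {l₁ : List (α × α)}
    {l : List α} :
    ∀ {a l'}, (y :: x :: (l ++ a :: l')).Nodup →
      (∀ p : List α, p.Perm (y :: x :: (l ++ a :: l')) → V (pathEdges p ++ l₁) = v) →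
      V ((a, x) :: (x, y) :: (pathEdges (l ++ a :: l') ++ l₁)) = -((l.length / 2 : ℕ) + 1) * v := by
  induction l using List.reverseRecOn with
  | nil =>
    intro a l' _ hv
    have path := hv _ (.refl _)
    have e₁ := h.swap [] (a, x) (x, y) (pathEdges (a :: l') ++ l₁)
    have e₂ := h.symm [] x y ((a, x) :: (pathEdges (a :: l') ++ l₁))
    have e₃ := h.symm [(y, x)] a x (pathEdges (a :: l') ++ l₁)
    simp only [List.nil_append, List.cons_append, pathEdges_cons_cons] at path e₁ e₂ e₃ ⊢
    rw [e₁, e₂, e₃, path]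
    simp
  | append_singleton l b ih =>
    intro a l' hn hv
    simp only [List.append_assoc, List.singleton_append] at hn hv ⊢
    have insert_perm : (l ++ b :: x :: a :: l').Perm (x :: (l ++ b :: a :: l')) := by
      simpa using List.perm_middle (l₁ := l ++ [b]) (l₂ := a :: l')
    have step := h.map_edge_cons_path hn.of_cons [(x, y)] l₁
    have leaf := h.map_leaf_cons_path (v := v) (x := y) (l₁ := l₁) (l := l ++ [b]) (a := x)
      (l' := a :: l') (by simpa using ((insert_perm.cons y).nodup_iff.2 hn))
      fun p hp ↦ hv p (hp.trans (by simpa using insert_perm.cons y))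
    simp only [List.append_assoc, List.singleton_append, List.length_append,
      List.length_singleton] at step leaf ⊢
    rw [step, ih hn hv, leaf]
    rcases Nat.even_or_odd' l.length with ⟨t, even | odd⟩
    · have : (2 * t + 1) / 2 = t := by lia
      simp [even, this]
    · have halves : (2 * t + 1 + 1) / 2 = t + 1 ∧ (2 * t + 1) / 2 = t := by lia
      have : Even (2 * t + 1 + 1) := ⟨t + 1, by ring⟩
      have : (-1 : ℤ) ^ (1 + (2 * t + 1)) = 1 := Even.neg_one_pow ⟨t + 1, by ring⟩
      simp only [*, if_true]
      push_cast
      ring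

theorem eq_zero_of_forall_path_of_odd (h : ArnoldRelations V) {v : ℤ} {l₁ : List (α × α)}
    {p : List α} (hp : p.Nodup) (h_length : 2 ≤ p.length) (h_odd : Odd p.length)
    (hv : ∀ p' : List α, p'.Perm p → V (pathEdges p' ++ l₁) = v) : v = 0 := by
  obtain ⟨x, l, a, rfl⟩ : ∃ x l a, p = x :: (l ++ [a]) := by
    rcases p with _ | ⟨x, _ | ⟨y, q⟩⟩ <;> simp at h_length
    obtain ⟨l, a, h⟩ := (y :: q).eq_nil_or_concat.resolve_left (by simp)
    exact ⟨x, l, a, by rw [h, List.concat_eq_append]⟩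
  have not_even : ¬Even l.length := by grind
  have leaf := h.map_leaf_cons_path hp hv
  have path := hv (l ++ [a, x]) (by simpa using List.perm_append_comm (l₁ := l ++ [a]) (l₂ := [x]))
  have move := h.map_append_cons [] (pathEdges (l ++ [a])) (a, x) l₁
  rw [if_neg not_even] at leaf
  rw [pathEdges_append_cons, List.append_assoc] at path
  exact path.symm.trans (move.trans (by rw [List.nil_append, leaf, mul_zero]))

theorem eq_zero_of_forall_path_of_even (h : ArnoldRelations V) {v : ℤ} {l₁ : List (α × α)}
    {p : List α} (hp : p.Nodup) (h_length : 3 ≤ p.length) (h_even : Even p.length)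
    (hv : ∀ p' : List α, p'.Perm p → V (pathEdges p' ++ l₁) = v) : v = 0 := by
  obtain ⟨y, x, l, a, rfl⟩ : ∃ y x l a, p = y :: x :: (l ++ [a]) := by
    rcases p with _ | ⟨y, _ | ⟨x, _ | ⟨z, q⟩⟩⟩ <;> simp at h_length
    obtain ⟨l, a, h⟩ := (z :: q).eq_nil_or_concat.resolve_left (by simp)
    exact ⟨y, x, l, a, by rw [h, List.concat_eq_append]⟩
  have arm := h.map_arm_cons_path hp hv
  have path := hv (l ++ [a, x, y]) (by
    simpa using (List.perm_append_comm (l₁ := l ++ [a]) (l₂ := [x, y])).trans (.swap ..))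
  have move := h.map_append_cons [] (pathEdges (l ++ [a])) (a, x) ((x, y) :: l₁)
  have move' := h.map_append_cons [(a, x)] (pathEdges (l ++ [a])) (x, y) l₁
  have sign : ((-1 : ℤ) ^ l.length) * (-1) ^ l.length = 1 := by rw [← mul_pow]; simp
  rw [pathEdges_append_cons, List.append_assoc] at path
  simp only [List.cons_append, List.nil_append] at move move'
  have value : V (pathEdges (l ++ [a]) ++ (a, x) :: (x, y) :: l₁) = v := path
  have : (((l.length / 2 : ℕ) : ℤ) + 2) * v = 0 := by
    rw [move, move', arm, length_pathEdges, List.length_append, List.length_singleton,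
      Nat.add_sub_cancel, ← mul_assoc, sign] at value
    linear_combination -value
  exact (mul_eq_zero.1 this).resolve_left (by lia)

theorem map_path_append_forestEdges_eq_zero (h : ArnoldRelations V)
    (h_perm : ∀ (σ : Equiv.Perm α) (l : List (α × α)), (∀ e ∈ l, e.1 ≠ e.2) →
      V (l.map (Prod.map σ σ)) = V l)
    {p : List α} {P : List (List α)} (hn : (p ++ P.flatten).Nodup) (hp : 3 ≤ p.length) :
    V (pathEdges p ++ forestEdges P) = 0 := by
  have value (p' : List α) (hp' : p'.Perm p) :
      V (pathEdges p' ++ forestEdges P) = V (pathEdges p ++ forestEdges P) := by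
    obtain ⟨σ, rfl, fixes⟩ := exists_perm_map_eq_and_fixes hn
      ((hp'.symm.append_right _).nodup_iff.1 hn) hp'.symm.length_eq
    rw [← h_perm σ (pathEdges p ++ forestEdges P)
      (fst_ne_snd_of_mem_forestEdges (P := p :: P) hn), List.map_append, map_pathEdges,
      map_forestEdges_eq_self fixes]
  rcases Nat.even_or_odd p.length with h_even | h_odd
  · exact h.eq_zero_of_forall_path_of_even hn.of_append_left hp h_even value
  · exact h.eq_zero_of_forall_path_of_odd hn.of_append_left (by lia) h_odd value

theorem map_edge_edge_forestEdges_eq_zero (h : ArnoldRelations V)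
    (h_perm : ∀ (σ : Equiv.Perm α) (l : List (α × α)), (∀ e ∈ l, e.1 ≠ e.2) →
      V (l.map (Prod.map σ σ)) = V l)
    {a b c d : α} {P : List (List α)} (hn : ([a, b, c, d] ++ P.flatten).Nodup) :
    V ((a, b) :: (c, d) :: forestEdges P) = 0 := by
  obtain ⟨σ, hσ, fixes⟩ := exists_perm_map_eq_and_fixes (l' := [c, d, a, b]) hn
    (by grind) rfl
  simp only [List.map_cons, List.map_nil, List.cons.injEq, and_true] at hσ
  have invariant := h_perm σ ((a, b) :: (c, d) :: forestEdges P)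
    (fst_ne_snd_of_mem_forestEdges (P := [a, b] :: [c, d] :: P) hn)
  simp only [List.map_cons, Prod.map_apply, hσ, map_forestEdges_eq_self fixes] at invariant
  have := h.swap [] (a, b) (c, d) (forestEdges P)
  simp only [List.nil_append] at this
  lia

theorem map_forestEdges_eq_zero (h : ArnoldRelations V)
    (h_perm : ∀ (σ : Equiv.Perm α) (l : List (α × α)), (∀ e ∈ l, e.1 ≠ e.2) →
      V (l.map (Prod.map σ σ)) = V l)
    {P : List (List α)} (hP : P.flatten.Nodup) (h_length : 2 ≤ (forestEdges P).length) :
    V (forestEdges P) = 0 := by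
  by_cases! long : ∃ p ∈ P, 3 ≤ p.length
  · obtain ⟨p, hp, hp'⟩ := long
    obtain ⟨P₁, P₂, rfl⟩ := List.append_of_mem hp
    have perm : (P₁ ++ p :: P₂).Perm (p :: (P₁ ++ P₂)) := List.perm_middle
    exact h.eq_zero_of_perm (forestEdges_perm perm) <|
      h.map_path_append_forestEdges_eq_zero h_perm (perm.flatten.nodup_iff.1 hP) hp'
  · obtain ⟨a, b, P₁, perm⟩ := exists_perm_edge_cons long (by grind)
    have := (forestEdges_perm perm).length_eq
    obtain ⟨c, d, P₂, perm'⟩ := exists_perm_edge_cons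
      (fun p hp ↦ long p (perm.mem_iff.2 (.tail _ hp))) (P := P₁)
      (by rintro h; simp [forestEdges_cons, pathEdges, h] at this; lia)
    have perm'' := perm.trans (perm'.cons _)
    exact h.eq_zero_of_perm (forestEdges_perm perm'') <|
      h.map_edge_edge_forestEdges_eq_zero h_perm (perm''.flatten.nodup_iff.1 hP)

theorem map_edge_cons_forestEdges_eq_zero (h : ArnoldRelations V) {x a : α} (hxa : x ≠ a)
    {P : List (List α)} (hP : P.flatten.Nodup) (hx : x ∉ P.flatten)
    (hV : ∀ P' : List (List α), P'.flatten.Nodup →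
      (forestEdges P').length = (forestEdges P).length + 1 → V (forestEdges P') = 0) :
    V ((x, a) :: forestEdges P) = 0 := by
  by_cases ha : a ∈ P.flatten
  · obtain ⟨p, hp, hap⟩ := List.mem_flatten.1 ha
    obtain ⟨P₁, P₂, rfl⟩ := List.append_of_mem hp
    obtain ⟨l, l', rfl⟩ := List.append_of_mem hap
    have perm : (P₁ ++ (l ++ a :: l') :: P₂).Perm ((l ++ a :: l') :: (P₁ ++ P₂)) :=
      List.perm_middle
    have nodup : (x :: ((l ++ a :: l') ++ (P₁ ++ P₂).flatten)).Nodup :=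
      ((perm.flatten.cons x).nodup_iff).1 (List.nodup_cons.2 ⟨hx, hP⟩)
    rw [← List.nil_append ((x, a) :: _), h.symm, List.nil_append]
    refine h.eq_zero_of_perm ((forestEdges_perm perm).cons _) ?_
    rw [forestEdges_cons, h.map_leaf_cons_path (v := 0) (l₁ := forestEdges (P₁ ++ P₂))
      (List.Nodup.of_append_left (l₂ := (P₁ ++ P₂).flatten) nodup), ite_self]
    intro p hp
    refine hV (p :: (P₁ ++ P₂)) ((hp.symm.append_right _).nodup_iff.1 nodup) ?_
    rw [(forestEdges_perm perm).length_eq, forestEdges_cons, forestEdges_cons, List.length_append,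
      List.length_append, length_pathEdges, length_pathEdges, hp.length_eq]
    simp
    lia
  · exact hV ([x, a] :: P) (by simp_all) (by simp [forestEdges_cons, pathEdges])

end ArnoldRelations

end Forests

section SectionComplement

open scoped Real

variable {B : Type*} [TopologicalSpace B] {ι : Type*} (s : ι → C(B, ℂ))

/-- The complement of the graphs of a family of functions `s i : B → ℂ`, as a space over `B` whose
fibres are punctured planes. -/
abbrev SectionComplement : Type _ := {p : B × ℂ | ∀ i, p.2 ≠ s i p.1}

/-- The bundle projection of the complement of a family of sections. -/
def sectionProjection : C(SectionComplement s, B) where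
  toFun p := p.1.1

/-- The invertible function `(b, z) ↦ z - s i b` on the complement of a family of sections. -/
def sectionDifference (i : ι) : C(SectionComplement s, ℂˣ) :=
  ContinuousMap.unitsOfForallIsUnit
    (f := ⟨fun p : SectionComplement s ↦ p.1.2 - s i p.1.1, by fun_prop⟩)
    fun p ↦ (sub_ne_zero.2 (p.2 i)).isUnit

@[simp]
theorem coe_sectionDifference (i : ι) (p : SectionComplement s) :
    (sectionDifference s i p : ℂ) = p.1.2 - s i p.1.1 := rfl

/-- The inclusion of the complement of a family of sections into the complement of one of them. -/
def forgetSections (i : ι) : C(SectionComplement s, SectionComplement fun _ : Unit ↦ s i) where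
  toFun p := ⟨p.1, fun _ ↦ p.2 i⟩

/-- The fibrewise universal covering `(b, y) ↦ (b, σ b + exp y)` of the complement of one
section. -/
def expFibre (σ : C(B, ℂ)) : C(B × ℂ, SectionComplement fun _ : Unit ↦ σ) where
  toFun p := ⟨(p.1, σ p.1 + exp p.2), by simp [exp_ne_zero]⟩

theorem expFibre_sectionProjection (σ : C(B, ℂ)) (x : SectionComplement fun _ : Unit ↦ σ) {y : ℂ}
    (hy : exp y = sectionDifference _ () x) :
    expFibre σ (sectionProjection _ x, y) = x :=
  Subtype.ext <| Prod.ext rfl <| by simp [expFibre, sectionProjection, hy]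

theorem expFibre_add_two_pi_I (σ : C(B, ℂ)) (b : B) (y : ℂ) :
    expFibre σ (b, y + 2 * π * I) = expFibre σ (b, y) :=
  Subtype.ext <| Prod.ext rfl <| congrArg (σ b + ·) (exp_periodic y)

variable {s} [Finite ι] [Nonempty ι] {k : ℕ}

theorem exists_boundary_eq_of_pushforward_forgetSections
    (hs : Pairwise fun i j ↦ ∀ b, s i b ≠ s j b) {c : Chain (k + 1) (SectionComplement s)}
    (h : ∀ i, ∃ b, boundary b = pushforward (forgetSections s i) c) : ∃ b, boundary b = c := by
  have := Fintype.ofFinite ι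
  obtain ⟨a, ha, hac⟩ := exists_boundary_eq_of_forall_snd_ne s (I := Finset.univ)
    Finset.univ_nonempty (hs.set_pairwise _)
    (c := pushforward (inclusion {p : B × ℂ | ∀ i, p.2 ≠ s i p.1}) c) fun i _ ↦ by
      obtain ⟨b, hb⟩ := h i
      refine ⟨pushforward ⟨Subtype.val, by fun_prop⟩ b, pushforward_mem_chainsIn
        (fun x _ ↦ x.2 ()) (mem_chainsIn_univ b), ?_⟩
      rw [← pushforward_boundary, hb, pushforward_pushforward]
      rfl
  simp only [Finset.mem_univ, true_imp_iff] at ha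
  obtain ⟨b, rfl⟩ := exists_pushforward_inclusion_eq ha
  exact ⟨b, pushforward_inclusion_injective _ (by rw [pushforward_boundary, hac])⟩

theorem exists_boundary_eq_of_pushforward_sectionProjection_of_degree_zero
    (hs : Pairwise fun i j ↦ ∀ b, s i b ≠ s j b) {c : Chain 1 (SectionComplement s)}
    (hc : boundary c = 0) (hp : ∃ b, boundary b = pushforward (sectionProjection s) c) :
    ∃ b, boundary b = c :=
  exists_boundary_eq_of_pushforward_forgetSections hs fun i ↦
    exists_boundary_eq_of_pushforward_of_degree_zero
      (fun x _ ↦ expFibre_sectionProjection (s i) x) (by rw [← pushforward_boundary, hc, map_zero])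
      (by rwa [pushforward_pushforward])

theorem exists_boundary_eq_of_pushforward_sectionProjection
    (hs : Pairwise fun i j ↦ ∀ b, s i b ≠ s j b) {c : Chain (k + 2) (SectionComplement s)}
    (hc : boundary c = 0) (hp : ∃ b, boundary b = pushforward (sectionProjection s) c)
    (hcap : ∀ i, ∃ b, boundary b =
      pushforward (sectionProjection s) (cap (winding (sectionDifference s i)) c)) :
    ∃ b, boundary b = c :=
  exists_boundary_eq_of_pushforward_forgetSections hs fun i ↦
    exists_boundary_eq_of_pushforward_of_pushforward_cap
      (fun x _ ↦ expFibre_sectionProjection (s i) x) (expFibre_add_two_pi_I (s i))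
      (by rw [← pushforward_boundary, hc, map_zero]) (by rwa [pushforward_pushforward]) <| by
        obtain ⟨b, hb⟩ := hcap i
        refine ⟨b, ?_⟩
        rw [hb, ← pushforward_cap (forgetSections s i), pushforward_pushforward]
        rfl

theorem exists_boundary_eq_of_homeomorph {X Y : Type*} [TopologicalSpace X] [TopologicalSpace Y]
    (e : X ≃ₜ Y) {c : Chain k X} (h : ∃ b, boundary b = pushforward (e : C(X, Y)) c) :
    ∃ b, boundary b = c := by
  obtain ⟨b, hb⟩ := h
  refine ⟨pushforward (e.symm : C(Y, X)) b,
    pushforward_injective (f := (e : C(X, Y))) e.injective ?_⟩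
  rw [pushforward_boundary, pushforward_pushforward, ← hb]
  simp [pushforward_id]

end SectionComplement

/-! ### Iterated cap products with winding classes -/

section Pairing

variable {X Y : Type*} [TopologicalSpace X] [TopologicalSpace Y]

theorem windingCap_eq_of_eq_neg {u v : C(X, ℂˣ)} (h : ∀ x, (u x : ℂ) = -v x) :
    windingCap u = windingCap v := by
  have hu : u = ContinuousMap.const X (-1) * v := by
    ext x
    simp [h]
  refine LinearMap.ext fun x ↦ ?_
  rw [hu, windingCap_mul, windingCap_const, zero_add]

/-- The composite of the cap products with the winding classes of a list of functions, the head of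
the list being applied first. -/
def iteratedCap : List C(X, ℂˣ) → TotalHomology X →ₗ[ℤ] TotalHomology X
  | [] => LinearMap.id
  | u :: us => iteratedCap us ∘ₗ windingCap u

theorem iteratedCap_cons (u : C(X, ℂˣ)) (us : List C(X, ℂˣ)) (x : TotalHomology X) :
    iteratedCap (u :: us) x = iteratedCap us (windingCap u x) := rfl

theorem iteratedCap_append_swap (us : List C(X, ℂˣ)) (u v : C(X, ℂˣ)) (vs : List C(X, ℂˣ))
    (x : TotalHomology X) :
    iteratedCap (us ++ u :: v :: vs) x = -iteratedCap (us ++ v :: u :: vs) x := by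
  induction us generalizing x with
  | nil =>
    simp only [List.nil_append, iteratedCap_cons]
    rw [windingCap_windingCap_eq_neg, map_neg]
  | cons _ _ ih => exact ih _

theorem iteratedCap_windingCap_windingCap (us : List C(X, ℂˣ)) (u v : C(X, ℂˣ))
    (x : TotalHomology X) :
    iteratedCap us (windingCap u (windingCap v x)) =
      windingCap u (windingCap v (iteratedCap us x)) := by
  induction us generalizing x with
  | nil => rfl
  | cons a us ih =>
    rw [iteratedCap_cons, iteratedCap_cons, ← ih, windingCap_windingCap_eq_neg a u,
      windingCap_windingCap_eq_neg a v, map_neg, map_neg, map_neg, neg_neg]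

theorem iteratedCap_congr {us vs : List C(X, ℂˣ)}
    (h : List.Forall₂ (fun u v ↦ windingCap u = windingCap v) us vs) :
    iteratedCap us = iteratedCap vs := by
  induction h with
  | nil => rfl
  | cons h _ ih => rw [iteratedCap, iteratedCap, h, ih]

theorem iteratedCap_homologyPushforward (f : C(X, Y)) (us : List C(Y, ℂˣ)) (x : TotalHomology X) :
    iteratedCap us (homologyPushforward f x) =
      homologyPushforward f (iteratedCap (us.map fun u ↦ u.comp f) x) := by
  induction us generalizing x with
  | nil => rfl
  | cons u us ih =>
    rw [List.map_cons, iteratedCap_cons, iteratedCap_cons, ← homologyPushforward_windingCap, ih]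

/-- The classes which pair to zero with every product of winding classes. -/
def NumericallyTrivial (x : TotalHomology X) : Prop :=
  ∀ us, augmentation (iteratedCap us x) = 0

theorem NumericallyTrivial.neg {x : TotalHomology X} (h : NumericallyTrivial x) :
    NumericallyTrivial (-x) := fun us ↦ by
  rw [map_neg, map_neg, h us, neg_zero]

theorem NumericallyTrivial.windingCap {x : TotalHomology X} (h : NumericallyTrivial x)
    (u : C(X, ℂˣ)) : NumericallyTrivial (windingCap u x) := fun us ↦ h (u :: us)

theorem numericallyTrivial_windingCap_windingCap_self (u : C(X, ℂˣ)) (x : TotalHomology X) :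
    NumericallyTrivial (windingCap u (windingCap u x)) := fun us ↦ by
  have h := congrArg (fun y ↦ augmentation (iteratedCap us y)) (windingCap_windingCap_eq_neg u u x)
  simp only [map_neg] at h
  exact self_eq_neg.1 h

theorem augmentation_iteratedCap_map_mul {v : C(X, ℂˣ)} {x : TotalHomology X}
    (h : NumericallyTrivial (windingCap v x)) (us : List C(X, ℂˣ)) :
    augmentation (iteratedCap (us.map (· * v)) x) = augmentation (iteratedCap us x) := by
  induction us generalizing x with
  | nil => rfl
  | cons u us ih =>
    rw [List.map_cons, iteratedCap_cons, windingCap_mul, map_add, map_add, h, add_zero,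
      iteratedCap_cons]
    exact ih (by rw [windingCap_windingCap_eq_neg]; exact (h.windingCap u).neg)

theorem augmentation_iteratedCap_map_div {u v : C(X, ℂˣ)} {x : TotalHomology X}
    (h : NumericallyTrivial (windingCap (u / v) x)) (us : List C(X, ℂˣ)) :
    augmentation (iteratedCap (us.map (· / u)) x) =
      augmentation (iteratedCap (us.map (· / v)) x) := by
  rw [← augmentation_iteratedCap_map_mul h, List.map_map]
  simp only [Function.comp_def, div_mul_div_cancel]

end Pairing

/-! ### The Steinberg relation -/

section Steinberg

variable {X : Type*} [TopologicalSpace X] {k : ℕ}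

theorem boundary_cap_of_isCocycle {η : SingularSimplex 2 X → ℤ} (h : IsCocycle η)
    (x : Chain (k + 3) X) : boundary (cap η x) = -cap η (boundary x) := by
  have product_rule := boundary_cap_add_cap_boundary η x
  rw [show coboundaryOne η = 0 from funext h] at product_rule
  exact eq_neg_of_add_eq_zero_left (product_rule.trans (weightedReindex_zero ..))

/-- The two punctures of the twice punctured plane `ℂ ∖ {0, 1}`, as sections over a point. -/
def zeroOneSections (i : Fin 2) : C(Unit, ℂ) := ContinuousMap.const Unit (i : ℂ)

theorem pairwise_zeroOneSections :
    Pairwise fun i j ↦ ∀ b, zeroOneSections i b ≠ zeroOneSections j b := by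
  intro i j hij _
  fin_cases i <;> fin_cases j <;> simp [zeroOneSections] at hij ⊢

/-- The plane punctured at `0` and `1`. -/
abbrev TwicePuncturedPlane : Type := SectionComplement zeroOneSections

theorem exists_boundary_eq_of_twicePuncturedPlane {c : Chain 3 TwicePuncturedPlane}
    (hc : boundary c = 0) : ∃ b, boundary b = c :=
  exists_boundary_eq_of_pushforward_sectionProjection pairwise_zeroOneSections hc
    (exists_boundary_eq_of_unit (by rw [← pushforward_boundary, hc, map_zero]))
    fun _ ↦ exists_boundary_eq_of_unit (by
      rw [← pushforward_boundary, boundary_cap_of_isCocycle (isCocycle_winding _), hc, map_zero,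
        neg_zero, map_zero])

theorem augmentation_windingCap_windingCap_eq_zero (u v : C(TwicePuncturedPlane, ℂˣ))
    (y : TotalHomology TwicePuncturedPlane) :
    augmentation (windingCap u (windingCap v y)) = 0 := by
  obtain ⟨c, hc, rfl⟩ := exists_homologyClass_eq y
  obtain ⟨b, hb⟩ := exists_boundary_eq_of_twicePuncturedPlane (congrFun hc 1)
  change emptyAugmentation (boundary (cap (winding u) (cap (winding v) (c 2)))) = 0
  have cap_eq : cap (winding u) (cap (winding v) (c 2)) =
      boundary (cap (winding u) (cap (winding v) b)) := by
    rw [boundary_cap_of_isCocycle (isCocycle_winding u),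
      boundary_cap_of_isCocycle (isCocycle_winding v), map_neg, neg_neg, hb]
    rfl
  rw [cap_eq, boundary_boundary, map_zero]

/- A pair of invertible functions with sum `1` is pulled back from `ℂ ∖ {0, 1}`, which has no
homology in degree two. -/
theorem numericallyTrivial_windingCap_windingCap_of_add_eq_one {u v : C(X, ℂˣ)}
    (h : ∀ x, (u x : ℂ) + v x = 1) (x : TotalHomology X) :
    NumericallyTrivial (windingCap u (windingCap v x)) := by
  intro us
  rw [iteratedCap_windingCap_windingCap]
  let f : C(X, TwicePuncturedPlane) := ⟨fun x ↦ ⟨((), u x), fun i ↦ by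
    fin_cases i
    · simp [zeroOneSections]
    · simp [zeroOneSections, ← h x]⟩, by fun_prop⟩
  have hu : u = (sectionDifference zeroOneSections 0).comp f := by
    ext x
    change (u x : ℂ) = u x - ((0 : Fin 2) : ℂ)
    simp
  have hv : windingCap v = windingCap ((sectionDifference zeroOneSections 1).comp f) :=
    windingCap_eq_of_eq_neg fun x ↦ by
      change (v x : ℂ) = -(u x - ((1 : Fin 2) : ℂ))
      simp [← h x]
  rw [hv, hu, ← augmentation_homologyPushforward f, homologyPushforward_windingCap,
    homologyPushforward_windingCap]
  exact augmentation_windingCap_windingCap_eq_zero _ _ _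

theorem numericallyTrivial_windingCap_div_windingCap_div {u v w : C(X, ℂˣ)}
    (h : ∀ x, (u x : ℂ) + v x + w x = 0) (x : TotalHomology X) :
    NumericallyTrivial (windingCap (w / u) (windingCap (v / u) x)) := by
  have neg_div (w : C(X, ℂˣ)) :
      windingCap (w / u) = windingCap (ContinuousMap.const X (-1) * (w / u)) :=
    windingCap_eq_of_eq_neg fun x ↦ by simp
  rw [neg_div w, neg_div v]
  refine numericallyTrivial_windingCap_windingCap_of_add_eq_one (fun x ↦ ?_) x
  have u_ne_zero : (u x : ℂ) ≠ 0 := (u x).ne_zero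
  simp only [ContinuousMap.mul_apply, ContinuousMap.const_apply, ContinuousMap.div_apply,
    Units.val_mul, Units.val_neg, Units.val_one, Units.val_div_eq_div_val]
  field_simp
  linear_combination -h x

end Steinberg

/-! ### The pairing with products of quotients -/

section RelativePairing

variable {X Y : Type*} [TopologicalSpace X] [TopologicalSpace Y]

/-- The pairing of a homology class with the product of the winding classes of
`u₁ / u₀, …, uᵣ / u₀`, for a list `u₀, u₁, …, uᵣ` of invertible functions. It is alternating in the
whole list. -/
def relativePairing (x : TotalHomology X) : List C(X, ℂˣ) → ℤ
  | [] => 0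
  | u :: us => augmentation (iteratedCap (us.map (· / u)) x)

theorem relativePairing_cons (x : TotalHomology X) (u : C(X, ℂˣ)) (us : List C(X, ℂˣ)) :
    relativePairing x (u :: us) = augmentation (iteratedCap (us.map (· / u)) x) := rfl

theorem relativePairing_zero (us : List C(X, ℂˣ)) :
    relativePairing (0 : TotalHomology X) us = 0 := by
  cases us with
  | nil => rfl
  | cons u us => rw [relativePairing_cons, map_zero, map_zero]

theorem relativePairing_cons_swap (x : TotalHomology X) (u v : C(X, ℂˣ)) (us : List C(X, ℂˣ)) :
    relativePairing x (u :: v :: us) = -relativePairing x (v :: u :: us) := by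
  have windingCap_swap : windingCap (u / v) x = -windingCap (v / u) x := by
    rw [windingCap_div, windingCap_div, neg_sub]
  simp only [relativePairing_cons, List.map_cons, iteratedCap_cons]
  rw [windingCap_swap, map_neg, map_neg, neg_neg, augmentation_iteratedCap_map_div
    (numericallyTrivial_windingCap_windingCap_self (v / u) x)]

theorem relativePairing_append_swap (x : TotalHomology X) (us : List C(X, ℂˣ)) (u v : C(X, ℂˣ))
    (vs : List C(X, ℂˣ)) :
    relativePairing x (us ++ u :: v :: vs) = -relativePairing x (us ++ v :: u :: vs) := by
  cases us with
  | nil => exact relativePairing_cons_swap x u v vs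
  | cons a us =>
    simp only [List.cons_append, relativePairing_cons, List.map_append, List.map_cons]
    rw [iteratedCap_append_swap, map_neg]

theorem relativePairing_congr (x : TotalHomology X) {us vs : List C(X, ℂˣ)}
    (h : List.Forall₂ (fun u v ↦ windingCap u = windingCap v) us vs) :
    relativePairing x us = relativePairing x vs := by
  cases h with
  | nil => rfl
  | @cons u v us vs huv h =>
    rw [relativePairing_cons, relativePairing_cons, iteratedCap_congr (us := us.map (· / u))]
    rw [List.forall₂_map_left_iff, List.forall₂_map_right_iff]
    refine h.imp fun a b hab ↦ LinearMap.ext fun y ↦ ?_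
    rw [windingCap_div, windingCap_div, huv, hab]

theorem relativePairing_homologyPushforward (f : C(X, Y)) (us : List C(Y, ℂˣ))
    (x : TotalHomology X) :
    relativePairing (homologyPushforward f x) us =
      relativePairing x (us.map fun u ↦ u.comp f) := by
  cases us with
  | nil => rfl
  | cons u us =>
    rw [List.map_cons, relativePairing_cons, relativePairing_cons,
      iteratedCap_homologyPushforward, augmentation_homologyPushforward, List.map_map,
      List.map_map]
    rfl

theorem relativePairing_map_div (x : TotalHomology X) (v : C(X, ℂˣ)) (us : List C(X, ℂˣ)) :
    relativePairing x (us.map (· / v)) = relativePairing x us := by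
  cases us with
  | nil => rfl
  | cons u us =>
    rw [List.map_cons, relativePairing_cons, relativePairing_cons, List.map_map]
    simp only [Function.comp_def, div_div_div_cancel_right]

theorem relativePairing_windingCap (v : C(X, ℂˣ)) (x : TotalHomology X) (u : C(X, ℂˣ))
    (us : List C(X, ℂˣ)) : relativePairing (windingCap v x) (u :: us) =
      relativePairing x (1 :: u :: us) - relativePairing x (v :: u :: us) := by
  rw [relativePairing_cons_swap x 1, relativePairing_cons_swap x v]
  simp only [relativePairing_cons, List.map_cons, iteratedCap_cons]
  rw [windingCap_div, windingCap_div, windingCap_one]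
  simp only [map_sub, map_zero]
  ring

/- In terms of the differential forms `ω = dlog u`, this is Arnold's relation for three functions
with sum zero. -/
theorem relativePairing_arnold {u v w : C(X, ℂˣ)} (h : ∀ x, (u x : ℂ) + v x + w x = 0)
    (x : TotalHomology X) (us : List C(X, ℂˣ)) :
    relativePairing x (u :: v :: us) + relativePairing x (v :: w :: us) +
      relativePairing x (w :: u :: us) = 0 := by
  have trivial_vw : NumericallyTrivial (windingCap (v / u) (windingCap (w / u) x)) := by
    rw [windingCap_windingCap_eq_neg]
    exact (numericallyTrivial_windingCap_div_windingCap_div h x).neg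
  have split : windingCap (w / v) x = windingCap (w / u) x - windingCap (v / u) x := by
    simp only [windingCap_div, sub_sub_sub_cancel_right]
  have inv : windingCap (u / w) x = -windingCap (w / u) x := by
    rw [windingCap_div, windingCap_div, neg_sub]
  simp only [relativePairing_cons, List.map_cons, iteratedCap_cons]
  rw [split, inv, map_sub, map_sub, map_neg, map_neg,
    augmentation_iteratedCap_map_div trivial_vw,
    augmentation_iteratedCap_map_div (numericallyTrivial_windingCap_windingCap_self (v / u) x),
    augmentation_iteratedCap_map_div (numericallyTrivial_windingCap_windingCap_self (w / u) x)]
  ring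

end RelativePairing

/-! ### Homogeneous classes -/

section Represents

variable {X Y : Type*} [TopologicalSpace X] [TopologicalSpace Y] {k : ℕ}

/-- A homogeneous chain as a chain of mixed degree. -/
def singleChain : Chain (k + 1) X →ₗ[ℤ] TotalChain X :=
  LinearMap.single ℤ (fun k ↦ Chain (k + 1) X) k

theorem singleChain_same (c : Chain (k + 1) X) : singleChain c k = c := Pi.single_eq_same ..

theorem singleChain_of_ne {i : ℕ} (c : Chain (k + 1) X) (h : i ≠ k) : singleChain c i = 0 :=
  Pi.single_eq_of_ne h _

theorem totalBoundary_singleChain (c : Chain (k + 2) X) :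
    totalBoundary (singleChain c) = singleChain (boundary c) := by
  funext i
  change boundary (singleChain c (i + 1)) = _
  obtain rfl | h := eq_or_ne i k
  · rw [singleChain_same, singleChain_same]
  · rw [singleChain_of_ne c (by lia), singleChain_of_ne _ h, map_zero]

theorem totalCap_singleChain (η : SingularSimplex 2 X → ℤ) (c : Chain (k + 2) X) :
    totalCap η (singleChain c) = singleChain (cap η c) := by
  funext i
  change cap η (singleChain c (i + 1)) = _
  obtain rfl | h := eq_or_ne i k
  · rw [singleChain_same, singleChain_same]
  · rw [singleChain_of_ne c (by lia), singleChain_of_ne _ h, map_zero]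

theorem totalPushforward_singleChain (f : C(X, Y)) (c : Chain (k + 1) X) :
    totalPushforward f (singleChain c) = singleChain (pushforward f c) := by
  funext i
  change pushforward f (singleChain c i) = _
  obtain rfl | h := eq_or_ne i k
  · rw [singleChain_same, singleChain_same]
  · rw [singleChain_of_ne c h, singleChain_of_ne _ h, map_zero]

/-- The chain `c` is a cycle of the unaugmented singular complex, with homology class `x`. -/
def Represents (c : Chain (k + 1) X) (x : TotalHomology X) : Prop :=
  ∃ hc, homologyClass (singleChain c) hc = x

theorem exists_represents {c : Chain (k + 2) X} (hc : boundary c = 0) : ∃ x, Represents c x :=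
  ⟨_, by rw [totalBoundary_singleChain, hc, map_zero], rfl⟩

namespace Represents

theorem unique {c : Chain (k + 1) X} {x y : TotalHomology X} (hx : Represents c x)
    (hy : Represents c y) : x = y := by
  obtain ⟨-, rfl⟩ := hx
  obtain ⟨-, rfl⟩ := hy
  rfl

theorem pushforward {c : Chain (k + 1) X} {x : TotalHomology X} (h : Represents c x)
    (f : C(X, Y)) : Represents (pushforward f c) (homologyPushforward f x) := by
  obtain ⟨hc, rfl⟩ := h
  rw [Represents, ← totalPushforward_singleChain]
  exact ⟨_, rfl⟩

theorem cap_winding {c : Chain (k + 2) X} {x : TotalHomology X} (h : Represents c x)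
    (u : C(X, ℂˣ)) : Represents (cap (winding u) c) (windingCap u x) := by
  obtain ⟨hc, rfl⟩ := h
  rw [Represents, ← totalCap_singleChain]
  exact ⟨_, rfl⟩

theorem eq_zero {c : Chain (k + 1) X} {x : TotalHomology X} (h : Represents c x)
    (hc : ∃ b, boundary b = c) : x = 0 := by
  obtain ⟨hc, rfl⟩ := h
  obtain ⟨b, rfl⟩ := ‹∃ b, boundary b = c›
  exact homologyClass_eq_zero_iff.2 ⟨singleChain b, totalBoundary_singleChain b⟩

theorem boundary_eq_zero {c : Chain (k + 1) X} {x : TotalHomology X} (h : Represents c x)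
    (hx : k = 0 → augmentation x = 0) : boundary c = 0 := by
  obtain ⟨hc, rfl⟩ := h
  cases k with
  | zero =>
    refine emptyAugmentation_injective (.trans ?_ (map_zero _).symm)
    have := hx rfl
    change emptyAugmentation (boundary (singleChain c 0)) = 0 at this
    rwa [singleChain_same] at this
  | succ k =>
    rw [totalBoundary_singleChain] at hc
    rw [← singleChain_same (boundary c), hc, Pi.zero_apply]

end Represents

end Represents

/-! ### Normalized configurations -/

/-- The ordered configurations of `m + 2` points of the plane whose first two points are `0`
and `1`. -/
abbrev NormalizedConfig (m : ℕ) : Type :=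
  {z : Fin (m + 2) → ℂ // Function.Injective z ∧ z 0 = 0 ∧ z 1 = 1}

namespace NormalizedConfig

variable {m k : ℕ}

/-- The `i`-th point of a configuration. -/
def point (i : Fin (m + 2)) : C(NormalizedConfig m, ℂ) where
  toFun z := z.1 i
  continuous_toFun := (continuous_apply i).comp continuous_subtype_val

theorem point_ne {i j : Fin (m + 2)} (h : i ≠ j) (z : NormalizedConfig m) :
    point i z ≠ point j z := z.2.1.ne h

/-- The function `z ↦ z j - z i` attached to an edge `(i, j)`, and the constant `1` if `i = j`. -/
def edgeFunction (e : Fin (m + 2) × Fin (m + 2)) : C(NormalizedConfig m, ℂˣ) :=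
  if h : e.1 = e.2 then 1 else ContinuousMap.unitsOfForallIsUnit (f := point e.2 - point e.1)
    fun z ↦ (sub_ne_zero.2 (point_ne (Ne.symm h) z)).isUnit

theorem edgeFunction_apply {e : Fin (m + 2) × Fin (m + 2)} (h : e.1 ≠ e.2)
    (z : NormalizedConfig m) : (edgeFunction e z : ℂ) = z.1 e.2 - z.1 e.1 := by
  rw [edgeFunction, dif_neg h]
  rfl

theorem edgeFunction_of_eq {e : Fin (m + 2) × Fin (m + 2)} (h : e.1 = e.2) :
    edgeFunction e = 1 := dif_pos h

theorem windingCap_edgeFunction_swap (i j : Fin (m + 2)) :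
    windingCap (edgeFunction (i, j)) = windingCap (edgeFunction (j, i)) := by
  obtain rfl | h := eq_or_ne i j
  · rfl
  · refine windingCap_eq_of_eq_neg fun z ↦ ?_
    rw [edgeFunction_apply h, edgeFunction_apply h.symm, neg_sub]

theorem arnoldRelations_relativePairing (x : TotalHomology (NormalizedConfig m)) :
    ArnoldRelations fun l ↦ relativePairing x (l.map edgeFunction) where
  swap l a b l' := by
    simp only [List.map_append, List.map_cons]
    exact relativePairing_append_swap x _ _ _ _
  symm l a b l' := by
    simp only [List.map_append, List.map_cons]
    exact relativePairing_congr x <|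
      List.rel_append (R := fun u v ↦ windingCap u = windingCap v)
        (List.forall₂_same.2 fun _ _ ↦ rfl)
        (.cons (windingCap_edgeFunction_swap a b) (List.forall₂_same.2 fun _ _ ↦ rfl))
  arnold a b c l hab hbc hac := by
    simp only [List.map_cons]
    refine relativePairing_arnold (fun z ↦ ?_) x _
    rw [edgeFunction_apply hab, edgeFunction_apply hbc, edgeFunction_apply hac.symm]
    ring

/-! ### Forgetting the last point -/

/-- The map forgetting the last point of a configuration. -/
def forgetLast : C(NormalizedConfig (m + 1), NormalizedConfig m) where
  toFun z := ⟨fun i ↦ z.1 i.castSucc, z.2.1.comp (Fin.castSucc_injective _), z.2.2⟩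
  continuous_toFun := .subtype_mk
    (continuous_pi fun i : Fin (m + 2) ↦ (point i.castSucc).continuous) _

theorem edgeFunction_comp_forgetLast (e : Fin (m + 2) × Fin (m + 2)) :
    (edgeFunction e).comp forgetLast = edgeFunction (Prod.map Fin.castSucc Fin.castSucc e) := by
  by_cases h : e.1 = e.2
  · rw [edgeFunction_of_eq h, edgeFunction_of_eq (by simpa using h)]
    rfl
  · ext z
    rw [ContinuousMap.comp_apply, edgeFunction_apply h, edgeFunction_apply (by simpa using h)]
    rfl

theorem map_edgeFunction_comp_forgetLast (l : List (Fin (m + 2) × Fin (m + 2))) :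
    (l.map edgeFunction).map (fun u ↦ u.comp forgetLast) =
      (l.map (Prod.map Fin.castSucc Fin.castSucc)).map edgeFunction := by
  simp only [List.map_map, Function.comp_def, edgeFunction_comp_forgetLast]

theorem snoc_injective {z : Fin (m + 2) → ℂ} (hz : Function.Injective z) {w : ℂ}
    (hw : ∀ i, w ≠ z i) : Function.Injective (Fin.snoc z w : Fin (m + 3) → ℂ) :=
  Fin.snoc_injective_iff.2 ⟨hz, by rintro ⟨i, rfl⟩; exact hw i rfl⟩

/-- The configurations of `m + 3` points as the complement of sections over the configurations of
the first `m + 2` points. -/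
def homeomorphSectionComplement :
    NormalizedConfig (m + 1) ≃ₜ SectionComplement (point (m := m)) where
  toFun z := ⟨(forgetLast z, point (Fin.last _) z),
    fun i ↦ point_ne (Fin.castSucc_lt_last i).ne' z⟩
  invFun p := ⟨Fin.snoc p.1.1.1 p.1.2, snoc_injective p.1.1.2.1 p.2,
    (Fin.snoc_castSucc (α := fun _ ↦ ℂ) _ _ 0).trans p.1.1.2.2.1,
    (Fin.snoc_castSucc (α := fun _ ↦ ℂ) _ _ 1).trans p.1.1.2.2.2⟩
  left_inv z := Subtype.ext (Fin.snoc_init_self z.1)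
  right_inv p := Subtype.ext <| Prod.ext
    (Subtype.ext <| funext <| Fin.snoc_castSucc (α := fun _ ↦ ℂ) p.1.2 p.1.1.1)
    (Fin.snoc_last (α := fun _ ↦ ℂ) p.1.2 p.1.1.1)
  continuous_toFun := by fun_prop
  continuous_invFun := by
    refine Continuous.subtype_mk (Continuous.finSnoc (A := fun _ ↦ ℂ) ?_ ?_) _ <;> fun_prop

theorem sectionDifference_comp_homeomorphSectionComplement (i : Fin (m + 2)) :
    (sectionDifference point i).comp (homeomorphSectionComplement (m := m) : C(_, _)) =
      edgeFunction (i.castSucc, Fin.last _) := by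
  ext z
  rw [edgeFunction_apply (Fin.castSucc_lt_last i).ne]
  rfl

theorem exists_boundary_eq_of_forgetLast_of_degree_zero {c : Chain 1 (NormalizedConfig (m + 1))}
    (hc : boundary c = 0) (hp : ∃ b, boundary b = pushforward forgetLast c) :
    ∃ b, boundary b = c :=
  exists_boundary_eq_of_homeomorph homeomorphSectionComplement <|
    exists_boundary_eq_of_pushforward_sectionProjection_of_degree_zero
      (fun _ _ h ↦ point_ne h) (by rw [← pushforward_boundary, hc, map_zero])
      (by rwa [pushforward_pushforward])

theorem exists_boundary_eq_of_forgetLast {c : Chain (k + 2) (NormalizedConfig (m + 1))}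
    (hc : boundary c = 0) (hp : ∃ b, boundary b = pushforward forgetLast c)
    (hcap : ∀ i : Fin (m + 2), ∃ b, boundary b =
      pushforward forgetLast (cap (winding (edgeFunction (i.castSucc, Fin.last _))) c)) :
    ∃ b, boundary b = c :=
  exists_boundary_eq_of_homeomorph homeomorphSectionComplement <|
    exists_boundary_eq_of_pushforward_sectionProjection (fun _ _ h ↦ point_ne h)
      (by rw [← pushforward_boundary, hc, map_zero]) (by rwa [pushforward_pushforward]) fun i ↦ by
        obtain ⟨b, hb⟩ := hcap i
        refine ⟨b, ?_⟩
        rw [hb, ← sectionDifference_comp_homeomorphSectionComplement, ← pushforward_cap,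
          pushforward_pushforward]
        rfl

/-! ### Forests detect bounding cycles -/

/-- The class `x` pairs to zero with the product of edges of every linear forest with `r` edges. -/
def VanishesOnForests (x : TotalHomology (NormalizedConfig m)) (r : ℕ) : Prop :=
  ∀ P : List (List (Fin (m + 2))), P.flatten.Nodup → (forestEdges P).length = r →
    relativePairing x ((forestEdges P).map edgeFunction) = 0

namespace VanishesOnForests

theorem augmentation_eq_zero {x : TotalHomology (NormalizedConfig m)}
    (h : VanishesOnForests x 1) : augmentation x = 0 := h [[0, 1]] (by simp) rfl

theorem forgetLast {x : TotalHomology (NormalizedConfig (m + 1))} {r : ℕ}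
    (h : VanishesOnForests x r) :
    VanishesOnForests (homologyPushforward forgetLast x) r := fun P hP h_length ↦ by
  rw [relativePairing_homologyPushforward, map_edgeFunction_comp_forgetLast, map_forestEdges]
  refine h _ ?_ (by rw [← map_forestEdges, List.length_map, h_length])
  rw [← List.map_flatten]
  exact hP.map (Fin.castSucc_injective _)

theorem forgetLast_windingCap {x : TotalHomology (NormalizedConfig (m + 1))} {r : ℕ} (hr : r ≠ 0)
    (h : VanishesOnForests x (r + 1))
    (hx : homologyPushforward NormalizedConfig.forgetLast x = 0) (i : Fin (m + 2)) :
    VanishesOnForests (homologyPushforward NormalizedConfig.forgetLast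
      (windingCap (edgeFunction (i.castSucc, Fin.last _)) x)) r := fun P hP h_length ↦ by
  obtain ⟨e, l, hel⟩ : ∃ e l, forestEdges P = e :: l :=
    List.exists_cons_of_length_pos (by lia)
  have eq_zero_of_zero_one : relativePairing x
      (1 :: ((forestEdges P).map edgeFunction).map fun u ↦ u.comp NormalizedConfig.forgetLast) =
        0 := by
    have := relativePairing_zero (1 :: (forestEdges P).map (edgeFunction (m := m)))
    rwa [← hx, relativePairing_homologyPushforward] at this
  have eq_zero_of_last : relativePairing x (edgeFunction (i.castSucc, Fin.last _) ::
      (forestEdges (P.map (List.map Fin.castSucc))).map edgeFunction) = 0 := by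
    refine ((arnoldRelations_relativePairing x).symm [] _ _ _).trans <|
      (arnoldRelations_relativePairing x).map_edge_cons_forestEdges_eq_zero
        (Fin.castSucc_lt_last i).ne' ?_ ?_ fun P' hP' h' ↦ h P' hP' ?_
    · rw [← List.map_flatten]
      exact hP.map (Fin.castSucc_injective _)
    · rw [← List.map_flatten, List.mem_map]
      rintro ⟨a, -, ha⟩
      exact (Fin.castSucc_lt_last a).ne ha
    · rw [h', ← map_forestEdges, List.length_map, h_length]
  rw [← map_forestEdges, ← map_edgeFunction_comp_forgetLast] at eq_zero_of_last
  rw [relativePairing_homologyPushforward]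
  rw [hel] at *
  simp only [List.map_cons] at *
  rw [relativePairing_windingCap, eq_zero_of_zero_one, eq_zero_of_last, sub_zero]

end VanishesOnForests

instance : Unique (NormalizedConfig 0) where
  default := ⟨fun i ↦ i, fun a b h ↦ by fin_cases a <;> fin_cases b <;> simp at h ⊢, by simp,
    by simp⟩
  uniq z := Subtype.ext <| funext fun i ↦ by
    fin_cases i
    · simpa using z.2.2.1
    · simpa using z.2.2.2

theorem exists_boundary_eq_of_vanishesOnForests {c : Chain (k + 1) (NormalizedConfig m)}
    {x : TotalHomology (NormalizedConfig m)} (hc : Represents c x)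
    (hx : VanishesOnForests x (k + 1)) : ∃ b, boundary b = c := by
  induction m generalizing k with
  | zero =>
    exact exists_boundary_eq_of_contraction default ⟨Prod.fst, continuous_fst⟩
      (fun _ ↦ Subsingleton.elim _ _) (fun _ ↦ rfl)
      (hc.boundary_eq_zero fun hk ↦ by subst hk; exact hx.augmentation_eq_zero)
  | succ m ih =>
    have hc_boundary := hc.boundary_eq_zero fun hk ↦ by subst hk; exact hx.augmentation_eq_zero
    have hp := ih (hc.pushforward forgetLast) hx.forgetLast
    cases k with
    | zero => exact exists_boundary_eq_of_forgetLast_of_degree_zero hc_boundary hp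
    | succ k =>
      exact exists_boundary_eq_of_forgetLast hc_boundary hp fun i ↦
        ih ((hc.cap_winding _).pushforward forgetLast) <|
          hx.forgetLast_windingCap k.succ_ne_zero ((hc.pushforward forgetLast).eq_zero hp) i

end NormalizedConfig

/-! ### Transfer for finite group actions -/

section ChainRepresentation

variable (G : Type*) {X Y : Type*} [Group G] [TopologicalSpace X] [TopologicalSpace Y]
  [MulAction G X] [ContinuousConstSMul G X] {k : ℕ}

/-- Translation by a group element as a continuous map. -/
def translate {G : Type*} [Group G] [MulAction G X] [ContinuousConstSMul G X] (g : G) : C(X, X) :=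
  ⟨(g • ·), continuous_const_smul g⟩

variable (X k) in
/-- The representation of the acting group on singular chains. -/
def chainRepresentation : Representation ℤ G (Chain k X) where
  toFun g := pushforward (translate g)
  map_one' := LinearMap.ext fun x ↦ by
    have h : translate (1 : G) = ContinuousMap.id X := ContinuousMap.ext fun z ↦ one_smul G z
    rw [h, pushforward_id, Module.End.one_apply]
  map_mul' g h := LinearMap.ext fun x ↦ by
    have hmul : translate (g * h) = (translate g).comp (translate h : C(X, X)) :=
      ContinuousMap.ext fun z ↦ mul_smul g h z
    rw [hmul, Module.End.mul_apply, pushforward_pushforward]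

variable [Fintype G]

/-- The sum of the translates of a chain. -/
def chainNorm : Chain k X →ₗ[ℤ] Chain k X := (chainRepresentation G X k).norm

theorem chainNorm_apply (x : Chain k X) :
    chainNorm G x = ∑ g : G, pushforward (translate g) x :=
  LinearMap.sum_apply ..

theorem chainNorm_pushforward_translate (g : G) (x : Chain k X) :
    chainNorm G (pushforward (translate g) x) = chainNorm G x :=
  Representation.norm_self_apply (chainRepresentation G X k) g x

theorem pushforward_translate_chainNorm (g : G) (x : Chain k X) :
    pushforward (translate g) (chainNorm G x) = chainNorm G x :=
  Representation.self_norm_apply (chainRepresentation G X k) g x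

theorem chainNorm_boundary (x : Chain (k + 1) X) :
    chainNorm G (boundary x) = boundary (chainNorm G x) := by
  simp only [chainNorm_apply, pushforward_boundary, map_sum]

variable {G}

theorem pushforward_chainNorm {p : C(X, Y)} (hp : ∀ (g : G) x, p (g • x) = p x) (x : Chain k X) :
    pushforward p (chainNorm G x) = (Fintype.card G : ℤ) • pushforward p x := by
  have h (g : G) : p.comp (translate g) = p := ContinuousMap.ext (hp g)
  simp only [chainNorm_apply, map_sum, pushforward_pushforward, h, Finset.sum_const,
    Finset.card_univ, Nat.cast_smul_eq_nsmul]

theorem pushforward_eq_zero_of_chainNorm_eq_zero {p : C(X, Y)}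
    (hp : ∀ (g : G) x, p (g • x) = p x) {x : Chain k X} (hx : chainNorm G x = 0) :
    pushforward p x = 0 := by
  have h := pushforward_chainNorm hp x
  rw [hx, map_zero] at h
  exact (smul_eq_zero.1 h.symm).resolve_left (mod_cast Fintype.card_ne_zero)

end ChainRepresentation

section OrbitContraction

variable {G X Y : Type*} [Group G] [TopologicalSpace X] [TopologicalSpace Y] [MulAction G X]
  {k : ℕ} {q : X} {H : C(X × unitInterval, X)}

/-- An equivariant homotopy from a map with values in the orbit of `q` to the identity. -/
structure IsOrbitContraction (G : Type*) {X : Type*} [Group G] [TopologicalSpace X] [MulAction G X]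
    (q : X) (H : C(X × unitInterval, X)) : Prop where
  apply_zero_mem : ∀ x, H (x, 0) ∈ MulAction.orbit G q
  apply_one : ∀ x, H (x, 1) = x
  map_smul : ∀ (g : G) x t, H (g • x, t) = g • H (x, t)

theorem exists_boundary_eq_of_isOrbitContraction (hH : IsOrbitContraction G q H) {p : C(X, Y)}
    (hp : IsOpenQuotientMap p) (h_orbit : ∀ {x y}, p x = p y ↔ x ∈ MulAction.orbit G y)
    {c : Chain (k + 1) Y} (hc : boundary c = 0) : ∃ b, boundary b = c := by
  let s := Function.surjInv hp.surjective
  have hs (y : Y) : p (s y) = y := Function.surjInv_eq hp.surjective y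
  let K (y : Y × unitInterval) : Y := p (H (s y.1, y.2))
  have hK : K ∘ Prod.map p id = p ∘ H := by
    funext ⟨x, t⟩
    obtain ⟨g, hg⟩ := h_orbit.1 (hs (p x))
    change p (H (s (p x), t)) = p (H (x, t))
    rw [← hg, hH.map_smul]
    exact h_orbit.2 ⟨g, rfl⟩
  have hK_cont : Continuous K := by
    rw [← (hp.prodMap IsOpenQuotientMap.id).continuous_comp_iff, hK]
    fun_prop
  refine exists_boundary_eq_of_contraction (p q) ⟨K, hK_cont⟩ (fun y ↦ ?_) (fun y ↦ ?_) hc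
  · exact h_orbit.2 (hH.apply_zero_mem _)
  · exact (congrArg p (hH.apply_one _)).trans (hs y)

variable [ContinuousConstSMul G X] [Fintype G]

theorem chainNorm_prism (hH : ∀ (g : G) x t, H (g • x, t) = g • H (x, t)) (x : Chain k X) :
    chainNorm G (prism H k x) = prism H k (chainNorm G x) := by
  have h (g : G) : (translate g).comp H =
      H.comp ((translate g).prodMap (ContinuousMap.id unitInterval)) :=
    ContinuousMap.ext fun z ↦ (hH g z.1 z.2).symm
  simp only [chainNorm_apply, map_sum, pushforward_prism, prism_pushforward, h]

/-- A simplex mapped continuously to a finite orbit is constant, because simplices are connected. -/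
theorem chainNorm_pushforward_of_mem_orbit [T1Space X] {f : C(X, X)}
    (hf : ∀ x, f x ∈ MulAction.orbit G q) (x : Chain (k + 1) X) :
    chainNorm G (pushforward f x) = chainNorm G (pushforward (ContinuousMap.const X q) x) := by
  refine apply_eq_of_single_eq (f := chainNorm G ∘ₗ pushforward f)
    (g := chainNorm G ∘ₗ pushforward (ContinuousMap.const X q)) (fun σ ↦ ?_) x
  have h_finite : (Set.range (f.comp σ)).Finite :=
    (Set.finite_range fun g : G ↦ g • q).subset (Set.range_subset_iff.2 fun t ↦ hf (σ t))
  have h_const : (Set.range (f.comp σ)).Subsingleton := by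
    by_contra h
    exact (isPreconnected_range (f.comp σ).continuous).infinite_of_nontrivial
      (Set.not_subsingleton_iff.1 h) h_finite
  obtain ⟨g, hg⟩ := hf (σ (vertex 0))
  have h_eq : f.comp σ = (translate g).comp ((ContinuousMap.const X q).comp σ) :=
    ContinuousMap.ext fun t ↦ (h_const ⟨t, rfl⟩ ⟨vertex 0, rfl⟩).trans hg.symm
  rw [LinearMap.comp_apply, LinearMap.comp_apply, pushforward_single, pushforward_single, h_eq,
    ← pushforward_single (translate g), chainNorm_pushforward_translate]

theorem exists_chainNorm_sub_boundary_eq_zero [T1Space X] (hH : IsOrbitContraction G q H)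
    {a : Chain (k + 1) X} (ha : chainNorm G (boundary a) = 0) :
    ∃ e, chainNorm G (a - boundary e) = 0 := by
  let ρ : C(X, X) := H.comp ⟨fun x ↦ (x, 0), by fun_prop⟩
  obtain ⟨b, hb⟩ := exists_boundary_eq_of_unit (c := pushforward (ContinuousMap.const X ()) a) <| by
    rw [← pushforward_boundary]
    exact pushforward_eq_zero_of_chainNorm_eq_zero (fun _ _ ↦ rfl) ha
  refine ⟨prism H (k + 1) a + pushforward (ContinuousMap.const Unit q) b, ?_⟩
  have h_const : pushforward (ContinuousMap.const Unit q) (boundary b) =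
      pushforward (ContinuousMap.const X q) a := by
    rw [hb, pushforward_pushforward, ContinuousMap.const_comp]
  have h_prism := boundary_prism (f := ρ) (g := ContinuousMap.id X) (fun _ ↦ rfl) hH.apply_one a
  rw [map_add, h_prism, pushforward_id, ← pushforward_boundary, h_const]
  have h_sub : a - (a - pushforward ρ a - prism H k (boundary a) +
      pushforward (ContinuousMap.const X q) a) =
      pushforward ρ a - pushforward (ContinuousMap.const X q) a + prism H k (boundary a) := by abel
  rw [h_sub, map_add, map_sub, chainNorm_pushforward_of_mem_orbit hH.apply_zero_mem, sub_self,
    chainNorm_prism hH.map_smul, ha, map_zero, add_zero]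

theorem exists_approximate_lift [T1Space X] (hH : IsOrbitContraction G q H) {p : C(X, Y)}
    (hp : IsOpenQuotientMap p) (h_orbit : ∀ {x y}, p x = p y ↔ x ∈ MulAction.orbit G y)
    {a : Chain (k + 1) X} (ha : chainNorm G (boundary a) = 0) {d : Chain (k + 2) Y}
    (hd : boundary d = pushforward p a) :
    ∃ e f, chainNorm G (a - boundary e) = 0 ∧ boundary f = pushforward p e - d := by
  obtain ⟨e, he⟩ := exists_chainNorm_sub_boundary_eq_zero hH ha
  have h := pushforward_eq_zero_of_chainNorm_eq_zero (p := p) (fun g x ↦ h_orbit.2 ⟨g, rfl⟩) he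
  rw [map_sub, sub_eq_zero, pushforward_boundary] at h
  obtain ⟨f, hf⟩ := exists_boundary_eq_of_isOrbitContraction hH hp h_orbit
    (c := pushforward p e - d) (by rw [map_sub, ← h, hd, sub_self])
  exact ⟨e, f, he, hf⟩

end OrbitContraction

section OrbitMap

variable (G X : Type*) [Group G] [TopologicalSpace X] [MulAction G X]

/-- The orbit space, with the quotient topology. -/
abbrev OrbitSpace : Type _ := MulAction.orbitRel.Quotient G X

/-- The projection to the orbit space. -/
def orbitMap : C(X, OrbitSpace G X) := ⟨Quotient.mk _, continuous_quotient_mk'⟩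

variable {G X}

theorem orbitMap_smul (g : G) (x : X) : orbitMap G X (g • x) = orbitMap G X x :=
  Quotient.sound ⟨g, rfl⟩

theorem orbitMap_eq_iff {x y : X} : orbitMap G X x = orbitMap G X y ↔ x ∈ MulAction.orbit G y :=
  Quotient.eq

instance (V : Set (OrbitSpace G X)) : MulAction G (orbitMap G X ⁻¹' V) where
  smul g x := ⟨g • x.1, by rw [Set.mem_preimage, orbitMap_smul]; exact x.2⟩
  one_smul x := Subtype.ext (one_smul G x.1)
  mul_smul g h x := Subtype.ext (mul_smul g h x.1)

instance [ContinuousConstSMul G X] (V : Set (OrbitSpace G X)) :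
    ContinuousConstSMul G (orbitMap G X ⁻¹' V) where
  continuous_const_smul g :=
    ((continuous_const_smul g).comp continuous_subtype_val).subtype_mk _

/-- The part of `X` over `V` is equivariantly contractible to an orbit. -/
def IsOrbitContractible (V : Set (OrbitSpace G X)) : Prop :=
  ∃ (q : orbitMap G X ⁻¹' V) (H : C((orbitMap G X ⁻¹' V) × unitInterval, orbitMap G X ⁻¹' V)),
    IsOrbitContraction G q H

variable [ContinuousConstSMul G X]

theorem isOpenQuotientMap_orbitMap : IsOpenQuotientMap (orbitMap G X) :=
  MulAction.isOpenQuotientMap_quotientMk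

variable {k : ℕ} [Fintype G]

theorem chainNorm_pushforward_inclusion (V : Set (OrbitSpace G X))
    (x : Chain k (orbitMap G X ⁻¹' V)) :
    chainNorm G (pushforward (inclusion _) x) = pushforward (inclusion _) (chainNorm G x) := by
  simp only [chainNorm_apply, map_sum, pushforward_pushforward]
  rfl

theorem exists_approximate_lift_mem_chainsIn [T1Space X]
    {V : Set (OrbitSpace G X)} (hV : IsOrbitContractible V)
    {a : Chain (k + 1) X} (haV : a ∈ chainsIn (orbitMap G X ⁻¹' V) (k + 1))
    (ha : chainNorm G (boundary a) = 0) {d : Chain (k + 2) (OrbitSpace G X)}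
    (hdV : d ∈ chainsIn V (k + 2)) (hd : boundary d = pushforward (orbitMap G X) a) :
    ∃ e ∈ chainsIn (orbitMap G X ⁻¹' V) (k + 2), ∃ f ∈ chainsIn V (k + 3),
      chainNorm G (a - boundary e) = 0 ∧ boundary f = pushforward (orbitMap G X) e - d := by
  obtain ⟨q, H, hH⟩ := hV
  obtain ⟨a, rfl⟩ := exists_pushforward_inclusion_eq haV
  obtain ⟨d, rfl⟩ := exists_pushforward_inclusion_eq hdV
  let p := (orbitMap G X).restrictPreimage V
  have h_incl {i : ℕ} (x : Chain i (orbitMap G X ⁻¹' V)) :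
      pushforward (orbitMap G X) (pushforward (inclusion _) x) =
        pushforward (inclusion V) (pushforward p x) := by
    rw [pushforward_pushforward, pushforward_pushforward]
    rfl
  have hp : IsOpenQuotientMap p :=
    ⟨Set.restrictPreimage_surjective V isOpenQuotientMap_orbitMap.surjective, p.continuous,
      isOpenQuotientMap_orbitMap.isOpenMap.restrictPreimage V⟩
  have h_orbit {x y : orbitMap G X ⁻¹' V} : p x = p y ↔ x ∈ MulAction.orbit G y :=
    Subtype.ext_iff.trans <| orbitMap_eq_iff.trans <|
      ⟨fun ⟨g, hg⟩ ↦ ⟨g, Subtype.ext hg⟩, fun ⟨g, hg⟩ ↦ ⟨g, congrArg Subtype.val hg⟩⟩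
  rw [← pushforward_boundary, chainNorm_pushforward_inclusion,
    map_eq_zero_iff _ (pushforward_inclusion_injective _)] at ha
  rw [h_incl, ← pushforward_boundary] at hd
  obtain ⟨e, f, he, hf⟩ := exists_approximate_lift hH hp h_orbit ha
    (pushforward_inclusion_injective V hd)
  refine ⟨_, pushforward_inclusion_mem e, _, pushforward_inclusion_mem f, ?_, ?_⟩
  · rw [← pushforward_boundary, ← map_sub, chainNorm_pushforward_inclusion, he, map_zero]
  · rw [← pushforward_boundary, hf, map_sub, h_incl]

end OrbitMap

section StarRefinement

/-- The members of `P` meeting a given one of them lie in a single `W y`. Only finitely many are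
considered at a time, so that the radii of the balls containing them have a maximum. -/
def IsStarRefinement {Y : Type*} (P : LowerSet (Set Y)) (W : Y → Set Y) : Prop :=
  ∀ F : Set (Set Y), F.Finite → (∀ A ∈ F, A ∈ P) → ∀ B ∈ F, (∀ A ∈ F, (A ∩ B).Nonempty) →
    ∃ y, ∀ A ∈ F, A ⊆ W y

theorem exists_isStarRefinement {Y : Type*} [TopologicalSpace Y]
    [TopologicalSpace.PseudoMetrizableSpace Y] {W : Y → Set Y} (hW : ∀ y, W y ∈ 𝓝 y) :
    ∃ P : LowerSet (Set Y), (∀ y, ∃ U ∈ P, U ∈ 𝓝 y) ∧ IsStarRefinement P W := by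
  let _ := TopologicalSpace.pseudoMetrizableSpacePseudoMetric Y
  choose r hr hrW using fun y ↦ Metric.mem_nhds_iff.1 (hW y)
  refine ⟨⟨{A | ∃ y, A ⊆ Metric.ball y (r y / 5)}, fun A B hBA ⟨y, hA⟩ ↦ ⟨y, hBA.trans hA⟩⟩,
    fun y ↦ ⟨_, ⟨y, subset_rfl⟩, Metric.ball_mem_nhds y (div_pos (hr y) (by norm_num))⟩,
    fun F hF hP B hB hAB ↦ ?_⟩
  obtain ⟨z, -⟩ := hAB B hB
  have : Nonempty Y := ⟨z⟩
  choose! c hc using hP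
  obtain ⟨M, hM, h_max⟩ := Set.exists_max_image F (fun A ↦ r (c A)) hF ⟨B, hB⟩
  refine ⟨c M, fun A hA w hw ↦ hrW _ ?_⟩
  obtain ⟨u, huA, huB⟩ := hAB A hA
  obtain ⟨v, hvM, hvB⟩ := hAB M hM
  have hw' := Metric.mem_ball.1 (hc A hA hw)
  have huA' := Metric.mem_ball'.1 (hc A hA huA)
  have huB' := Metric.mem_ball.1 (hc B hB huB)
  have hvB' := Metric.mem_ball'.1 (hc B hB hvB)
  have hvM' := Metric.mem_ball.1 (hc M hM hvM)
  have hAM := h_max A hA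
  have hBM := h_max B hB
  rw [Metric.mem_ball]
  calc dist w (c M)
      ≤ dist w (c A) + dist (c A) u + dist u (c B) + dist (c B) v + dist v (c M) := by
        linarith [dist_triangle w (c A) (c M), dist_triangle (c A) u (c M),
          dist_triangle u (c B) (c M), dist_triangle (c B) v (c M)]
    _ < r (c M) := by linarith

end StarRefinement

section Transfer

variable {G X : Type*} [Group G] [TopologicalSpace X] [MulAction G X]

variable (G X) in
/-- Points of the orbit space have arbitrarily small equivariantly contractible neighbourhoods. -/
def LocallyOrbitContractible : Prop :=
  ∀ y : OrbitSpace G X, ∀ U ∈ 𝓝 y, ∃ V ∈ 𝓝 y, V ⊆ U ∧ IsOrbitContractible V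

variable [ContinuousConstSMul G X] [Fintype G] {k : ℕ}

/-- A transfer in a single degree, defined on `Q`-small chains and with values controlled by `P`.
It lifts a cycle `x` to a chain whose norm is a cycle, up to the boundary of `D x`. -/
structure IsApproximateTransfer (P Q : LowerSet (Set (OrbitSpace G X)))
    (τ : Chain (k + 1) (OrbitSpace G X) →ₗ[ℤ] Chain (k + 1) X)
    (D : Chain (k + 1) (OrbitSpace G X) →ₗ[ℤ] Chain (k + 2) (OrbitSpace G X)) : Prop where
  exists_support : ∀ σ : SingularSimplex (k + 1) (OrbitSpace G X), Set.range σ ∈ Q →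
    ∃ V ∈ P, Set.range σ ⊆ V ∧ τ (Finsupp.single σ 1) ∈ chainsIn (orbitMap G X ⁻¹' V) (k + 1) ∧
      D (Finsupp.single σ 1) ∈ chainsIn V (k + 2)
  chainNorm_boundary_eq_zero : ∀ x ∈ smallChains Q (k + 1), boundary x = 0 →
    chainNorm G (boundary (τ x)) = 0
  boundary_eq : ∀ x ∈ smallChains Q (k + 1), boundary x = 0 →
    boundary (D x) = pushforward (orbitMap G X) (τ x) - x

variable (G X k) in
/-- Approximate transfers in degree `k` exist subordinate to every open cover. -/
def HasApproximateTransfers : Prop :=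
  ∀ P : LowerSet (Set (OrbitSpace G X)), (∀ y, ∃ U ∈ P, U ∈ 𝓝 y) →
    ∃ Q : LowerSet (Set (OrbitSpace G X)), (∀ y, ∃ U ∈ Q, U ∈ 𝓝 y) ∧
      ∃ (τ : Chain (k + 1) (OrbitSpace G X) →ₗ[ℤ] Chain (k + 1) X)
        (D : Chain (k + 1) (OrbitSpace G X) →ₗ[ℤ] Chain (k + 2) (OrbitSpace G X)),
        IsApproximateTransfer P Q τ D

theorem hasApproximateTransfers_zero : HasApproximateTransfers G X 0 := by
  intro P hP
  let s := Function.surjInv (isOpenQuotientMap_orbitMap (G := G) (X := X)).surjective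
  have hs (y : OrbitSpace G X) : orbitMap G X (s y) = y := Function.surjInv_eq _ y
  let lift (σ : SingularSimplex 1 (OrbitSpace G X)) : SingularSimplex 1 X :=
    ContinuousMap.const _ (s (σ (vertex 0)))
  have h_lift (x : Chain 1 (OrbitSpace G X)) :
      pushforward (orbitMap G X) (Finsupp.lmapDomain ℤ ℤ lift x) = x := by
    refine apply_eq_of_single_eq (f := pushforward (orbitMap G X) ∘ₗ Finsupp.lmapDomain ℤ ℤ lift)
      (g := LinearMap.id) (fun σ ↦ ?_) x
    rw [LinearMap.comp_apply, Finsupp.lmapDomain_apply, Finsupp.mapDomain_single,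
      pushforward_single]
    congr 1
    exact ContinuousMap.ext fun t ↦ (hs _).trans (congrArg σ (Subsingleton.elim _ _))
  refine ⟨P, hP, Finsupp.lmapDomain ℤ ℤ lift, 0, ⟨fun σ hσ ↦ ⟨_, hσ, subset_rfl, ?_, ?_⟩,
    fun x _ hx ↦ ?_, fun x _ _ ↦ ?_⟩⟩
  · rw [Finsupp.lmapDomain_apply, Finsupp.mapDomain_single]
    refine Finsupp.single_mem_supported ℤ _ (Set.range_subset_iff.2 fun t ↦ ?_)
    exact ⟨vertex 0, (hs _).symm⟩
  · exact Submodule.zero_mem _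
  · have h := congrArg boundary (h_lift x)
    rw [← pushforward_boundary, hx] at h
    rw [eq_zero_of_pushforward_eq_zero h, map_zero]
  · rw [h_lift, sub_self, LinearMap.zero_apply, map_zero]

theorem IsApproximateTransfer.exists_extension [T1Space X] {P Q R : LowerSet (Set (OrbitSpace G X))}
    {W : OrbitSpace G X → Set (OrbitSpace G X)}
    {τ : Chain (k + 1) (OrbitSpace G X) →ₗ[ℤ] Chain (k + 1) X}
    {D : Chain (k + 1) (OrbitSpace G X) →ₗ[ℤ] Chain (k + 2) (OrbitSpace G X)}
    (h : IsApproximateTransfer R Q τ D)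
    (hW : ∀ y, W y ∈ P ∧ IsOrbitContractible (W y))
    (hR : IsStarRefinement R W) {σ : SingularSimplex (k + 2) (OrbitSpace G X)}
    (hσ : Set.range σ ∈ Q ⊓ R) :
    ∃ V ∈ P, Set.range σ ⊆ V ∧ ∃ e ∈ chainsIn (orbitMap G X ⁻¹' V) (k + 2),
      ∃ f ∈ chainsIn V (k + 3),
        chainNorm G (τ (boundary (Finsupp.single σ 1)) - boundary e) = 0 ∧
        boundary f = pushforward (orbitMap G X) e -
          (Finsupp.single σ 1 + D (boundary (Finsupp.single σ 1))) := by
  have h_face (i : Fin (k + 2)) : Set.range (reindex i.succAbove σ) ⊆ Set.range σ :=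
    Set.range_comp_subset_range _ σ
  choose V hVR hV hτ hD using fun i ↦ h.exists_support _ (Q.lower (h_face i) hσ.1)
  obtain ⟨y, hy⟩ := hR (insert (Set.range σ) (Set.range V)) ((Set.finite_range V).insert _)
    (Set.forall_mem_insert.2 ⟨hσ.2, Set.forall_mem_range.2 hVR⟩) _ (Set.mem_insert _ _)
    (Set.forall_mem_insert.2 ⟨⟨σ (vertex 0), ⟨_, rfl⟩, ⟨_, rfl⟩⟩, Set.forall_mem_range.2 fun i ↦
      ⟨reindex i.succAbove σ (vertex 0), hV i ⟨_, rfl⟩, h_face i ⟨_, rfl⟩⟩⟩)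
  rw [Set.forall_mem_insert, Set.forall_mem_range] at hy
  have h_small : boundary (Finsupp.single σ 1) ∈ smallChains Q (k + 1) :=
    boundary_mem_smallChains (Finsupp.single_mem_supported ℤ _ hσ.1)
  have haW : τ (boundary (Finsupp.single σ 1)) ∈ chainsIn (orbitMap G X ⁻¹' W y) (k + 1) := by
    rw [boundary_single, map_sum]
    refine Submodule.sum_mem _ fun i _ ↦ ?_
    rw [map_smul]
    exact Submodule.smul_mem _ _ (chainsIn_mono (Set.preimage_mono (hy.2 i)) (hτ i))
  have hdW : Finsupp.single σ 1 + D (boundary (Finsupp.single σ 1)) ∈ chainsIn (W y) (k + 2) := by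
    refine Submodule.add_mem _ (Finsupp.single_mem_supported ℤ _ hy.1) ?_
    rw [boundary_single, map_sum]
    refine Submodule.sum_mem _ fun i _ ↦ ?_
    rw [map_smul]
    exact Submodule.smul_mem _ _ (chainsIn_mono (hy.2 i) (hD i))
  exact ⟨W y, (hW y).1, hy.1, exists_approximate_lift_mem_chainsIn (hW y).2 haW
    (h.chainNorm_boundary_eq_zero _ h_small (boundary_boundary _)) hdW
    (by rw [map_add, h.boundary_eq _ h_small (boundary_boundary _), add_sub_cancel])⟩

variable [TopologicalSpace.PseudoMetrizableSpace (OrbitSpace G X)] [T1Space X]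

theorem HasApproximateTransfers.succ (hX : LocallyOrbitContractible G X)
    (h : HasApproximateTransfers G X k) : HasApproximateTransfers G X (k + 1) := by
  intro P hP
  choose U hUP hU using hP
  choose W hW hWU hW_contr using fun y ↦ hX y (U y) (hU y)
  obtain ⟨R, hR, hR_star⟩ := exists_isStarRefinement hW
  obtain ⟨Q, hQ, τ, D, hτ⟩ := h R hR
  choose! V hVP hV e he f hf h_norm h_bdry using fun σ : SingularSimplex (k + 2) (OrbitSpace G X) ↦
    hτ.exists_extension (σ := σ) (fun y ↦ ⟨P.lower (hWU y) (hUP y), hW_contr y⟩) hR_star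
  refine ⟨Q ⊓ R, fun y ↦ ?_, Finsupp.linearCombination ℤ e, Finsupp.linearCombination ℤ f,
    ⟨fun σ hσ ↦ ⟨V σ, hVP σ hσ, hV σ hσ, ?_, ?_⟩, fun x hx hx_cycle ↦ ?_,
      fun x hx hx_cycle ↦ ?_⟩⟩
  · obtain ⟨A, hAQ, hA⟩ := hQ y
    obtain ⟨B, hBR, hB⟩ := hR y
    exact ⟨A ∩ B, ⟨Q.lower Set.inter_subset_left hAQ, R.lower Set.inter_subset_right hBR⟩,
      Filter.inter_mem hA hB⟩
  · rw [Finsupp.linearCombination_single, one_smul]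
    exact he σ hσ
  · rw [Finsupp.linearCombination_single, one_smul]
    exact hf σ hσ
  · have h_mem := map_mem_of_mem_supported hx
      (chainNorm G ∘ₗ (τ ∘ₗ boundary - boundary ∘ₗ Finsupp.linearCombination ℤ e)) (N := ⊥)
      fun σ hσ ↦ by simpa using h_norm σ hσ
    simpa [hx_cycle] using h_mem
  · have h_mem := map_mem_of_mem_supported hx
      (boundary ∘ₗ Finsupp.linearCombination ℤ f - (pushforward (orbitMap G X) ∘ₗ
        Finsupp.linearCombination ℤ e - (LinearMap.id + D ∘ₗ boundary))) (N := ⊥)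
      fun σ hσ ↦ by simpa [sub_eq_zero] using h_bdry σ hσ
    simpa [hx_cycle, sub_eq_zero] using h_mem

theorem hasApproximateTransfers (hX : LocallyOrbitContractible G X) (k : ℕ) :
    HasApproximateTransfers G X k := by
  induction k with
  | zero => exact hasApproximateTransfers_zero
  | succ k ih => exact ih.succ hX

theorem exists_boundary_eq_card_smul (hX : LocallyOrbitContractible G X)
    (h_inv : ∀ c : Chain (k + 1) X, boundary c = 0 →
      (∀ g : G, pushforward (translate g) c = c) → ∃ b, boundary b = c)
    {z : Chain (k + 1) (OrbitSpace G X)} (hz : boundary z = 0) :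
    ∃ b, boundary b = (Fintype.card G : ℤ) • z := by
  obtain ⟨Q, hQ, τ, D, hτ⟩ := hasApproximateTransfers hX k ⊤ fun _ ↦
    ⟨Set.univ, trivial, Filter.univ_mem⟩
  obtain ⟨e, he⟩ := exists_sub_boundary_mem_smallChains hQ (c := z) (hz ▸ Submodule.zero_mem _)
  have h_cycle : boundary (z - boundary e) = 0 := by rw [map_sub, hz, boundary_boundary, sub_zero]
  obtain ⟨b, hb⟩ := h_inv (chainNorm G (τ (z - boundary e)))
    (by rw [← chainNorm_boundary, hτ.chainNorm_boundary_eq_zero _ he h_cycle])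
    fun g ↦ pushforward_translate_chainNorm G g _
  have h_card := pushforward_chainNorm (G := G) orbitMap_smul (τ (z - boundary e))
  have h_push := hτ.boundary_eq _ he h_cycle
  refine ⟨pushforward (orbitMap G X) b +
    (Fintype.card G : ℤ) • (e - D (z - boundary e)), ?_⟩
  rw [map_add, ← pushforward_boundary, hb, h_card, map_smul, ← smul_add, map_sub boundary e,
    h_push]
  congr 1
  abel

end Transfer

/-! ### Normalization of configurations -/

/-- The relation of differing by an affine transformation `z ↦ b * z + a` of the plane. -/
def AffinelyEquivalent {ι : Type*} (w w' : ι → ℂ) : Prop :=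
  ∃ a b : ℂ, b ≠ 0 ∧ ∀ i, w' i = b * w i + a

namespace AffinelyEquivalent

variable {ι κ : Type*} {w w' w'' : ι → ℂ}

theorem refl (w : ι → ℂ) : AffinelyEquivalent w w :=
  ⟨0, 1, one_ne_zero, fun i ↦ by rw [one_mul, add_zero]⟩

theorem symm (h : AffinelyEquivalent w w') : AffinelyEquivalent w' w := by
  obtain ⟨a, b, hb, h⟩ := h
  refine ⟨-(b⁻¹ * a), b⁻¹, inv_ne_zero hb, fun i ↦ ?_⟩
  rw [h, mul_add, inv_mul_cancel_left₀ hb, add_neg_cancel_right]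

theorem trans (h : AffinelyEquivalent w w') (h' : AffinelyEquivalent w' w'') :
    AffinelyEquivalent w w'' := by
  obtain ⟨a, b, hb, h⟩ := h
  obtain ⟨a', b', hb', h'⟩ := h'
  exact ⟨b' * a + a', b' * b, mul_ne_zero hb' hb, fun i ↦ by rw [h', h]; ring⟩

theorem comp (h : AffinelyEquivalent w w') (f : κ → ι) : AffinelyEquivalent (w ∘ f) (w' ∘ f) := by
  obtain ⟨a, b, hb, h⟩ := h
  exact ⟨a, b, hb, fun i ↦ h (f i)⟩

theorem const_smul_right {b : ℂ} (hb : b ≠ 0) (w : ι → ℂ) : AffinelyEquivalent w (b • w) :=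
  ⟨0, b, hb, fun _ ↦ (add_zero _).symm⟩

theorem injective (h : AffinelyEquivalent w w') (hw : Function.Injective w) :
    Function.Injective w' := by
  obtain ⟨a, b, hb, h⟩ := h
  intro i j hij
  rw [h, h] at hij
  exact hw (mul_left_cancel₀ hb (add_right_cancel hij))

end AffinelyEquivalent

section Normalization

variable {m k : ℕ}

theorem affinelyEquivalent_normalization {w : Fin (m + 2) → ℂ} (hw : Function.Injective w) :
    AffinelyEquivalent w fun i ↦ (w i - w 0) / (w 1 - w 0) :=
  ⟨-w 0 / (w 1 - w 0), (w 1 - w 0)⁻¹, inv_ne_zero (sub_ne_zero.2 (hw.ne one_ne_zero)),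
    fun i ↦ by ring⟩

/-- The affine transformation of a configuration that puts its first two points at `0` and `1`. -/
def normalize : C(OrdConfig (m + 2) Set.univ, NormalizedConfig m) where
  toFun w := ⟨fun i ↦ (w.1 i - w.1 0) / (w.1 1 - w.1 0),
    (affinelyEquivalent_normalization w.2.1).injective w.2.1, by simp only [sub_self, zero_div],
    div_self (sub_ne_zero.2 (w.2.1.ne one_ne_zero))⟩
  continuous_toFun := by
    have h (i : Fin (m + 2)) : Continuous fun w : OrdConfig (m + 2) Set.univ ↦ w.1 i :=
      (continuous_apply i).comp continuous_subtype_val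
    exact .subtype_mk (continuous_pi fun i ↦ ((h i).sub (h 0)).div ((h 1).sub (h 0))
      fun w ↦ sub_ne_zero.2 (w.2.1.ne one_ne_zero)) _

theorem affinelyEquivalent_normalize (w : OrdConfig (m + 2) Set.univ) :
    AffinelyEquivalent w.1 (normalize w).1 :=
  affinelyEquivalent_normalization w.2.1

namespace NormalizedConfig

theorem eq_of_affinelyEquivalent {z z' : NormalizedConfig m}
    (h : AffinelyEquivalent z.1 z'.1) : z = z' := by
  obtain ⟨a, b, -, h⟩ := h
  have ha := h 0
  rw [z.2.2.1, z'.2.2.1, mul_zero, zero_add] at ha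
  have hb := h 1
  rw [z.2.2.2, z'.2.2.2, mul_one, ← ha, add_zero] at hb
  exact Subtype.ext <| funext fun i ↦ by rw [h, ← ha, ← hb, one_mul, add_zero]

theorem normalize_eq_iff {w : OrdConfig (m + 2) Set.univ} {z : NormalizedConfig m} :
    normalize w = z ↔ AffinelyEquivalent w.1 z.1 :=
  ⟨fun h ↦ h ▸ affinelyEquivalent_normalize w,
    fun h ↦ eq_of_affinelyEquivalent ((affinelyEquivalent_normalize w).symm.trans h)⟩

/-! ### The action of the symmetric group -/

/-- Relabelling followed by normalization; the inverse makes this a left action. -/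
instance : SMul (Equiv.Perm (Fin (m + 2))) (NormalizedConfig m) where
  smul σ z := normalize ⟨z.1 ∘ ⇑σ⁻¹, z.2.1.comp (Equiv.injective _), fun _ ↦ trivial⟩

theorem smul_eq_iff {σ : Equiv.Perm (Fin (m + 2))} {z z' : NormalizedConfig m} :
    σ • z = z' ↔ AffinelyEquivalent (z.1 ∘ ⇑σ⁻¹) z'.1 := normalize_eq_iff

theorem affinelyEquivalent_smul (σ : Equiv.Perm (Fin (m + 2))) (z : NormalizedConfig m) :
    AffinelyEquivalent (z.1 ∘ ⇑σ⁻¹) (σ • z).1 := smul_eq_iff.1 rfl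

theorem smul_apply (σ : Equiv.Perm (Fin (m + 2))) (z : NormalizedConfig m) (i : Fin (m + 2)) :
    (σ • z).1 i = (z.1 (σ⁻¹ i) - z.1 (σ⁻¹ 0)) / (z.1 (σ⁻¹ 1) - z.1 (σ⁻¹ 0)) := rfl

instance : MulAction (Equiv.Perm (Fin (m + 2))) (NormalizedConfig m) where
  one_smul z := smul_eq_iff.2 (.refl _)
  mul_smul σ τ z := smul_eq_iff.2 <| by
    rw [mul_inv_rev]
    exact ((affinelyEquivalent_smul τ z).comp _).trans (affinelyEquivalent_smul σ (τ • z))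

instance : ContinuousConstSMul (Equiv.Perm (Fin (m + 2))) (NormalizedConfig m) where
  continuous_const_smul σ := normalize.continuous.comp <| .subtype_mk
    (continuous_pi fun i ↦ (point (σ⁻¹ i)).continuous) _

theorem edgeFunction_comp_translate (σ : Equiv.Perm (Fin (m + 2)))
    {e : Fin (m + 2) × Fin (m + 2)} (h : e.1 ≠ e.2) :
    (edgeFunction e).comp (translate σ) =
      edgeFunction (Prod.map ⇑σ⁻¹ ⇑σ⁻¹ e) / edgeFunction (σ⁻¹ 0, σ⁻¹ 1) := by
  ext z
  rw [ContinuousMap.comp_apply, edgeFunction_apply h, ContinuousMap.div_apply,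
    Units.val_div_eq_div_val, edgeFunction_apply (by simpa using h),
    edgeFunction_apply (by simp)]
  change (σ • z).1 e.2 - (σ • z).1 e.1 = _
  rw [smul_apply, smul_apply, ← sub_div, sub_sub_sub_cancel_right]
  rfl

theorem relativePairing_homologyPushforward_translate (σ : Equiv.Perm (Fin (m + 2)))
    (x : TotalHomology (NormalizedConfig m)) {l : List (Fin (m + 2) × Fin (m + 2))}
    (hl : ∀ e ∈ l, e.1 ≠ e.2) :
    relativePairing (homologyPushforward (translate σ) x) (l.map edgeFunction) =
      relativePairing x ((l.map (Prod.map ⇑σ⁻¹ ⇑σ⁻¹)).map edgeFunction) := by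
  rw [relativePairing_homologyPushforward]
  refine .trans (congrArg _ ?_) (relativePairing_map_div x (edgeFunction (σ⁻¹ 0, σ⁻¹ 1)) _)
  rw [List.map_map, List.map_map, List.map_map]
  exact List.map_congr_left fun e he ↦ edgeFunction_comp_translate σ (hl e he)

theorem exists_boundary_eq_of_forall_pushforward_translate_eq
    (c : Chain (k + 2) (NormalizedConfig m)) (hc : boundary c = 0)
    (h_inv : ∀ σ : Equiv.Perm (Fin (m + 2)), pushforward (translate σ) c = c) :
    ∃ b, boundary b = c := by
  obtain ⟨x, hx⟩ := exists_represents hc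
  have hx_inv (σ : Equiv.Perm (Fin (m + 2))) : homologyPushforward (translate σ) x = x :=
    Represents.unique (h_inv σ ▸ hx.pushforward (translate σ)) hx
  refine exists_boundary_eq_of_vanishesOnForests hx fun P hP h_length ↦
    (arnoldRelations_relativePairing x).map_forestEdges_eq_zero (fun σ l hl ↦ ?_) hP (by lia)
  have h := relativePairing_homologyPushforward_translate σ⁻¹ x hl
  rwa [hx_inv, inv_inv, eq_comm] at h

end NormalizedConfig

end Normalization

/-! ### Local contractibility of orbit spaces -/

section OrbitContractible

variable {G X N : Type*} [Group G] [TopologicalSpace X] [MulAction G X] [ContinuousConstSMul G X]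
  [TopologicalSpace N]

theorem exists_isOrbitContraction_of_isOpenMap {f : C(N, X)} (hf : IsOpenMap f)
    (hf_surj : ∀ x, ∃ (g : G) (y : N), g • f y = x) {q : N} {h : C(N × unitInterval, N)}
    (h_zero : ∀ y, h (y, 0) = q) (h_one : ∀ y, h (y, 1) = y)
    (h_smul : ∀ (g : G) y y' t, f y' = g • f y → f (h (y', t)) = g • f (h (y, t))) :
    ∃ H : C(X × unitInterval, X), IsOrbitContraction G (f q) H := by
  let _ : TopologicalSpace G := ⊥
  have _ : DiscreteTopology G := ⟨rfl⟩
  let act (p : G × N) : X := p.1 • f p.2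
  have h_act : IsOpenQuotientMap act :=
    ⟨fun x ↦ let ⟨g, y, hx⟩ := hf_surj x; ⟨(g, y), hx⟩,
      continuous_prod_of_discrete_left.2 fun g ↦ f.continuous.const_smul g,
      isOpenMap_prod_of_discrete_left.2 fun g ↦ (isOpenMap_smul g).comp hf⟩
  let s := Function.surjInv h_act.surjective
  let H (p : X × unitInterval) : X := (s p.1).1 • f (h ((s p.1).2, p.2))
  have H_act (g : G) (y : N) (t : unitInterval) : H (g • f y, t) = g • f (h (y, t)) := by
    have hs : (s (g • f y)).1 • f (s (g • f y)).2 = g • f y :=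
      Function.surjInv_eq h_act.surjective (g • f y)
    have := h_smul ((s (g • f y)).1⁻¹ * g) y _ t <| by rw [mul_smul, eq_inv_smul_iff, hs]
    rw [mul_smul, eq_inv_smul_iff] at this
    exact this
  have H_comp : H ∘ Prod.map act id = fun p ↦ p.1.1 • f (h (p.1.2, p.2)) :=
    funext fun p ↦ H_act p.1.1 p.1.2 p.2
  have H_cont : Continuous H := by
    rw [← (h_act.prodMap IsOpenQuotientMap.id).continuous_comp_iff, H_comp]
    exact h_act.continuous.comp (g := act)
      (f := fun p : (G × N) × unitInterval ↦ (p.1.1, h (p.1.2, p.2))) (by fun_prop)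
  refine ⟨⟨H, H_cont⟩, fun x ↦ ?_, fun x ↦ ?_, fun g x t ↦ ?_⟩ <;>
    obtain ⟨g', y, rfl⟩ := hf_surj x
  · exact ⟨g', .trans (by rw [h_zero]) (H_act g' y 0).symm⟩
  · exact (H_act g' y 1).trans (by rw [h_one])
  · change H (g • g' • f y, t) = g • H (g' • f y, t)
    rw [← mul_smul, H_act, H_act, mul_smul]

theorem isOrbitContractible_image {N : Set X} (hN : IsOpen N) {q : N} {h : C(N × unitInterval, N)}
    (h_zero : ∀ x, h (x, 0) = q) (h_one : ∀ x, h (x, 1) = x)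
    (h_smul : ∀ (g : G) (x x' : N) t, (x' : X) = g • (x : X) →
      (h (x', t) : X) = g • (h (x, t) : X)) :
    IsOrbitContractible (orbitMap G X '' N) := by
  let f : C(N, orbitMap G X ⁻¹' (orbitMap G X '' N)) :=
    ⟨fun x ↦ ⟨x, x, x.2, rfl⟩, continuous_subtype_val.subtype_mk _⟩
  have hf_surj (x : orbitMap G X ⁻¹' (orbitMap G X '' N)) : ∃ (g : G) (y : N), g • f y = x := by
    obtain ⟨x, y, hy, hxy⟩ := x
    obtain ⟨g, hg⟩ := orbitMap_eq_iff.1 hxy.symm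
    exact ⟨g, ⟨y, hy⟩, Subtype.ext hg⟩
  exact ⟨f q, exists_isOrbitContraction_of_isOpenMap (.subtype_mk hN.isOpenMap_subtype_val _)
    hf_surj h_zero h_one fun g x x' t hx ↦
      Subtype.ext (h_smul g x x' t (congrArg Subtype.val hx))⟩

theorem exists_mem_nhds_forall_smul_eq_self [Finite G] [T2Space X] (q : X) :
    ∃ U ∈ 𝓝 q, ∀ g : G, ∀ x ∈ U, g • x ∈ U → g • q = q := by
  have h (g : G) : ∃ U ∈ 𝓝 q, ∀ x ∈ U, g • x ∈ U → g • q = q := by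
    obtain hg | hg := eq_or_ne (g • q) q
    · exact ⟨Set.univ, Filter.univ_mem, fun _ _ _ ↦ hg⟩
    · obtain ⟨A, B, hA, hB, hAB⟩ := t2_separation_nhds hg
      exact ⟨(g • ·) ⁻¹' A ∩ B, Filter.inter_mem ((continuous_const_smul g).continuousAt hA) hB,
        fun x hx hgx ↦ (Set.disjoint_left.1 hAB hx.1 hgx.2).elim⟩
  choose U hU h using h
  exact ⟨⋂ g, U g, Filter.iInter_mem.2 hU, fun g x hx hgx ↦
    h g x (Set.mem_iInter.1 hx g) (Set.mem_iInter.1 hgx g)⟩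

end OrbitContractible

/-! ### Slices for the affine group -/

section Balance

open scoped BigOperators

variable {ι κ : Type*} [Fintype ι] [Fintype κ]

theorem balance_smul {R : Type*} [DistribSMul R ℂ] [SMulCommClass R ℚ≥0 ℂ] (c : R) (w : ι → ℂ) :
    Fintype.balance (c • w) = c • Fintype.balance w := by
  ext i
  simp only [Fintype.balance_apply, Pi.smul_apply, smul_sub, Finset.smul_expect]

theorem balance_comp_equiv (w : ι → ℂ) (e : κ ≃ ι) :
    Fintype.balance (w ∘ e) = Fintype.balance w ∘ e := by
  ext i
  simp only [Fintype.balance_apply, Function.comp_apply,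
    Fintype.expect_equiv e (fun j ↦ w (e j)) w fun _ ↦ rfl]

@[fun_prop]
theorem continuous_balance : Continuous (Fintype.balance : (ι → ℂ) → ι → ℂ) :=
  continuous_pi fun i ↦ by
    simp only [Fintype.balance_apply, Fintype.expect_eq_sum_div_card]
    fun_prop

theorem affinelyEquivalent_iff_exists_balance_eq_smul {w w' : ι → ℂ} :
    AffinelyEquivalent w w' ↔ ∃ b : ℂ, b ≠ 0 ∧ Fintype.balance w' = b • Fintype.balance w := by
  refine ⟨fun ⟨a, b, hb, h⟩ ↦ ⟨b, hb, ?_⟩, fun ⟨b, hb, h⟩ ↦ ?_⟩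
  · rw [← balance_smul]
    ext i
    have : Nonempty ι := ⟨i⟩
    simp only [Fintype.balance_apply, h, Pi.smul_apply, smul_eq_mul, Finset.expect_add_distrib,
      Fintype.expect_const, add_sub_add_right_eq_sub]
  · refine ⟨(𝔼 i, w' i) - b * 𝔼 i, w i, b, hb, fun i ↦ ?_⟩
    have := congrFun h i
    simp only [Fintype.balance_apply, Pi.smul_apply, smul_eq_mul] at this
    linear_combination this

theorem affinelyEquivalent_balance (w : ι → ℂ) : AffinelyEquivalent w (Fintype.balance w) :=
  affinelyEquivalent_iff_exists_balance_eq_smul.2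
    ⟨1, one_ne_zero, by rw [Fintype.balance_idem, one_smul]⟩

end Balance

section CentralProjection

open scoped Matrix ComplexOrder
open AffineMap (lineMap)

variable {ι κ : Type*} [Fintype ι] [Fintype κ] {v w : ι → ℂ}

/-- The central projection of `w` to the affine hyperplane through `v` orthogonal to `v`. It is
meaningful only if `w` is not orthogonal to `v`. -/
def centralProjection (v w : ι → ℂ) : ι → ℂ := ((v ⬝ᵥ star v) / (w ⬝ᵥ star v)) • w

theorem centralProjection_eq_self (hv : v ≠ 0) (h : w ⬝ᵥ star v = v ⬝ᵥ star v) :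
    centralProjection v w = w := by
  rw [centralProjection, h, div_self (dotProduct_self_star_eq_zero.not.2 hv), one_smul]

theorem centralProjection_dotProduct (h : w ⬝ᵥ star v ≠ 0) :
    centralProjection v w ⬝ᵥ star v = v ⬝ᵥ star v := by
  rw [centralProjection, smul_dotProduct, smul_eq_mul, div_mul_cancel₀ _ h]

theorem centralProjection_smul_right {b : ℂ} (hb : b ≠ 0) (v w : ι → ℂ) :
    centralProjection v (b • w) = centralProjection v w := by
  rw [centralProjection, smul_dotProduct, smul_smul, smul_eq_mul, div_mul_eq_mul_div, mul_comm _ b,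
    mul_div_mul_left _ _ hb]
  rfl

theorem centralProjection_smul_left {b : ℂ} (hb : b ≠ 0) (v w : ι → ℂ) :
    centralProjection (b • v) w = b • centralProjection v w := by
  simp only [centralProjection, star_smul, smul_dotProduct, dotProduct_smul, smul_eq_mul]
  rw [mul_left_comm, mul_div_assoc, mul_div_mul_left _ _ (star_ne_zero.2 hb), mul_smul]

theorem centralProjection_comp_equiv (v w : ι → ℂ) (e : κ ≃ ι) :
    centralProjection (v ∘ e) (w ∘ e) = centralProjection v w ∘ e := by
  have h (x : ι → ℂ) : x ∘ e ⬝ᵥ star (v ∘ e) = x ⬝ᵥ star v :=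
    comp_equiv_dotProduct_comp_equiv x (star v) e
  rw [centralProjection, h, h]
  rfl

/-- The straight path from `v` to the central projection of `w`. -/
def slicePath (v w : ι → ℂ) (t : ℝ) : ι → ℂ := lineMap v (centralProjection v w) t

theorem slicePath_zero (v w : ι → ℂ) : slicePath v w 0 = v := AffineMap.lineMap_apply_zero ..

theorem slicePath_one (v w : ι → ℂ) : slicePath v w 1 = centralProjection v w :=
  AffineMap.lineMap_apply_one ..

theorem slicePath_dotProduct (h : w ⬝ᵥ star v ≠ 0) (t : ℝ) :
    slicePath v w t ⬝ᵥ star v = v ⬝ᵥ star v := by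
  rw [slicePath, AffineMap.lineMap_apply_module, add_dotProduct, smul_dotProduct, smul_dotProduct,
    centralProjection_dotProduct h, ← add_smul, sub_add_cancel, one_smul]

theorem centralProjection_slicePath (hv : v ≠ 0) (h : w ⬝ᵥ star v ≠ 0) (t : ℝ) :
    centralProjection v (slicePath v w t) = slicePath v w t :=
  centralProjection_eq_self hv (slicePath_dotProduct h t)

theorem balance_slicePath (hv : Fintype.balance v = v) (hw : Fintype.balance w = w) (t : ℝ) :
    Fintype.balance (slicePath v w t) = slicePath v w t := by
  rw [slicePath, AffineMap.lineMap_apply_module, Fintype.balance_add, balance_smul, balance_smul,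
    centralProjection, balance_smul, hv, hw]

theorem dist_slicePath_le (v w : ι → ℂ) {t : ℝ} (ht : t ∈ unitInterval) :
    dist (slicePath v w t) v ≤ dist (centralProjection v w) v := by
  rw [slicePath, dist_lineMap_left, dist_comm v, Real.norm_of_nonneg ht.1]
  exact mul_le_of_le_one_left dist_nonneg ht.2

theorem slicePath_smul_smul {b b' : ℂ} (hb : b ≠ 0) (hb' : b' ≠ 0) (v w : ι → ℂ) (t : ℝ) :
    slicePath (b • v) (b' • w) t = b • slicePath v w t := by
  simp only [slicePath, centralProjection_smul_left hb, centralProjection_smul_right hb',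
    AffineMap.lineMap_apply_module, smul_add, smul_comm b]

theorem slicePath_comp_equiv (v w : ι → ℂ) (e : κ ≃ ι) (t : ℝ) :
    slicePath (v ∘ e) (w ∘ e) t = slicePath v w t ∘ e := by
  simp only [slicePath, centralProjection_comp_equiv, AffineMap.lineMap_apply_module]
  rfl

theorem continuousOn_centralProjection (v : ι → ℂ) :
    ContinuousOn (centralProjection v) {w | w ⬝ᵥ star v ≠ 0} := by
  have h : Continuous fun w ↦ w ⬝ᵥ star v := Continuous.dotProduct continuous_id continuous_const
  exact (continuousOn_const.div h.continuousOn fun w hw ↦ hw).smul continuousOn_id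

end CentralProjection

theorem isOpen_setOf_injective (ι : Type*) [Finite ι] :
    IsOpen {w : ι → ℂ | Function.Injective w} := by
  have h : {w : ι → ℂ | Function.Injective w} = ⋂ (i) (j) (_ : i ≠ j), {w | w i ≠ w j} := by
    ext w
    simp only [Set.mem_iInter, Set.mem_ofPred_eq, Function.Injective, not_imp_not, ne_eq]
  rw [h]
  exact isOpen_iInter_of_finite fun i ↦ isOpen_iInter_of_finite fun j ↦
    isOpen_iInter_of_finite fun _ ↦ isOpen_ne_fun (continuous_apply i) (continuous_apply j)

namespace NormalizedConfig

open scoped Matrix ComplexOrder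

variable {m : ℕ} {q z : NormalizedConfig m} {r : ℝ}

/-- The translate of a configuration with barycentre `0`. -/
abbrev centered (z : NormalizedConfig m) : Fin (m + 2) → ℂ := Fintype.balance z.1

theorem injective_centered (z : NormalizedConfig m) : Function.Injective z.centered :=
  (affinelyEquivalent_balance z.1).injective z.2.1

theorem centered_ne_zero (z : NormalizedConfig m) : z.centered ≠ 0 := fun h ↦
  z.injective_centered.ne zero_ne_one ((congrFun h 0).trans (congrFun h 1).symm)

theorem centered_dotProduct_star_ne_zero (z : NormalizedConfig m) :
    z.centered ⬝ᵥ star z.centered ≠ 0 :=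
  dotProduct_self_star_eq_zero.not.2 z.centered_ne_zero

theorem exists_centered_smul_eq (σ : Equiv.Perm (Fin (m + 2))) (z : NormalizedConfig m) :
    ∃ b : ℂ, b ≠ 0 ∧ (σ • z).centered = b • (z.centered ∘ ⇑σ⁻¹) := by
  rw [centered, ← balance_comp_equiv]
  exact affinelyEquivalent_iff_exists_balance_eq_smul.1 (affinelyEquivalent_smul σ z)

theorem slicePath_centered_smul {σ : Equiv.Perm (Fin (m + 2))} (hσ : σ • q = q)
    (z : NormalizedConfig m) (t : ℝ) :
    AffinelyEquivalent (slicePath q.centered z.centered t ∘ ⇑σ⁻¹)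
      (slicePath q.centered (σ • z).centered t) := by
  obtain ⟨b, hb, hq⟩ := exists_centered_smul_eq σ q
  obtain ⟨b', hb', hz⟩ := exists_centered_smul_eq σ z
  have h : slicePath q.centered (σ • z).centered t =
      b • (slicePath q.centered z.centered t ∘ ⇑σ⁻¹) := by
    rw [← slicePath_comp_equiv, ← slicePath_smul_smul hb hb', ← hq, ← hz, hσ]
  exact h ▸ .const_smul_right hb _

/-- The configurations `z` for which some tuple affinely equivalent to `z` lies on the hyperplane
through `q.centered` orthogonal to `q.centered` and at distance less than `r` from it. -/
def sliceNeighborhood (q : NormalizedConfig m) (r : ℝ) : Set (NormalizedConfig m) :=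
  {z | z.centered ⬝ᵥ star q.centered ≠ 0 ∧
    dist (centralProjection q.centered z.centered) q.centered < r}

theorem continuous_centered : Continuous (centered : NormalizedConfig m → Fin (m + 2) → ℂ) :=
  continuous_balance.comp continuous_subtype_val

theorem isOpen_sliceNeighborhood (q : NormalizedConfig m) (r : ℝ) :
    IsOpen (sliceNeighborhood q r) := by
  have h : IsOpen {w : Fin (m + 2) → ℂ | w ⬝ᵥ star q.centered ≠ 0} :=
    isOpen_ne_fun (continuous_id.dotProduct continuous_const) continuous_const
  exact ((continuousOn_centralProjection q.centered).isOpen_inter_preimage h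
    Metric.isOpen_ball).preimage continuous_centered

theorem mem_sliceNeighborhood_self (hr : 0 < r) : q ∈ sliceNeighborhood q r := by
  refine ⟨q.centered_dotProduct_star_ne_zero, ?_⟩
  rwa [centralProjection_eq_self q.centered_ne_zero rfl, dist_self]

theorem affinelyEquivalent_centralProjection
    (hz : z ∈ sliceNeighborhood q r) :
    AffinelyEquivalent z.1 (centralProjection q.centered z.centered) :=
  (affinelyEquivalent_balance z.1).trans <| .const_smul_right
    (div_ne_zero q.centered_dotProduct_star_ne_zero hz.1) _

theorem slicePath_mem_ball (hz : z ∈ sliceNeighborhood q r) (t : unitInterval) :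
    slicePath q.centered z.centered t ∈ Metric.ball q.centered r :=
  (dist_slicePath_le _ _ t.2).trans_lt hz.2

theorem mem_sliceNeighborhood_of_affinelyEquivalent_slicePath {z' : NormalizedConfig m}
    (hz : z ∈ sliceNeighborhood q r) {t : unitInterval}
    (h : AffinelyEquivalent (slicePath q.centered z.centered t) z'.1) :
    z' ∈ sliceNeighborhood q r := by
  obtain ⟨b, hb, hz'⟩ := affinelyEquivalent_iff_exists_balance_eq_smul.1 h
  rw [balance_slicePath (Fintype.balance_idem _) (Fintype.balance_idem _)] at hz'
  change z'.centered = _ at hz'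
  refine ⟨?_, ?_⟩
  · rw [hz', smul_dotProduct, slicePath_dotProduct hz.1]
    exact mul_ne_zero hb q.centered_dotProduct_star_ne_zero
  · rw [hz', centralProjection_smul_right hb,
      centralProjection_slicePath q.centered_ne_zero hz.1]
    exact slicePath_mem_ball hz t

theorem exists_sliceNeighborhood_subset {U : Set (NormalizedConfig m)} (hU : U ∈ 𝓝 q) :
    ∃ r > 0, (∀ w ∈ Metric.ball q.centered r, Function.Injective w) ∧
      sliceNeighborhood q r ⊆ U := by
  let p : OrdConfig (m + 2) Set.univ := ⟨q.centered, q.injective_centered, fun _ ↦ trivial⟩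
  have hp : normalize p = q := normalize_eq_iff.2 (affinelyEquivalent_balance q.1).symm
  have h_open : IsOpen {w : Fin (m + 2) → ℂ | Function.Injective w ∧ ∀ i, w i ∈ Set.univ} := by
    simpa only [Set.mem_univ, implies_true, and_true] using isOpen_setOf_injective (Fin (m + 2))
  have h_nhds := h_open.isOpenEmbedding_subtypeVal.image_mem_nhds.2
    (normalize.continuous.continuousAt.preimage_mem_nhds (hp.symm ▸ hU : U ∈ 𝓝 (normalize p)))
  obtain ⟨r, hr, hrU⟩ := Metric.mem_nhds_iff.1 h_nhds
  refine ⟨r, hr, fun w hw ↦ ?_, fun z hz ↦ ?_⟩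
  · obtain ⟨w, -, rfl⟩ := hrU hw
    exact w.2.1
  · obtain ⟨w, hwU, hw⟩ := hrU hz.2
    have : normalize w = z :=
      normalize_eq_iff.2 (hw ▸ (affinelyEquivalent_centralProjection hz).symm)
    rwa [← this]

/-- The contraction of a slice neighbourhood along the straight paths of the slice. -/
def sliceContraction (hr : ∀ w ∈ Metric.ball q.centered r, Function.Injective w) :
    C(sliceNeighborhood q r × unitInterval, sliceNeighborhood q r) where
  toFun p := ⟨normalize ⟨slicePath q.centered p.1.1.centered p.2,
    hr _ (slicePath_mem_ball p.1.2 p.2), fun _ ↦ trivial⟩,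
    mem_sliceNeighborhood_of_affinelyEquivalent_slicePath p.1.2 (affinelyEquivalent_normalize _)⟩
  continuous_toFun := by
    have h_center : Continuous fun p : sliceNeighborhood q r × unitInterval ↦ p.1.1.centered :=
      continuous_centered.comp (by fun_prop)
    have h_proj : Continuous fun p : sliceNeighborhood q r × unitInterval ↦
        centralProjection q.centered p.1.1.centered :=
      (continuousOn_centralProjection q.centered).comp_continuous h_center fun p ↦ p.1.2.1
    refine (normalize.continuous.comp (.subtype_mk ?_ _)).subtype_mk _
    exact continuous_const.lineMap h_proj (continuous_subtype_val.comp continuous_snd)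

theorem affinelyEquivalent_sliceContraction
    (hr : ∀ w ∈ Metric.ball q.centered r, Function.Injective w) (z : sliceNeighborhood q r)
    (t : unitInterval) : AffinelyEquivalent (slicePath q.centered z.1.centered t)
      (sliceContraction hr (z, t)).1.1 := affinelyEquivalent_normalize _

theorem isOrbitContractible_image_sliceNeighborhood (hr_pos : 0 < r)
    (hr : ∀ w ∈ Metric.ball q.centered r, Function.Injective w)
    (h_stab : ∀ σ : Equiv.Perm (Fin (m + 2)), ∀ z ∈ sliceNeighborhood q r,
      σ • z ∈ sliceNeighborhood q r → σ • q = q) :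
    IsOrbitContractible (orbitMap (Equiv.Perm (Fin (m + 2))) _ '' sliceNeighborhood q r) := by
  refine isOrbitContractible_image (isOpen_sliceNeighborhood q r)
    (q := ⟨q, mem_sliceNeighborhood_self hr_pos⟩) (h := sliceContraction hr)
    (fun z ↦ Subtype.ext (eq_of_affinelyEquivalent ?_))
    (fun z ↦ Subtype.ext (eq_of_affinelyEquivalent ?_)) fun σ z z' t h ↦ ?_
  · refine (affinelyEquivalent_sliceContraction hr z 0).symm.trans ?_
    rw [Set.Icc.coe_zero, slicePath_zero]
    exact (affinelyEquivalent_balance q.1).symm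
  · refine (affinelyEquivalent_sliceContraction hr z 1).symm.trans ?_
    rw [Set.Icc.coe_one, slicePath_one]
    exact (affinelyEquivalent_centralProjection z.2).symm
  · have hσ : σ • q = q := h_stab σ z z.2 (h ▸ z'.2)
    refine (smul_eq_iff.2 ?_).symm
    have h_path := slicePath_centered_smul hσ z.1 t
    rw [← h] at h_path
    exact ((affinelyEquivalent_sliceContraction hr z t).symm.comp _).trans <|
      h_path.trans (affinelyEquivalent_sliceContraction hr z' t)

theorem locallyOrbitContractible (m : ℕ) :
    LocallyOrbitContractible (Equiv.Perm (Fin (m + 2))) (NormalizedConfig m) := by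
  intro y U hU
  obtain ⟨q, rfl⟩ := isOpenQuotientMap_orbitMap.surjective y
  obtain ⟨W, hW, h_stab⟩ := exists_mem_nhds_forall_smul_eq_self (G := Equiv.Perm (Fin (m + 2))) q
  obtain ⟨r, hr_pos, hr, h_sub⟩ := exists_sliceNeighborhood_subset <|
    Filter.inter_mem hW ((orbitMap _ _).continuous.continuousAt hU)
  refine ⟨_, isOpenQuotientMap_orbitMap.isOpenMap.image_mem_nhds <|
    (isOpen_sliceNeighborhood q r).mem_nhds (mem_sliceNeighborhood_self hr_pos),
    Set.image_subset_iff.2 fun z hz ↦ (h_sub hz).2,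
    isOrbitContractible_image_sliceNeighborhood hr_pos hr fun σ z hz hσz ↦
      h_stab σ z (h_sub hz).1 (h_sub hσz).1⟩

end NormalizedConfig

/-! ### Unordered configurations modulo affine transformations -/

section OrbitSpace

variable {G X : Type*} [Group G] [Finite G] [TopologicalSpace X] [MulAction G X]
  [ContinuousConstSMul G X]

theorem pseudoMetrizableSpace_orbitSpace [LocallyCompactSpace X] [T2Space X]
    [SecondCountableTopology X] : TopologicalSpace.PseudoMetrizableSpace (OrbitSpace G X) :=
  have : LocallyCompactSpace (OrbitSpace G X) := isOpenQuotientMap_orbitMap.locallyCompactSpace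
  have : SecondCountableTopology (OrbitSpace G X) :=
    ContinuousConstSMul.secondCountableTopology (Γ := G) (T := X)
  inferInstance

end OrbitSpace

section ConfigModAff

variable {m k : ℕ}

/-- The class of an ordered configuration up to relabelling and affine transformations. -/
def configClass {n : ℕ} : C(OrdConfig n Set.univ, ConfigModAff n) where
  toFun w := Quot.mk _ (Quot.mk _ w)

theorem configClass_eq_of_affinelyEquivalent_comp {n : ℕ} {w w' : OrdConfig n Set.univ}
    (σ : Equiv.Perm (Fin n)) (h : AffinelyEquivalent (w.1 ∘ σ) w'.1) :
    configClass w = configClass w' := by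
  obtain ⟨a, b, hb, h⟩ := h
  let w_perm : OrdConfig n Set.univ := ⟨w.1 ∘ σ, w.2.1.comp σ.injective, fun _ ↦ trivial⟩
  have h_perm : (Quot.mk _ w : UConfig n Set.univ) = Quot.mk _ w_perm := Quot.sound ⟨σ, rfl⟩
  exact (congrArg (Quot.mk _) h_perm).trans (Quot.sound ⟨a, b, hb, w_perm, w', rfl, rfl, h⟩)

namespace NormalizedConfig

instance : LocallyCompactSpace (NormalizedConfig m) := by
  have h_closed : IsClosed {w : Fin (m + 2) → ℂ | w 0 = 0 ∧ w 1 = 1} :=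
    (isClosed_eq (continuous_apply 0) continuous_const).inter
      (isClosed_eq (continuous_apply 1) continuous_const)
  exact ((isOpen_setOf_injective _).isLocallyClosed.inter
    h_closed.isLocallyClosed).locallyCompactSpace

/-- A normalized configuration as an element of the full configuration space. -/
def toOrdConfig : C(NormalizedConfig m, OrdConfig (m + 2) Set.univ) where
  toFun z := ⟨z.1, z.2.1, fun _ ↦ trivial⟩

theorem orbitMap_normalize_comp (σ : Equiv.Perm (Fin (m + 2))) (w w' : OrdConfig (m + 2) Set.univ)
    (h : AffinelyEquivalent (w.1 ∘ σ) w'.1) :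
    orbitMap (Equiv.Perm (Fin (m + 2))) _ (normalize w) = orbitMap _ _ (normalize w') := by
  have h_smul : σ⁻¹ • normalize w = normalize w' := smul_eq_iff.2 <| by
    rw [inv_inv]
    exact ((affinelyEquivalent_normalize w).symm.comp σ).trans
      (h.trans (affinelyEquivalent_normalize w'))
  rw [← h_smul, orbitMap_smul]

/-- The orbit space of normalized configurations is the space of unordered configurations modulo
affine transformations. -/
def orbitSpaceHomeomorph :
    OrbitSpace (Equiv.Perm (Fin (m + 2))) (NormalizedConfig m) ≃ₜ ConfigModAff (m + 2) where
  toFun := Quotient.lift (configClass ∘ toOrdConfig) fun z z' h ↦ by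
    obtain ⟨σ, rfl⟩ := h
    exact (configClass_eq_of_affinelyEquivalent_comp σ⁻¹ (affinelyEquivalent_smul σ z')).symm
  invFun := Quot.lift
    (Quot.lift (orbitMap (Equiv.Perm (Fin (m + 2))) _ ∘ normalize) fun w w' ⟨σ, h⟩ ↦
      orbitMap_normalize_comp σ w w' (h ▸ .refl _))
    (by
      rintro _ _ ⟨a, b, hb, w, w', rfl, rfl, h⟩
      exact orbitMap_normalize_comp 1 w w' ⟨a, b, hb, h⟩)
  left_inv := by
    rintro ⟨z⟩
    exact congrArg (orbitMap _ _) (normalize_eq_iff.2 (.refl _))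
  right_inv := by
    rintro ⟨⟨w⟩⟩
    exact (configClass_eq_of_affinelyEquivalent_comp (w' := toOrdConfig (normalize w)) 1
      (affinelyEquivalent_normalize w)).symm
  continuous_toFun := (configClass.comp toOrdConfig).continuous.quotient_lift _
  continuous_invFun := continuous_quot_lift _ <| continuous_quot_lift _ <|
    (orbitMap _ _).continuous.comp normalize.continuous

end NormalizedConfig

theorem exists_boundary_eq_factorial_smul {z : Chain (k + 2) (ConfigModAff (m + 2))}
    (hz : boundary z = 0) : ∃ b, boundary b = ((m + 2).factorial : ℤ) • z := by
  have := pseudoMetrizableSpace_orbitSpace (G := Equiv.Perm (Fin (m + 2)))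
    (X := NormalizedConfig m)
  refine exists_boundary_eq_of_homeomorph NormalizedConfig.orbitSpaceHomeomorph.symm ?_
  have h_card : Fintype.card (Equiv.Perm (Fin (m + 2))) = (m + 2).factorial := by
    rw [Fintype.card_perm, Fintype.card_fin]
  rw [map_smul, ← h_card]
  refine exists_boundary_eq_card_smul (NormalizedConfig.locallyOrbitContractible m)
    NormalizedConfig.exists_boundary_eq_of_forall_pushforward_translate_eq ?_
  rw [← pushforward_boundary, hz, map_zero]

end ConfigModAff

/-! ### Comparison with singular homology -/

theorem zsmul_homology_eq_zero {R : Type*} [Ring R] {ι : Type*} {c : ComplexShape ι}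
    (K : HomologicalComplex (ModuleCat R) c) {i j k : ι} {n : ℤ}
    (h : ∀ z : K.X j, K.d j k z = 0 → ∃ b : K.X i, K.d i j b = n • z)
    (x : K.homology j) : n • x = 0 := by
  obtain ⟨z, rfl⟩ := (ModuleCat.epi_iff_surjective (K.homologyπ j)).1 inferInstance x
  obtain ⟨b, hb⟩ := h (K.iCycles j z) <| by
    rw [← ConcreteCategory.comp_apply, K.iCycles_d]
    rfl
  have hz : K.toCycles i j b = n • z := by
    refine (ModuleCat.mono_iff_injective (K.iCycles j)).1 inferInstance ?_
    rw [← ConcreteCategory.comp_apply, K.toCycles_i, hb, map_zsmul]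
  rw [← map_zsmul, ← hz, ← ConcreteCategory.comp_apply, K.toCycles_comp_homologyπ]
  rfl

section SingularHomology

variable (Y : Type) [TopologicalSpace Y] {k : ℕ}

/-- The complex whose homology is `SingularHomology ℤ`. -/
abbrev singularComplex : ChainComplex (ModuleCat ℤ) ℕ :=
  (AlgebraicTopology.alternatingFaceMapComplex (ModuleCat ℤ)).obj
    (((SimplicialObject.whiskering _ _).obj (ModuleCat.free ℤ)).obj
      (TopCat.toSSet.obj (TopCat.of Y)))

variable (k) in
/-- The shift by one between the simplices of Mathlib and `SingularSimplex`, which is indexed by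
the number of vertices. -/
def singularSimplexEquiv :
    (TopCat.toSSet.obj (TopCat.of Y)).obj (.op (.mk k)) ≃ SingularSimplex (k + 1) Y :=
  TopCat.toSSetObjEquiv (TopCat.of Y) (.op (.mk k))

variable (k) in
/-- The chains of `singularComplex` as formal combinations of `SingularSimplex`es. -/
def singularChainEquiv : (singularComplex Y).X k ≃ₗ[ℤ] Chain (k + 1) Y :=
  Finsupp.domLCongr (singularSimplexEquiv Y k)

variable {Y}

/-- The generator of `singularComplex` attached to a singular simplex. -/
def singularGenerator (s : (TopCat.toSSet.obj (TopCat.of Y)).obj (.op (.mk k))) :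
    (singularComplex Y).X k :=
  ModuleCat.freeMk s

theorem singularChainEquiv_singularGenerator
    (s : (TopCat.toSSet.obj (TopCat.of Y)).obj (.op (.mk k))) :
    singularChainEquiv Y k (singularGenerator s) =
      Finsupp.single (singularSimplexEquiv Y k s) 1 :=
  Finsupp.domLCongr_single (R := ℤ) (singularSimplexEquiv Y k) s (1 : ℤ)

theorem singularComplex_d_singularGenerator
    (s : (TopCat.toSSet.obj (TopCat.of Y)).obj (.op (.mk (k + 1)))) :
    (singularComplex Y).d (k + 1) k (singularGenerator s) =
      ∑ i : Fin (k + 2),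
        (-1 : ℤ) ^ (i : ℕ) • singularGenerator ((TopCat.toSSet.obj (TopCat.of Y)).δ i s) := by
  rw [AlgebraicTopology.alternatingFaceMapComplex_obj_d]
  refine .trans (congrFun (congrArg DFunLike.coe (ModuleCat.hom_sum _ _)) _) ?_
  rw [LinearMap.sum_apply]
  exact Finset.sum_congr rfl fun i _ ↦ congrArg ((-1 : ℤ) ^ (i : ℕ) • ·)
    (ModuleCat.free_map_apply ((TopCat.toSSet.obj (TopCat.of Y)).δ i) s)

theorem singularChainEquiv_d (x : (singularComplex Y).X (k + 1)) :
    singularChainEquiv Y k ((singularComplex Y).d (k + 1) k x) =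
      boundary (singularChainEquiv Y (k + 1) x) := by
  have h : (singularComplex Y).d (k + 1) k ≫ ModuleCat.ofHom (singularChainEquiv Y k).toLinearMap =
      ModuleCat.ofHom (boundary ∘ₗ (singularChainEquiv Y (k + 1)).toLinearMap) := by
    refine ModuleCat.free_hom_ext fun s ↦ ?_
    change singularChainEquiv Y k ((singularComplex Y).d (k + 1) k (singularGenerator s)) =
      boundary (singularChainEquiv Y (k + 1) (singularGenerator s))
    rw [singularComplex_d_singularGenerator, map_sum, singularChainEquiv_singularGenerator,
      boundary_single]
    refine Finset.sum_congr rfl fun i _ ↦ ?_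
    rw [map_zsmul, singularChainEquiv_singularGenerator]
    rfl
  exact ConcreteCategory.congr_hom h x

theorem zsmul_singularHomology_eq_zero {n : ℤ}
    (h : ∀ z : Chain (k + 2) Y, boundary z = 0 → ∃ b, boundary b = n • z)
    (x : SingularHomology ℤ (k + 1) Y) : n • x = 0 := by
  refine zsmul_homology_eq_zero (singularComplex Y) (i := k + 2) (k := k) (fun z hz ↦ ?_) x
  obtain ⟨b, hb⟩ := h (singularChainEquiv Y (k + 1) z) <| by
    rw [← singularChainEquiv_d, hz, map_zero]
  refine ⟨(singularChainEquiv Y (k + 2)).symm b, (singularChainEquiv Y (k + 1)).injective ?_⟩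
  rw [singularChainEquiv_d, LinearEquiv.apply_symm_apply, hb, map_zsmul]

end SingularHomology

end

end ConfigurationHomology

/-- For `n ≥ 2` and `k ≥ 1`, every class in `H_k(C_n(ℂ)/(ℂ⋊ℂ*); ℤ) = H_k(M_{0,n+1}/Σ_n; ℤ)`
is killed by `n!`. -/
theorem configModAff_homology_torsion (n k : ℕ) (hn : 2 ≤ n) (hk : 1 ≤ k)
    (x : SingularHomology ℤ k (ConfigModAff n)) :
    (n.factorial : ℤ) • x = 0 := by
  obtain ⟨m, rfl⟩ := Nat.exists_eq_add_of_le' hn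
  obtain ⟨k, rfl⟩ := Nat.exists_eq_add_of_le' hk
  exact ConfigurationHomology.zsmul_singularHomology_eq_zero
    (fun _ ↦ ConfigurationHomology.exists_boundary_eq_factorial_smul) x
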